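/- arXiv:2010.00277 — 10 statements merged into one kernel-verified Lean document; each statement's English description precedes it below -/
import Mathlib

section
/- Let n ≥ 1, let L be a regular linear subspace of Sⁿ, and let U ∈ L be invertible. Then the following are equivalent: (a) the reciprocal variety L⁻¹ is a linear subspace of Sⁿ; (b) L is closed under the Jordan product •_U (i.e., X •_U Y ∈ L for all X, Y ∈ L); (c) L⁻¹ = U⁻¹ L U⁻¹ := {U⁻¹ A U⁻¹ : A ∈ L}. -/
open Matrix

noncomputable section

abbrev Mat (n : ℕ) := Matrix (Fin n) (Fin n) ℂ

/-- The Jordan product on symmetric matrices with unit `U`. -/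
def jmul {n : ℕ} (U X Y : Mat n) : Mat n :=
  (1 / 2 : ℂ) • (X * U⁻¹ * Y + Y * U⁻¹ * X)

/-- The reciprocal variety of a linear subspace `L` of matrices: the closure of the
set of inverses of invertible elements of `L`. -/
def recipVar {n : ℕ} (L : Submodule ℂ (Mat n)) : Set (Mat n) :=
  closure {Y : Mat n | ∃ X ∈ L, IsUnit (Matrix.det X) ∧ Y = X⁻¹}

open Filter Topology in
lemma aux_inv_cont {n : ℕ} (A : Mat n) (h : IsUnit A.det) :
    ContinuousAt (Inv.inv : Mat n → Mat n) A := by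
  apply continuousAt_matrix_inv
  have : (Ring.inverse : ℂ → ℂ) = Inv.inv := by
    funext x; simp
  rw [this]
  exact continuousAt_inv₀ h.ne_zero

open Filter Topology in
lemma aux_unit_ev {n : ℕ} (A : Mat n) (h : IsUnit A.det) :
    ∀ᶠ B in 𝓝 A, IsUnit B.det := by
  have hc : ContinuousAt (fun B : Mat n => B.det) A :=
    (Continuous.matrix_det continuous_id).continuousAt
  filter_upwards [hc.eventually_ne h.ne_zero] with B hB
  exact isUnit_iff_ne_zero.mpr hB

open Filter Topology in
lemma aux_deriv {n : ℕ} (L M : Submodule ℂ (Mat n))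
    (hLM : ∀ X ∈ L, IsUnit X.det → X⁻¹ ∈ M)
    (U : Mat n) (hUL : U ∈ L) (hU : IsUnit U.det) (X : Mat n) (hX : X ∈ L) :
    U⁻¹ * X * U⁻¹ ∈ M ∧ U⁻¹ * X * U⁻¹ * X * U⁻¹ ∈ M := by
  have hMc : IsClosed (M : Set (Mat n)) := M.closed_of_finiteDimensional
  have hlin : Tendsto (fun t : ℂ => U - t • X) (𝓝 0) (𝓝 U) := by
    have : Continuous (fun t : ℂ => U - t • X) := by fun_prop
    simpa using this.tendsto 0
  have hev : ∀ᶠ t : ℂ in 𝓝[≠] 0, IsUnit (U - t • X).det ∧ t ≠ 0 :=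
    ((hlin.eventually (aux_unit_ev U hU)).filter_mono nhdsWithin_le_nhds).and
      self_mem_nhdsWithin
  have hinv : Tendsto (fun t : ℂ => (U - t • X)⁻¹) (𝓝[≠] 0) (𝓝 U⁻¹) :=
    (((aux_inv_cont U hU).tendsto).comp hlin).mono_left nhdsWithin_le_nhds
  have key : ∀ t : ℂ, IsUnit (U - t • X).det →
      t • ((U - t • X)⁻¹ * X * U⁻¹) = (U - t • X)⁻¹ - U⁻¹ := by
    intro t ht
    have h1 : (U - t • X)⁻¹ * (U - (U - t • X)) * U⁻¹ = (U - t • X)⁻¹ - U⁻¹ := by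
      rw [Matrix.mul_sub, Matrix.sub_mul, Matrix.nonsing_inv_mul _ ht, Matrix.mul_assoc,
        Matrix.mul_nonsing_inv _ hU, Matrix.mul_one, Matrix.one_mul]
    rw [← h1, sub_sub_cancel]
    simp
  have m1 : ∀ t : ℂ, IsUnit (U - t • X).det ∧ t ≠ 0 → (U - t • X)⁻¹ * X * U⁻¹ ∈ M := by
    rintro t ⟨ht, h0⟩
    rw [← M.smul_mem_iff h0, key t ht]
    exact M.sub_mem (hLM _ (L.sub_mem hUL (L.smul_mem _ hX)) ht) (hLM _ hUL hU)
  have c1 : U⁻¹ * X * U⁻¹ ∈ M := by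
    refine hMc.mem_of_tendsto ((hinv.mul_const X).mul_const U⁻¹) (hev.mono m1)
  refine ⟨c1, ?_⟩
  refine hMc.mem_of_tendsto (((hinv.mul_const X).mul_const U⁻¹).mul_const X |>.mul_const U⁻¹)
    (hev.mono ?_)
  rintro t ⟨ht, h0⟩
  have h2 : t • ((U - t • X)⁻¹ * X * U⁻¹ * X * U⁻¹) =
      (U - t • X)⁻¹ * X * U⁻¹ - U⁻¹ * X * U⁻¹ := by
    have := congrArg (fun Z => Z * X * U⁻¹) (key t ht)
    simpa [Matrix.sub_mul] using this
  change _ ∈ M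
  rw [← M.smul_mem_iff h0, h2]
  exact M.sub_mem (m1 t ⟨ht, h0⟩) c1

lemma aux_jinv {n : ℕ} (L : Submodule ℂ (Mat n)) (U : Mat n) (hUL : U ∈ L)
    (hU : IsUnit U.det) (hJ : ∀ X ∈ L, ∀ Y ∈ L, jmul U X Y ∈ L)
    (X : Mat n) (hX : X ∈ L) (hXu : IsUnit X.det) : U * X⁻¹ * U ∈ L := by
  let K : Submodule ℂ (Mat n) :=
    L ⊓ LinearMap.ker (LinearMap.mulRight ℂ (U⁻¹ * X) - LinearMap.mulLeft ℂ (X * U⁻¹))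
  have hK : ∀ Y, Y ∈ K ↔ Y ∈ L ∧ Y * (U⁻¹ * X) = X * U⁻¹ * Y := by
    intro Y
    simp [K, sub_eq_zero, Matrix.mul_assoc]
  have hmap : ∀ Y ∈ K, LinearMap.mulLeft ℂ (X * U⁻¹) Y ∈ K := by
    intro Y hY
    obtain ⟨h1, h2⟩ := (hK Y).1 hY
    rw [LinearMap.mulLeft_apply, hK]
    constructor
    · have h3 := hJ X hX Y h1
      have : jmul U X Y = X * U⁻¹ * Y := by
        unfold jmul
        rw [Matrix.mul_assoc Y, h2, ← two_smul ℂ, smul_smul]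
        norm_num
      rwa [this] at h3
    · rw [Matrix.mul_assoc (X * U⁻¹) Y, h2]
  let f := (LinearMap.mulLeft ℂ (X * U⁻¹)).restrict hmap
  have hinj : Function.Injective f := by
    intro a b hab
    have h1 : X * U⁻¹ * (a : Mat n) = X * U⁻¹ * (b : Mat n) := congrArg Subtype.val hab
    have h2 := congrArg (fun Z => U * (X⁻¹ * Z)) h1
    simp only [Matrix.mul_assoc] at h2
    rw [Matrix.nonsing_inv_mul_cancel_left _ _ hXu, Matrix.nonsing_inv_mul_cancel_left _ _ hXu,
      Matrix.mul_nonsing_inv_cancel_left _ _ hU, Matrix.mul_nonsing_inv_cancel_left _ _ hU] at h2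
    exact Subtype.ext h2
  have hUK : U ∈ K := by
    rw [hK]
    refine ⟨hUL, ?_⟩
    rw [Matrix.mul_nonsing_inv_cancel_left _ _ hU, Matrix.nonsing_inv_mul_cancel_right _ _ hU]
  obtain ⟨S, hS⟩ := LinearMap.injective_iff_surjective.1 hinj ⟨U, hUK⟩
  have hS' : X * U⁻¹ * (S : Mat n) = U := congrArg Subtype.val hS
  have : U * X⁻¹ * U = (S : Mat n) := by
    have e : U * X⁻¹ * (X * U⁻¹ * (S : Mat n)) = (S : Mat n) := by
      simp only [Matrix.mul_assoc]
      rw [Matrix.nonsing_inv_mul_cancel_left _ _ hXu,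
        Matrix.mul_nonsing_inv_cancel_left _ _ hU]
    rwa [hS'] at e
  rw [this]
  exact ((hK S).1 S.2).1

open Filter Topology in
lemma aux_dense {n : ℕ} (A U : Mat n) (hU : IsUnit U.det) :
    ∀ᶠ t : ℂ in 𝓝[≠] 0, IsUnit (A + t • U).det := by
  have hp : (-(U⁻¹ * A)).charpoly ≠ 0 := (Matrix.charpoly_monic _).ne_zero
  have hfin : {t : ℂ | (-(U⁻¹ * A)).charpoly.IsRoot t}.Finite :=
    Polynomial.finite_setOfPred_isRoot hp
  have hev := nhdsNE_le_cofinite (0 : ℂ) hfin.compl_mem_cofinite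
  filter_upwards [hev] with t ht
  have e : A + t • U = U * (Matrix.scalar (Fin n) t - -(U⁻¹ * A)) := by
    rw [sub_neg_eq_add, Matrix.mul_add, Matrix.mul_nonsing_inv_cancel_left _ _ hU, add_comm]
    congr 1
    ext i j
    simp [mul_comm]
  rw [e, Matrix.det_mul]
  refine hU.mul (isUnit_iff_ne_zero.mpr ?_)
  rw [← Matrix.eval_charpoly]
  exact ht

/-- Theorem 1: for a regular subspace `L` of symmetric matrices and an invertible `U ∈ L`,
(a) the reciprocal variety is a linear space iff (b) `L` is closed under the Jordan
product `•_U`, iff (c) `L⁻¹ = U⁻¹ L U⁻¹`. -/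
theorem stmt0 {n : ℕ} (hn : 1 ≤ n) (L : Submodule ℂ (Mat n))
    (hsym : ∀ X ∈ L, Matrix.IsSymm X)
    (U : Mat n) (hUL : U ∈ L) (hU : IsUnit U.det) :
    ((∃ M : Submodule ℂ (Mat n), recipVar L = (M : Set (Mat n))) ↔
      (∀ X ∈ L, ∀ Y ∈ L, jmul U X Y ∈ L)) ∧
    ((∀ X ∈ L, ∀ Y ∈ L, jmul U X Y ∈ L) ↔
      recipVar L = {Z : Mat n | ∃ A ∈ L, Z = U⁻¹ * A * U⁻¹}) := by
  have hca : recipVar L = {Z : Mat n | ∃ A ∈ L, Z = U⁻¹ * A * U⁻¹} →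
      ∃ M : Submodule ℂ (Mat n), recipVar L = (M : Set (Mat n)) := by
    intro h
    refine ⟨L.map (LinearMap.mulRight ℂ U⁻¹ ∘ₗ LinearMap.mulLeft ℂ U⁻¹), ?_⟩
    rw [h]
    ext Z
    simp [eq_comm]
  have hab : (∃ M : Submodule ℂ (Mat n), recipVar L = (M : Set (Mat n))) →
      (∀ X ∈ L, ∀ Y ∈ L, jmul U X Y ∈ L) := by
    rintro ⟨M, hM⟩
    have hLM : ∀ X ∈ L, IsUnit X.det → X⁻¹ ∈ M := by
      intro X hX hXu
      rw [← SetLike.mem_coe, ← hM]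
      exact subset_closure ⟨X, hX, hXu, rfl⟩
    have hML : ∀ Y ∈ M, IsUnit Y.det → Y⁻¹ ∈ L := by
      intro Y hY hYu
      rw [← SetLike.mem_coe, ← hM] at hY
      have hLc : IsClosed (L : Set (Mat n)) := L.closed_of_finiteDimensional
      have := mem_closure_image (aux_inv_cont Y hYu) hY
      refine closure_minimal ?_ hLc this
      rintro _ ⟨_, ⟨X, hX, hXu, rfl⟩, rfl⟩
      rw [Matrix.nonsing_inv_nonsing_inv _ hXu]
      exact hX
    have hU' : IsUnit (U⁻¹).det := by
      rw [Matrix.isUnit_nonsing_inv_det_iff]; exact hU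
    have hsq : ∀ X ∈ L, X * U⁻¹ * X ∈ L := by
      intro X hX
      have h1 := (aux_deriv L M hLM U hUL hU X hX).2
      have h2 := (aux_deriv M L hML U⁻¹ (hLM U hUL hU) hU' _ h1).1
      rw [Matrix.nonsing_inv_nonsing_inv _ hU] at h2
      have e : U * (U⁻¹ * X * U⁻¹ * X * U⁻¹) * U = X * U⁻¹ * X := by
        rw [← Matrix.mul_assoc, Matrix.nonsing_inv_mul_cancel_right _ _ hU]
        simp only [Matrix.mul_assoc]
        rw [Matrix.mul_nonsing_inv_cancel_left _ _ hU]
      rwa [e] at h2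
    intro X hX Y hY
    have e : X * U⁻¹ * Y + Y * U⁻¹ * X =
        (X + Y) * U⁻¹ * (X + Y) - X * U⁻¹ * X - Y * U⁻¹ * Y := by
      noncomm_ring
    unfold jmul
    rw [e]
    exact L.smul_mem _ (L.sub_mem (L.sub_mem (hsq _ (L.add_mem hX hY)) (hsq _ hX)) (hsq _ hY))
  have hbc : (∀ X ∈ L, ∀ Y ∈ L, jmul U X Y ∈ L) →
      recipVar L = {Z : Mat n | ∃ A ∈ L, Z = U⁻¹ * A * U⁻¹} := by
    intro hJ
    have hinv := aux_jinv L U hUL hU hJ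
    have hset : {Z : Mat n | ∃ A ∈ L, Z = U⁻¹ * A * U⁻¹} =
        (L.map (LinearMap.mulRight ℂ U⁻¹ ∘ₗ LinearMap.mulLeft ℂ U⁻¹) : Set (Mat n)) := by
      ext Z
      simp [eq_comm]
    apply Set.Subset.antisymm
    · refine closure_minimal ?_ ?_
      · rintro _ ⟨X, hX, hXu, rfl⟩
        refine ⟨_, hinv X hX hXu, ?_⟩
        rw [← Matrix.mul_assoc, Matrix.mul_nonsing_inv_cancel_right _ _ hU,
          Matrix.nonsing_inv_mul_cancel_left _ _ hU]
      · rw [hset]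
        exact Submodule.closed_of_finiteDimensional _
    · rintro _ ⟨A, hA, rfl⟩
      have hlim : Filter.Tendsto (fun t : ℂ => U⁻¹ * (A + t • U) * U⁻¹)
          (nhdsWithin 0 {0}ᶜ) (nhds (U⁻¹ * A * U⁻¹)) := by
        have : Continuous (fun t : ℂ => U⁻¹ * (A + t • U) * U⁻¹) := by fun_prop
        have h := this.tendsto 0
        simp only [zero_smul, add_zero] at h
        exact h.mono_left nhdsWithin_le_nhds
      refine mem_closure_of_tendsto hlim ?_
      filter_upwards [aux_dense A U hU] with t ht
      have hAt : A + t • U ∈ L := L.add_mem hA (L.smul_mem _ hUL)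
      refine ⟨_, hinv _ hAt ht, ?_, ?_⟩
      · rw [Matrix.det_mul, Matrix.det_mul]
        exact (hU.mul ((Matrix.isUnit_nonsing_inv_det_iff).2 ht)).mul hU
      · rw [Matrix.mul_inv_rev, Matrix.mul_inv_rev, Matrix.nonsing_inv_nonsing_inv _ ht,
          Matrix.mul_assoc]
  exact ⟨⟨hab, fun h => hca (hbc h)⟩, ⟨hbc, fun h => hab (hca h)⟩⟩
end
end

section
/- Square roots exist in any complex Jordan subalgebra L ⊆ Sⁿ with unit U: for every invertible matrix X ∈ L there exists Y ∈ L with Y •_U Y = X, i.e., Y U⁻¹ Y = X. -/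
open Matrix

noncomputable section

theorem poly_sqrt (f : Polynomial ℂ) (hf : f ≠ 0) (h0 : f.eval 0 ≠ 0) :
    ∃ p : Polynomial ℂ, f ∣ p ^ 2 - Polynomial.X := by
  classical
  choose s hs using fun x : ℂ => IsAlgClosed.exists_pow_nat_eq x (n := 2) (by norm_num)
  let q : Polynomial ℂ := Lagrange.interpolate f.roots.toFinset id s
  have hq : ∀ a ∈ f.roots, q.eval a = s a := fun a ha =>
    Lagrange.eval_interpolate_at_node (v := id) s (Set.injOn_id _)
      (Multiset.mem_toFinset.2 ha)
  have hdvd : f ∣ (q ^ 2 - Polynomial.X) ^ (Multiset.card f.roots) := by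
    have h1 := (IsAlgClosed.splits f).eq_prod_roots
    have h2 : (f.roots.map fun a => Polynomial.X - Polynomial.C a).prod ∣
        (f.roots.map fun _ => q ^ 2 - Polynomial.X).prod := by
      apply Multiset.prod_dvd_prod_of_dvd
      intro a ha
      rw [Polynomial.dvd_iff_isRoot]
      simp [hq a ha, hs]
    rw [Multiset.map_const', Multiset.prod_replicate] at h2
    have hu : IsUnit (Polynomial.C f.leadingCoeff) :=
      Polynomial.isUnit_C.2 (isUnit_iff_ne_zero.2 (Polynomial.leadingCoeff_ne_zero.2 hf))
    have h3 := (hu.mul_left_dvd).2 h2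
    rwa [← h1] at h3
  have hnil : IsNilpotent (AdjoinRoot.mk f (q ^ 2 - Polynomial.X)) :=
    ⟨_, by rw [← map_pow, AdjoinRoot.mk_eq_zero]; exact hdvd⟩
  have hcop : IsCoprime f Polynomial.X := by
    rw [Polynomial.isCoprime_iff_aeval_ne_zero_of_isAlgClosed ℂ ℂ]
    intro a
    by_cases ha : a = 0
    · left; subst ha; simpa using h0
    · right; simpa using ha
  have hXu : IsUnit (AdjoinRoot.mk f Polynomial.X) := by
    obtain ⟨a, b, hab⟩ := hcop
    refine IsUnit.of_mul_eq_one (AdjoinRoot.mk f b) ?_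
    have := congrArg (AdjoinRoot.mk f) hab
    simpa [mul_comm] using this
  have hqu : IsUnit (AdjoinRoot.mk f q) := by
    have h : IsUnit (AdjoinRoot.mk f q ^ 2) := by
      have := hnil.isUnit_add_left_of_commute hXu (Commute.all _ _)
      simpa using this
    exact (isUnit_pow_iff (by norm_num)).1 h
  have h2u : IsUnit (2 : AdjoinRoot f) := by
    have : IsUnit (algebraMap ℂ (AdjoinRoot f) 2) :=
      (isUnit_iff_ne_zero.2 (by norm_num : (2 : ℂ) ≠ 0)).map _
    rwa [map_ofNat] at this
  obtain ⟨r, ⟨-, hr⟩, -⟩ := Polynomial.existsUnique_nilpotent_sub_and_aeval_eq_zero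
    (R := AdjoinRoot f) (S := AdjoinRoot f) (x := AdjoinRoot.mk f q)
    (P := Polynomial.X ^ 2 - Polynomial.C (AdjoinRoot.mk f Polynomial.X))
    (by simpa using hnil)
    (by simpa [one_add_one_eq_two] using h2u.mul hqu)
  obtain ⟨p, rfl⟩ := AdjoinRoot.mk_surjective r
  refine ⟨p, ?_⟩
  rw [← AdjoinRoot.mk_eq_zero]
  simpa using hr

/-- Square roots exist in any complex Jordan subalgebra `L ⊆ Sⁿ` with unit `U`:
every invertible `X ∈ L` has a square root `Y ∈ L`, i.e. `Y •_U Y = Y U⁻¹ Y = X`. -/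
theorem stmt2 {n : ℕ} (U : Mat n) (hU : IsUnit U.det)
    (L : Submodule ℂ (Mat n)) (hsym : ∀ X ∈ L, Matrix.IsSymm X)
    (hUL : U ∈ L) (hclosed : ∀ X ∈ L, ∀ Y ∈ L, jmul U X Y ∈ L)
    (X : Mat n) (hX : X ∈ L) (hXdet : IsUnit X.det) :
    ∃ Y ∈ L, jmul U Y Y = X ∧ Y * U⁻¹ * Y = X := by
  have hUU : U⁻¹ * U = 1 := Matrix.nonsing_inv_mul U hU
  have hUU' : U * U⁻¹ = 1 := Matrix.mul_nonsing_inv U hU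
  obtain ⟨A, hA⟩ : ∃ A, A = X * U⁻¹ := ⟨_, rfl⟩
  have hAU : A * U = X := by rw [hA, mul_assoc, hUU, mul_one]
  have hAdet : A.det ≠ 0 := by
    intro h
    have := congrArg Matrix.det hAU
    rw [Matrix.det_mul, h, zero_mul] at this
    exact hXdet.ne_zero this.symm
  obtain ⟨p, hp⟩ := poly_sqrt A.charpoly (Matrix.charpoly_monic A).ne_zero (by
    rw [Matrix.eval_charpoly, map_zero, zero_sub, Matrix.det_neg]
    exact mul_ne_zero (pow_ne_zero _ (by norm_num)) hAdet)
  have hpA : Polynomial.aeval A p * Polynomial.aeval A p = A := by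
    obtain ⟨g, hg⟩ := hp
    have := congrArg (Polynomial.aeval A) hg
    rw [map_mul, Matrix.aeval_self_charpoly, zero_mul, map_sub, map_pow, Polynomial.aeval_X,
      sub_eq_zero, pow_two] at this
    exact this
  have hpow : ∀ k : ℕ, A ^ k * U ∈ L := by
    intro k
    induction k with
    | zero => simpa using hUL
    | succ k ih =>
      have h := hclosed _ hX _ ih
      have e : jmul U X (A ^ k * U) = A ^ (k + 1) * U := by
        have e1 : X * U⁻¹ * (A ^ k * U) = A ^ (k + 1) * U := by
          rw [← hA, ← mul_assoc, ← pow_succ']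
        have e2 : A ^ k * U * U⁻¹ * X = A ^ (k + 1) * U := by
          rw [mul_assoc (A ^ k), hUU', mul_one, ← hAU, ← mul_assoc, ← pow_succ]
        rw [jmul, e1, e2, ← two_smul ℂ, smul_smul]
        norm_num
      rwa [e] at h
  have hY : Polynomial.aeval A p * U * U⁻¹ * (Polynomial.aeval A p * U) = X := by
    rw [mul_assoc _ U, hUU', mul_one, ← mul_assoc, hpA, hAU]
  refine ⟨Polynomial.aeval A p * U, ?_, ?_, hY⟩
  · rw [Polynomial.aeval_eq_sum_range, Finset.sum_mul]
    refine Submodule.sum_mem _ fun i _ => ?_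
    rw [smul_mul_assoc]
    exact L.smul_mem _ (hpow i)
  · rw [jmul, hY, ← two_smul ℂ, smul_smul]
    norm_num
end
end

section
/- Let L ⊆ Sⁿ be a Jordan subalgebra of (Sⁿ, •_U) with unit U ∈ L invertible, and let V ∈ L be any invertible matrix. Then there exists a linear bijection φ : L → L with φ(U) = V and φ(X •_U Y) = φ(X) •_V φ(Y) for all X, Y ∈ L; that is, (L, •_U) and (L, •_V) are isomorphic as Jordan algebras. -/
open Matrix

noncomputable section

theorem sqrt_mod (q : Polynomial ℂ) (hq : q ≠ 0) (h0 : q.eval 0 ≠ 0) :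
    ∃ p : Polynomial ℂ, q ∣ p ^ 2 - Polynomial.X := by
  classical
  choose s hs using fun z : ℂ => IsAlgClosed.exists_pow_nat_eq z (n := 2) (by norm_num)
  let p0 : Polynomial ℂ := Lagrange.interpolate q.roots.toFinset id s
  have hp0 : ∀ z ∈ q.roots, p0.eval z = s z := fun z hz =>
    Lagrange.eval_interpolate_at_node s (v := id) (Function.injective_id.injOn)
      (Multiset.mem_toFinset.2 hz)
  have hdvd : q ∣ (p0 ^ 2 - Polynomial.X) ^ q.natDegree := by
    by_cases hz : p0 ^ 2 - Polynomial.X = 0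
    · by_cases hd : q.natDegree = 0
      · rw [hd, pow_zero]
        exact (Polynomial.isUnit_iff_degree_eq_zero.2
          (by rw [Polynomial.degree_eq_natDegree hq, hd]; rfl)).dvd
      · rw [hz, zero_pow hd]; exact dvd_zero _
    · have hne : (p0 ^ 2 - Polynomial.X) ^ q.natDegree ≠ 0 := pow_ne_zero _ hz
      refine (IsAlgClosed.splits q).dvd_of_roots_le_roots hq ?_
      rw [Multiset.le_iff_count]
      intro z
      by_cases hzr : z ∈ q.roots
      · rw [Polynomial.roots_pow, Multiset.count_nsmul]
        have h1 : 1 ≤ Multiset.count z (p0 ^ 2 - Polynomial.X).roots := by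
          rw [Multiset.one_le_count_iff_mem, Polynomial.mem_roots hz]
          simp [hp0 z hzr, hs]
        have h2 : Multiset.count z q.roots ≤ q.natDegree :=
          (Multiset.count_le_card _ _).trans (Polynomial.card_roots' q)
        nlinarith
      · rw [Multiset.count_eq_zero_of_notMem hzr]; exact Nat.zero_le _
  let x : AdjoinRoot q := AdjoinRoot.mk q p0
  let P : Polynomial (AdjoinRoot q) := Polynomial.X ^ 2 - Polynomial.C (AdjoinRoot.mk q Polynomial.X)
  have hnil : IsNilpotent (Polynomial.aeval x P) := by
    refine ⟨q.natDegree, ?_⟩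
    have : Polynomial.aeval x P = AdjoinRoot.mk q (p0 ^ 2 - Polynomial.X) := by
      simp [P, x]
    rw [this, ← map_pow, AdjoinRoot.mk_eq_zero]
    exact hdvd
  have hcop : IsCoprime p0 q := by
    rw [Polynomial.isCoprime_iff_aeval_ne_zero_of_isAlgClosed ℂ ℂ]
    intro z
    by_contra! h
    have hzr : z ∈ q.roots := (Polynomial.mem_roots hq).2 (by simpa using h.2)
    have h1 : s z = 0 := by rw [← hp0 z hzr]; simpa using h.1
    have h2 : z = 0 := by rw [← hs z, h1]; norm_num
    apply h0
    simpa [h2] using h.2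
  have hux : IsUnit x := by
    obtain ⟨a, b, hab⟩ := hcop
    refine IsUnit.of_mul_eq_one (AdjoinRoot.mk q a) ?_
    have := congrArg (AdjoinRoot.mk q) hab
    simpa [x, mul_comm] using this
  have hder : IsUnit (Polynomial.aeval x (Polynomial.derivative P)) := by
    have h2 : IsUnit (2 : AdjoinRoot q) := by
      have := (IsUnit.mk0 (2 : ℂ) two_ne_zero).map (algebraMap ℂ (AdjoinRoot q))
      rwa [map_ofNat] at this
    simpa [P, one_add_one_eq_two] using h2.mul hux
  obtain ⟨r, ⟨_, hr⟩, _⟩ := Polynomial.existsUnique_nilpotent_sub_and_aeval_eq_zero hnil hder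
  obtain ⟨p, rfl⟩ := AdjoinRoot.mk_surjective r
  refine ⟨p, ?_⟩
  rw [← AdjoinRoot.mk_eq_zero]
  simpa [P] using hr

theorem exists_sqrt {n : ℕ} (A : Mat n) (hA : IsUnit A.det) :
    ∃ p : Polynomial ℂ, Polynomial.aeval A p * Polynomial.aeval A p = A := by
  obtain ⟨p, c, hc⟩ := sqrt_mod A.charpoly A.charpoly_monic.ne_zero (by
    intro h
    have := A.det_eq_sign_charpoly_coeff
    rw [Polynomial.coeff_zero_eq_eval_zero, h, mul_zero] at this
    exact hA.ne_zero this)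
  refine ⟨p, ?_⟩
  have := congrArg (Polynomial.aeval A) hc
  simp only [map_sub, map_mul, map_pow, Polynomial.aeval_X, Matrix.aeval_self_charpoly,
    zero_mul] at this
  rw [← pow_two]; exact sub_eq_zero.1 this

/-- For a Jordan subalgebra `L` of `(Sⁿ, •_U)` and any invertible `V ∈ L`, there is a
linear bijection `φ : L → L` with `φ(U) = V` and `φ(X •_U Y) = φ(X) •_V φ(Y)`;
that is, `(L, •_U) ≅ (L, •_V)` as Jordan algebras. -/
theorem stmt3 {n : ℕ} (U : Mat n) (hU : IsUnit U.det)
    (L : Submodule ℂ (Mat n)) (hsym : ∀ X ∈ L, Matrix.IsSymm X)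
    (hUL : U ∈ L) (hclosed : ∀ X ∈ L, ∀ Y ∈ L, jmul U X Y ∈ L)
    (V : Mat n) (hVL : V ∈ L) (hVdet : IsUnit V.det) :
    ∃ φ : L ≃ₗ[ℂ] L,
      (φ ⟨U, hUL⟩ : Mat n) = V ∧
      ∀ X Y : L, (φ ⟨jmul U X Y, hclosed X X.2 Y Y.2⟩ : Mat n) =
        jmul V (φ X : Mat n) (φ Y : Mat n) := by
  have hUU : U⁻¹ * U = 1 := Matrix.nonsing_inv_mul U hU
  have hUU' : U * U⁻¹ = 1 := Matrix.mul_nonsing_inv U hU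
  have hVV : V⁻¹ * V = 1 := Matrix.nonsing_inv_mul V hVdet
  have hVV' : V * V⁻¹ = 1 := Matrix.mul_nonsing_inv V hVdet
  obtain ⟨p, hp⟩ := exists_sqrt (V * U⁻¹) (by
    rw [Matrix.det_mul]
    exact hVdet.mul (Matrix.isUnit_nonsing_inv_det U hU))
  have hpow : ∀ k : ℕ, (V * U⁻¹) ^ k * U ∈ L := by
    intro k
    induction k with
    | zero => simpa using hUL
    | succ k ih =>
      have h := hclosed _ hVL _ ih
      have e : jmul U V ((V * U⁻¹) ^ k * U) = (V * U⁻¹) ^ (k + 1) * U := by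
        have e1 : V * U⁻¹ * ((V * U⁻¹) ^ k * U) = (V * U⁻¹) ^ (k + 1) * U := by
          rw [pow_succ', Matrix.mul_assoc (V * U⁻¹)]
        have e2 : (V * U⁻¹) ^ k * U * U⁻¹ * V = (V * U⁻¹) ^ (k + 1) * U := by
          rw [Matrix.mul_assoc _ U, hUU', Matrix.mul_one, pow_succ, Matrix.mul_assoc _ _ U,
            Matrix.mul_assoc V, hUU, Matrix.mul_one]
        rw [jmul, e1, e2, ← two_smul ℂ, smul_smul]
        norm_num
      rwa [e] at h
  have hB : Polynomial.aeval (V * U⁻¹) p * U ∈ L := by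
    rw [Polynomial.aeval_eq_sum_range, Finset.sum_mul]
    refine L.sum_mem fun i _ => ?_
    rw [Matrix.smul_mul]
    exact L.smul_mem _ (hpow i)
  generalize Polynomial.aeval (V * U⁻¹) p = B at hp hB
  have hBdet : IsUnit B.det := by
    have h : IsUnit (B * B).det := by
      rw [hp, Matrix.det_mul]
      exact hVdet.mul (Matrix.isUnit_nonsing_inv_det U hU)
    rw [Matrix.det_mul] at h
    exact isUnit_of_mul_isUnit_left h
  have hBB : B⁻¹ * B = 1 := Matrix.nonsing_inv_mul B hBdet
  have hBB' : B * B⁻¹ = 1 := Matrix.mul_nonsing_inv B hBdet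
  have hV : V = B * B * U := by rw [hp, Matrix.mul_assoc, hUU, Matrix.mul_one]
  have hVi : V⁻¹ = U⁻¹ * B⁻¹ * B⁻¹ := by
    rw [hV, Matrix.mul_inv_rev, Matrix.mul_inv_rev, Matrix.mul_assoc]
  have c1 : ∀ Z : Mat n, U⁻¹ * (U * Z) = Z := fun Z => by
    rw [← Matrix.mul_assoc, hUU, Matrix.one_mul]
  have c2 : ∀ Z : Mat n, U * (U⁻¹ * Z) = Z := fun Z => by
    rw [← Matrix.mul_assoc, hUU', Matrix.one_mul]
  have c3 : ∀ Z : Mat n, B⁻¹ * (B * Z) = Z := fun Z => by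
    rw [← Matrix.mul_assoc, hBB, Matrix.one_mul]
  have c4 : ∀ Z : Mat n, B * (B⁻¹ * Z) = Z := fun Z => by
    rw [← Matrix.mul_assoc, hBB', Matrix.one_mul]
  let f : Mat n →ₗ[ℂ] Mat n :=
    { toFun := fun X => B * X * (U⁻¹ * B * U)
      map_add' := fun X Y => by rw [Matrix.mul_add, Matrix.add_mul]
      map_smul' := fun c X => by simp }
  have hf : ∀ X, f X = B * X * (U⁻¹ * B * U) := fun X => rfl
  have hfL : ∀ X ∈ L, f X ∈ L := by
    intro X hX
    have h1 := hclosed _ hB _ (hclosed _ hB _ hX)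
    have h2 := hclosed _ (hclosed _ hB _ hB) _ hX
    have e : f X = (2 : ℂ) • jmul U (B * U) (jmul U (B * U) X)
        - jmul U (jmul U (B * U) (B * U)) X := by
      rw [hf]
      simp only [jmul, Matrix.mul_add, Matrix.add_mul, Matrix.smul_mul, Matrix.mul_smul,
        Matrix.mul_assoc, c1, c2, hUU, hUU', Matrix.mul_one]
      module
    rw [e]
    exact L.sub_mem (L.smul_mem _ h1) h2
  have hinj : Function.Injective (f.restrict hfL) := by
    intro X Y h
    have h' : B * (X : Mat n) * (U⁻¹ * B * U) = B * (Y : Mat n) * (U⁻¹ * B * U) :=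
      congrArg Subtype.val h
    have h2 := congrArg (fun Z => B⁻¹ * (Z * (U⁻¹ * B⁻¹ * U))) h'
    simp only [Matrix.mul_assoc, c1, c2, c3, c4, hUU, Matrix.mul_one] at h2
    exact Subtype.ext h2
  refine ⟨LinearEquiv.ofInjectiveEndo (f.restrict hfL) hinj, ?_, fun X Y => ?_⟩
  · change f U = V
    rw [hf, hV]
    simp only [Matrix.mul_assoc, c2]
  · change f (jmul U X Y) = jmul V (f X) (f Y)
    simp only [hf, jmul, hVi, Matrix.mul_add, Matrix.add_mul, Matrix.smul_mul, Matrix.mul_smul,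
      Matrix.mul_assoc, c1, c2, c3, c4]
end
end

section
/- Let L ⊆ Sⁿ be a Jordan subalgebra of (Sⁿ, •_U) with unit U ∈ L invertible, and let rad L := {X ∈ L : X •_U Y is nilpotent for every Y ∈ L}. Suppose rad L is a linear subspace of dimension k that contains all Jordan powers X^{•ℓ} (ℓ ≥ 1) of each of its elements X (this holds since rad L is an ideal). Then X^{•(k+1)} = 0 for every X ∈ rad L. -/
open Matrix

noncomputable section

/-- Jordan powers: `jpow U X ℓ = X^{•(ℓ+1)}`, i.e. `jpow U X 0 = X^{•1} = X` and
`X^{•(ℓ+1)} = X •_U X^{•ℓ}`. -/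
def jpow {n : ℕ} (U X : Mat n) : ℕ → Mat n
  | 0 => X
  | (k + 1) => jmul U X (jpow U X k)

lemma jpow_eq {n : ℕ} (U X : Mat n) (hU : IsUnit U.det) (l : ℕ) :
    jpow U X l = U * (U⁻¹ * X) ^ (l + 1) := by
  induction l with
  | zero => simp [jpow, Matrix.mul_nonsing_inv_cancel_left _ _ hU]
  | succ l ih =>
    have e1 : X * U⁻¹ * (U * (U⁻¹ * X) ^ (l + 1)) = U * (U⁻¹ * X) ^ (l + 1 + 1) := by
      rw [Matrix.mul_assoc, Matrix.nonsing_inv_mul_cancel_left _ _ hU, pow_succ' _ (l + 1),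
        ← Matrix.mul_assoc U, Matrix.mul_nonsing_inv_cancel_left _ _ hU]
    have e2 : U * (U⁻¹ * X) ^ (l + 1) * U⁻¹ * X = U * (U⁻¹ * X) ^ (l + 1 + 1) := by
      rw [pow_succ _ (l + 1)]
      simp only [Matrix.mul_assoc]
    rw [jpow, ih, jmul, e1, e2, ← two_smul ℂ, smul_smul]
    norm_num

open Polynomial in
lemma nil_bound {n k m : ℕ} (A : Mat n) (hA : A ^ m = 0) (g : Fin (k + 1) → ℂ)
    (hg : ∃ i, g i ≠ 0) (h : ∑ i, g i • A ^ ((i : ℕ) + 1) = 0) : A ^ (k + 1) = 0 := by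
  set p : ℂ[X] := ∑ i : Fin (k + 1), C (g i) * X ^ ((i : ℕ) + 1) with hp
  have hpA : aeval A p = 0 := by
    rw [← h, hp, map_sum]
    refine Finset.sum_congr rfl fun i _ => ?_
    simp [Algebra.smul_def]
  have hp0 : p ≠ 0 := by
    obtain ⟨i, hi⟩ := hg
    intro h0
    apply hi
    have := congrArg (fun q => coeff q ((i : ℕ) + 1)) h0
    simpa [hp, finset_sum_coeff, coeff_X_pow, Fin.val_inj] using this
  have hdeg : p.natDegree ≤ k + 1 := by
    refine natDegree_sum_le_of_forall_le _ _ fun i _ => ?_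
    exact (natDegree_C_mul_X_pow_le _ _).trans (by omega)
  have h1 : minpoly ℂ A ∣ X ^ m := minpoly.dvd _ _ (by simpa using hA)
  obtain ⟨j, _, hj⟩ := (dvd_prime_pow prime_X _).1 h1
  have h2 : X ^ j ∣ p := hj.symm.dvd.trans (minpoly.dvd _ _ hpA)
  have h3 : j ≤ k + 1 := by
    have := natDegree_le_of_dvd h2 hp0
    rw [natDegree_X_pow] at this
    omega
  have h4 : minpoly ℂ A ∣ X ^ (k + 1) := hj.dvd.trans (pow_dvd_pow _ h3)
  simpa using (minpoly.dvd_iff).1 h4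

/-- If the radical `rad L` has dimension `k`, then `X^{•(k+1)} = 0` for all
`X ∈ rad L`.  Here `rad L = {X ∈ L : X •_U Y is nilpotent for all Y ∈ L}` is assumed
to be a linear subspace `R` closed under Jordan powers of its elements. -/
theorem stmt4 {n k : ℕ} (U : Mat n) (hU : IsUnit U.det)
    (L : Submodule ℂ (Mat n)) (hsym : ∀ X ∈ L, Matrix.IsSymm X)
    (hUL : U ∈ L) (hclosed : ∀ X ∈ L, ∀ Y ∈ L, jmul U X Y ∈ L)
    (R : Submodule ℂ (Mat n))
    (hR : (R : Set (Mat n)) =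
      {X : Mat n | X ∈ L ∧ ∀ Y ∈ L, ∃ m : ℕ, jpow U (jmul U X Y) m = 0})
    (hk : Module.finrank ℂ R = k)
    (hpowR : ∀ X ∈ R, ∀ ℓ : ℕ, jpow U X ℓ ∈ R) :
    ∀ X ∈ R, jpow U X k = 0 := by
  intro X hX
  have hX' : X ∈ {X : Mat n | X ∈ L ∧ ∀ Y ∈ L, ∃ m : ℕ, jpow U (jmul U X Y) m = 0} := by
    rw [← hR]; exact hX
  obtain ⟨m, hm⟩ := hX'.2 U hUL
  have e : jmul U X U = X := by
    rw [jmul, Matrix.mul_assoc, Matrix.nonsing_inv_mul _ hU, Matrix.mul_nonsing_inv _ hU,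
      Matrix.mul_one, Matrix.one_mul, ← two_smul ℂ, smul_smul]
    norm_num
  have cancel : ∀ B : Mat n, U * B = 0 → B = 0 := fun B hB => by
    rw [← Matrix.nonsing_inv_mul_cancel_left U B hU, hB, Matrix.mul_zero]
  rw [e, jpow_eq U X hU] at hm
  have hli : ¬ LinearIndependent ℂ (fun i : Fin (k + 1) => (⟨jpow U X i, hpowR X hX i⟩ : R)) := by
    intro hl
    have := hl.fintype_card_le_finrank
    rw [hk, Fintype.card_fin] at this
    omega
  rw [Fintype.not_linearIndependent_iff] at hli
  obtain ⟨g, hg, hne⟩ := hli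
  have hg' : ∑ i, g i • jpow U X (i : ℕ) = 0 := by
    simpa using congrArg (Subtype.val) hg
  rw [jpow_eq U X hU, nil_bound (U⁻¹ * X) (cancel _ hm) g hne, Matrix.mul_zero]
  apply cancel
  rw [← hg', Finset.mul_sum]
  refine Finset.sum_congr rfl fun i _ => ?_
  rw [jpow_eq U X hU, Matrix.mul_smul]
end
end

section
/- Let L ⊆ Sⁿ be a Jordan subalgebra of (Sⁿ, •_U) with unit U ∈ L invertible and with dim L = 2. Then there exists X ∈ L such that {U, X} is a basis of L and either X •_U X = X, or X •_U X = 0. -/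
open Matrix

noncomputable section

theorem jmul_self_eq {n : ℕ} (U X : Mat n) : jmul U X X = X * U⁻¹ * X := by
  unfold jmul
  rw [← two_smul ℂ (X * U⁻¹ * X), smul_smul]
  norm_num

theorem jmul_comb {n : ℕ} (U Z : Mat n) (hU : IsUnit U.det) (p q : ℂ) :
    jmul U (p • U + q • Z) (p • U + q • Z)
      = (p * p) • U + (2 * p * q) • Z + (q * q) • jmul U Z Z := by
  rw [jmul_self_eq, jmul_self_eq]
  have h1 : U * U⁻¹ = 1 := Matrix.mul_nonsing_inv U hU
  have h2 : Z * U⁻¹ * U = Z := by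
    rw [Matrix.mul_assoc, Matrix.nonsing_inv_mul U hU, Matrix.mul_one]
  simp only [Matrix.add_mul, Matrix.mul_add, Matrix.smul_mul, Matrix.mul_smul, h1, h2,
    Matrix.one_mul]
  module

/-- Every 2-dimensional Jordan subalgebra `L` of `(Sⁿ, •_U)` has a basis `{U, X}`
where either `X •_U X = X` or `X •_U X = 0`. -/
theorem stmt5 {n : ℕ} (U : Mat n) (hU : IsUnit U.det)
    (L : Submodule ℂ (Mat n)) (hsym : ∀ X ∈ L, Matrix.IsSymm X)
    (hUL : U ∈ L) (hclosed : ∀ X ∈ L, ∀ Y ∈ L, jmul U X Y ∈ L)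
    (hdim : Module.finrank ℂ L = 2) :
    ∃ X ∈ L, LinearIndependent ℂ ![U, X] ∧
      Submodule.span ℂ {U, X} = L ∧
      (jmul U X X = X ∨ jmul U X X = 0) := by
  have hU0 : U ≠ 0 := by
    intro h0
    have h1 : U * U⁻¹ = 1 := Matrix.mul_nonsing_inv U hU
    have hL : L = ⊥ := by
      rw [Submodule.eq_bot_iff]
      intro X _
      rw [← Matrix.mul_one X, ← h1, h0]
      simp
    rw [hL] at hdim
    simp at hdim
  have key : ∀ X ∈ L, (∀ a : ℂ, a • U ≠ X) → LinearIndependent ℂ ![U, X] ∧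
      Submodule.span ℂ {U, X} = L := by
    intro X hX hne
    have hli : LinearIndependent ℂ ![U, X] :=
      (LinearIndependent.pair_iff' hU0).2 hne
    refine ⟨hli, ?_⟩
    apply Submodule.eq_of_le_of_finrank_eq
    · rw [Submodule.span_le]
      rintro Y (rfl | rfl)
      · exact hUL
      · exact hX
    · have := finrank_span_eq_card hli
      rw [hdim]
      have hr : Set.range ![U, X] = {U, X} := by
        ext Z
        simp [eq_comm, or_comm]
      rw [hr] at this
      simpa using this
  obtain ⟨Y, hY, hYne⟩ : ∃ Y ∈ L, ∀ a : ℂ, a • U ≠ Y := by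
    by_contra! hcon
    have hle : L ≤ Submodule.span ℂ {U} := by
      intro Y hY
      exact Submodule.mem_span_singleton.2 (hcon Y hY)
    have h1 := Submodule.finrank_mono hle
    rw [hdim, finrank_span_singleton hU0] at h1
    omega
  have hYY : jmul U Y Y ∈ Submodule.span ℂ {U, Y} := by
    rw [(key Y hY hYne).2]
    exact hclosed Y hY Y hY
  obtain ⟨a, b, hab⟩ := Submodule.mem_span_pair.1 hYY
  have good : ∀ p q : ℂ, q ≠ 0 →
      (jmul U (p • U + q • Y) (p • U + q • Y) = p • U + q • Y ∨
        jmul U (p • U + q • Y) (p • U + q • Y) = 0) →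
      ∃ X ∈ L, LinearIndependent ℂ ![U, X] ∧
      Submodule.span ℂ {U, X} = L ∧
      (jmul U X X = X ∨ jmul U X X = 0) := by
    intro p q hq h
    have hm : p • U + q • Y ∈ L := L.add_mem (L.smul_mem _ hUL) (L.smul_mem _ hY)
    have hk := key _ hm (by
      intro c hc
      apply hYne (q⁻¹ * (c - p))
      rw [mul_smul, sub_smul, hc, add_sub_cancel_left, smul_smul, inv_mul_cancel₀ hq, one_smul])
    exact ⟨_, hm, hk.1, hk.2, h⟩
  by_cases hc : a + b ^ 2 / 4 = 0
  · apply good (-b / 2) 1 one_ne_zero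
    right
    rw [jmul_comb U Y hU, ← hab]
    have ha : a = -(b ^ 2 / 4) := eq_neg_of_add_eq_zero_left hc
    rw [ha]
    module
  · obtain ⟨s, hs⟩ := IsAlgClosed.exists_pow_nat_eq (a + b ^ 2 / 4) (n := 2) (by norm_num)
    have hs0 : s ≠ 0 := by
      rintro rfl
      exact hc (by rw [← hs]; norm_num)
    apply good (1 / 2 - b / (4 * s)) (1 / (2 * s)) (by simp [hs0])
    left
    rw [jmul_comb U Y hU, ← hab]
    have ha : a = s ^ 2 - b ^ 2 / 4 := by rw [hs]; ring
    rw [ha]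
    match_scalars
    · field_simp
      ring
    · field_simp
      ring
end
end

section
/- Let L ⊆ Sⁿ be a Jordan subalgebra of (Sⁿ, •_U) with unit U ∈ L invertible and with dim L = 3. Then there exist X, Y ∈ L such that {U, X, Y} is a basis of L and (writing • for •_U) exactly one of the following multiplication tables holds: 1(a): X•X = X, Y•Y = Y, X•Y = 0; 1(b): X•X = U, Y•Y = U, X•Y = 0; 2(a): X•X = X, Y•Y = 0, X•Y = 0; 2(b): X•X = X, Y•Y = 0, X•Y = Y/2; 3(a): X•X = Y, Y•Y = 0, X•Y = 0; 3(b): X•X = 0, Y•Y = 0, X•Y = 0. -/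
open Matrix

noncomputable section

section Helpers

def I3 {R : Type*} [Ring R] [Algebra ℂ R] (a b c : R) : Prop :=
  ∀ x y z : ℂ, x • a + y • b + z • c = 0 → x = 0 ∧ y = 0 ∧ z = 0

def Tab {R : Type*} [Ring R] [Algebra ℂ R] (X Y : R) : Prop :=
  (X * X = X ∧ Y * Y = Y ∧ X * Y + Y * X = 0) ∨
  (X * X = 1 ∧ Y * Y = 1 ∧ X * Y + Y * X = 0) ∨
  (X * X = X ∧ Y * Y = 0 ∧ X * Y + Y * X = 0) ∨
  (X * X = X ∧ Y * Y = 0 ∧ X * Y + Y * X = Y) ∨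
  (X * X = Y ∧ Y * Y = 0 ∧ X * Y + Y * X = 0) ∨
  (X * X = 0 ∧ Y * Y = 0 ∧ X * Y + Y * X = 0)

lemma I3_iff {R : Type*} [Ring R] [Algebra ℂ R] (a b c : R) :
    LinearIndependent ℂ ![a, b, c] ↔ I3 a b c := by
  rw [Fintype.linearIndependent_iff]
  constructor
  · intro h x y z hxyz
    have := h ![x, y, z] (by simpa [Fin.sum_univ_three] using hxyz)
    exact ⟨this 0, this 1, this 2⟩
  · intro h g hg
    have := h (g 0) (g 1) (g 2) (by simpa [Fin.sum_univ_three] using hg)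
    intro i
    fin_cases i
    · exact this.1
    · exact this.2.1
    · exact this.2.2

lemma exists_sq (z : ℂ) : ∃ w : ℂ, w * w = z := by
  obtain ⟨w, hw⟩ := IsAlgClosed.exists_pow_nat_eq z (n := 2) (by norm_num)
  exact ⟨w, by rw [← hw]; ring⟩

lemma cubic_split (r s t : ℂ) : ∃ a b c : ℂ, r = a + b + c ∧ s = -(a*b+b*c+c*a) ∧ t = a*b*c := by
  obtain ⟨a, ha⟩ : ∃ a : ℂ, a^3 - r*a^2 - s*a - t = 0 := by
    obtain ⟨a, ha⟩ := IsAlgClosed.exists_root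
      (Cubic.toPoly ⟨1, -r, -s, -t⟩ : Polynomial ℂ) (by
        rw [Cubic.degree_of_a_ne_zero (by simp)]; norm_num)
    refine ⟨a, ?_⟩
    simp [Cubic.toPoly, Polynomial.IsRoot] at ha
    linear_combination ha
  obtain ⟨w, hw⟩ := exists_sq ((r - a)^2 - 4*(-s - a*(r-a)))
  refine ⟨a, (r - a + w)/2, (r - a - w)/2, by ring, ?_, ?_⟩
  · linear_combination (-1/4)*hw
  · linear_combination (a/4)*hw - ha

section
variable {R : Type*} [Ring R] [Algebra ℂ R] (M : Submodule ℂ R)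

open Polynomial in
lemma caseA (h1 : (1:R) ∈ M) (A : R) (hA : A ∈ M) (hA2 : A * A ∈ M)
    (hI : I3 1 A (A*A)) (r s t : ℂ) (h3 : A*(A*A) = r • (A*A) + s • A + t • 1) :
    ∃ X ∈ M, ∃ Y ∈ M, I3 1 X Y ∧ Tab X Y := by
  obtain ⟨a, b, c, rfl, rfl, rfl⟩ := cubic_split r s t
  have hz : aeval A (((X:ℂ[X]) - C a) * (X - C b) * (X - C c)) = 0 := by
    have e : ((X:ℂ[X]) - C a) * (X - C b) * (X - C c) = X * (X*X) - (C (a+b+c) * (X*X)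
      + C (-(a*b+b*c+c*a)) * X + C (a*b*c)) := by
      simp only [C_add, C_mul, C_neg]; ring
    rw [e]
    simp only [map_sub, map_add (aeval A), map_mul (aeval A), aeval_X, aeval_C, h3]
    simp only [Algebra.smul_def, mul_one]
    exact sub_self _
  have key : ∀ p q g : ℂ[X], p - q = g * (((X:ℂ[X]) - C a) * (X - C b) * (X - C c)) →
      aeval A p = aeval A q := by
    intro p q g h
    rw [← sub_eq_zero, ← map_sub, h, map_mul, hz, mul_zero]
  have quad : ∀ u v d : ℂ, aeval A (C d * ((X - C u) * (X - C v)))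
      = (d*u*v) • (1:R) + (-d*(u+v)) • A + d • (A*A) := by
    intro u v d
    have e : C d * (((X:ℂ[X]) - C u) * (X - C v)) = C (d*u*v) + C (-d*(u+v)) * X + C d * (X*X) := by
      simp only [C_add, C_mul, C_neg]; ring
    rw [e]
    simp only [map_add (aeval A), map_mul (aeval A), aeval_X, aeval_C, Algebra.smul_def, mul_one]
  have quadM : ∀ u v d : ℂ, aeval A (C d * ((X - C u) * (X - C v))) ∈ M := by
    intro u v d
    rw [quad]
    exact M.add_mem (M.add_mem (M.smul_mem _ h1) (M.smul_mem _ hA)) (M.smul_mem _ hA2)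
  -- double root lemma
  have dbl : ∀ u v : ℂ, u ≠ v → (((X:ℂ[X]) - C u) * (X - C u) * (X - C v)
      = ((X:ℂ[X]) - C a) * (X - C b) * (X - C c)) →
      ∃ X ∈ M, ∃ Y ∈ M, I3 1 X Y ∧ Tab X Y := by
    intro u v huv he
    rw [← he] at key
    have hne : v - u ≠ 0 := sub_ne_zero.2 huv.symm
    set d := ((v-u)*(v-u))⁻¹ with hd
    have hd0 : d ≠ 0 := by rw [hd]; exact inv_ne_zero (mul_ne_zero hne hne)
    have hdd : d * ((v-u)*(v-u)) = 1 := inv_mul_cancel₀ (mul_ne_zero hne hne)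
    have hC : C d * ((C v - C u) * (C v - C u)) = (1:ℂ[X]) := by
      rw [← C_sub, ← C_mul, ← C_mul, hdd, C_1]
    refine ⟨_, quadM u u d, _, quadM u v 1, ?_, Or.inr (Or.inr (Or.inl ⟨?_, ?_, ?_⟩))⟩
    · intro x y z h
      rw [quad, quad] at h
      obtain ⟨e1, e2, e3⟩ := hI (x + y*(d*u*u) + z*(1*u*v)) (y*(-d*(u+u)) + z*(-1*(u+v)))
        (y*d+z*1) (by rw [← h]; module)
      have hz : z * (v - u) = 0 := by linear_combination -e2 - 2*u*e3
      have hz0 : z = 0 := (mul_eq_zero.1 hz).resolve_right hne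
      subst hz0
      have hy : y = 0 := by
        have : y * d = 0 := by linear_combination e3
        exact (mul_eq_zero.1 this).resolve_right hd0
      subst hy
      exact ⟨by linear_combination e1, rfl, rfl⟩
    · rw [← map_mul]
      apply key _ _ (C d * C d * (X + C v - 2*C u))
      linear_combination (C d * (X - C u)*(X - C u)) * hC
    · rw [← map_mul, ← map_zero (aeval (R := ℂ) A)]
      apply key _ _ (X - C v)
      simp only [C_1]; ring
    · rw [← map_mul, ← map_mul, ← map_add, ← map_zero (aeval (R := ℂ) A)]
      apply key _ _ (2 * C d * (X - C u))
      simp only [C_1]; ring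
  by_cases hab : a = b
  · by_cases hbc : b = c
    · subst hab; subst hbc
      have q1 : aeval A (X - C a) = (-a) • (1:R) + A := by
        simp [Algebra.smul_def]; abel
      refine ⟨aeval A (X - C a), ?_, _, quadM a a 1, ?_, Or.inr (Or.inr (Or.inr (Or.inr (Or.inl ⟨?_, ?_, ?_⟩))))⟩
      · rw [q1]; exact M.add_mem (M.smul_mem _ h1) hA
      · intro x y z h
        rw [quad, q1] at h
        obtain ⟨e1, e2, e3⟩ := hI (x + y*(-a) + z*(1*a*a)) (y + z*(-1*(a+a)))
          (z*1) (by rw [← h]; module)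
        have hz : z = 0 := by linear_combination e3
        subst hz
        have hy : y = 0 := by linear_combination e2
        subst hy
        exact ⟨by linear_combination e1, rfl, rfl⟩
      · rw [← map_mul]
        apply key _ _ 0
        simp only [C_1]; ring
      · rw [← map_mul, ← map_zero (aeval (R := ℂ) A)]
        apply key _ _ (X - C a)
        simp only [C_1]; ring
      · rw [← map_mul, ← map_mul, ← map_add, ← map_zero (aeval (R := ℂ) A)]
        apply key _ _ 2
        simp only [C_1]; ring
    · exact dbl a c (by rw [hab]; exact hbc) (by rw [hab])
  · by_cases hbc : b = c
    · exact dbl b a (Ne.symm hab) (by rw [hbc]; ring)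
    by_cases hac : a = c
    · exact dbl a b hab (by rw [hac]; ring)
    have n1 : a - b ≠ 0 := sub_ne_zero.2 hab
    have n2 : a - c ≠ 0 := sub_ne_zero.2 hac
    have n3 : b - c ≠ 0 := sub_ne_zero.2 hbc
    obtain ⟨d, hdd⟩ : ∃ d : ℂ, d * ((a-b)*(a-c)) = 1 := ⟨_, inv_mul_cancel₀ (mul_ne_zero n1 n2)⟩
    obtain ⟨e, hee⟩ : ∃ d : ℂ, d * ((b-a)*(b-c)) = 1 :=
      ⟨_, inv_mul_cancel₀ (mul_ne_zero (sub_ne_zero.2 (Ne.symm hab)) n3)⟩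
    have hd0 : d ≠ 0 := by rintro rfl; simp at hdd
    have he0 : e ≠ 0 := by rintro rfl; simp at hee
    have hC : C d * ((C a - C b) * (C a - C c)) = (1:ℂ[X]) := by
      rw [← C_sub, ← C_sub, ← C_mul, ← C_mul, hdd, C_1]
    have hC' : C e * ((C b - C a) * (C b - C c)) = (1:ℂ[X]) := by
      rw [← C_sub, ← C_sub, ← C_mul, ← C_mul, hee, C_1]
    refine ⟨_, quadM b c d, _, quadM a c e, ?_, Or.inl ⟨?_, ?_, ?_⟩⟩
    · intro x y z h
      rw [quad, quad] at h
      obtain ⟨e1, e2, e3⟩ := hI (x + y*(d*b*c) + z*(e*a*c)) (y*(-d*(b+c)) + z*(-e*(a+c)))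
        (y*d+z*e) (by rw [← h]; module)
      have hy : y * (d * (a - b)) = 0 := by linear_combination e2 + (a+c)*e3
      have hy0 : y = 0 := (mul_eq_zero.1 hy).resolve_right (mul_ne_zero hd0 n1)
      subst hy0
      have hz : z = 0 := by
        have : z * e = 0 := by linear_combination e3
        exact (mul_eq_zero.1 this).resolve_right he0
      subst hz
      exact ⟨by linear_combination e1, rfl, rfl⟩
    · rw [← map_mul]
      apply key _ _ (C d * C d * (X + C a - C b - C c))
      linear_combination (C d * (X - C b)*(X - C c)) * hC
    · rw [← map_mul]
      apply key _ _ (C e * C e * (X + C b - C a - C c))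
      linear_combination (C e * (X - C a)*(X - C c)) * hC'
    · rw [← map_mul, ← map_mul, ← map_add, ← map_zero (aeval (R := ℂ) A)]
      apply key _ _ (2 * C d * C e * (X - C c))
      ring

lemma caseB1 (h1 : (1:R) ∈ M) (V W : R) (hV : V ∈ M) (hW : W ∈ M) (hI : I3 1 V W) (β γ : ℂ)
    (hVV : V * V = 1) (hWW : W * W = β • 1) (hVW : V * W + W * V = (2*γ) • 1) :
    ∃ X ∈ M, ∃ Y ∈ M, I3 1 X Y ∧ Tab X Y := by
  have e1 : V * (W - γ • V) + (W - γ • V) * V = 0 := by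
    have : V * (W - γ • V) + (W - γ • V) * V = (V * W + W * V) - (2*γ) • (V*V) := by
      simp only [mul_sub, sub_mul, mul_smul_comm, smul_mul_assoc]; module
    rw [this, hVW, hVV, sub_self]
  have e2 : (W - γ • V) * (W - γ • V) = (β - γ^2) • 1 := by
    have : (W - γ • V) * (W - γ • V) = W * W - γ • (V * W + W * V) + γ^2 • (V*V) := by
      simp only [mul_sub, sub_mul, mul_smul_comm, smul_mul_assoc]; module
    rw [this, hVW, hVV, hWW]; module
  have hI' : I3 1 V (W - γ • V) := by
    intro x y z h
    obtain ⟨a, b, c⟩ := hI x (y - z*γ) z (by rw [← h]; module)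
    subst c
    exact ⟨a, by linear_combination b, rfl⟩
  have hW' : W - γ • V ∈ M := M.sub_mem hW (M.smul_mem _ hV)
  generalize W - γ • V = Z at *
  generalize β - γ^2 = δ at *
  by_cases hδ : δ = 0
  · subst hδ
    refine ⟨(1/2:ℂ) • (1 + V), M.smul_mem _ (M.add_mem h1 hV), Z, hW', ?_,
      Or.inr (Or.inr (Or.inr (Or.inl ⟨?_, ?_, ?_⟩)))⟩
    · intro x y z h
      obtain ⟨a, b, c⟩ := hI' (x + y/2) (y/2) z (by rw [← h]; module)
      exact ⟨by linear_combination a - b, by linear_combination 2*b, c⟩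
    · simp only [mul_add, add_mul, mul_smul_comm, smul_mul_assoc, hVV, mul_one, one_mul]; module
    · rw [e2, zero_smul]
    · have : (1/2:ℂ) • (1 + V) * Z + Z * ((1/2:ℂ) • (1 + V)) = Z + (1/2:ℂ) • (V * Z + Z * V) := by
        simp only [mul_add, add_mul, mul_smul_comm, smul_mul_assoc, mul_one, one_mul]; module
      rw [this, e1]; simp
  · obtain ⟨w, rfl⟩ := exists_sq δ
    have hw : w ≠ 0 := by rintro rfl; simp at hδ
    refine ⟨V, hV, w⁻¹ • Z, M.smul_mem _ hW', ?_, Or.inr (Or.inl ⟨hVV, ?_, ?_⟩)⟩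
    · intro x y z h
      obtain ⟨a, b, c⟩ := hI' x y (z * w⁻¹) (by rw [← h]; module)
      exact ⟨a, b, (mul_eq_zero.1 c).resolve_right (inv_ne_zero hw)⟩
    · rw [mul_smul_comm, smul_mul_assoc, e2, smul_smul, smul_smul]
      have : w⁻¹ * w⁻¹ * (w * w) = 1 := by field_simp
      rw [this, one_smul]
    · rw [mul_smul_comm, smul_mul_assoc, ← smul_add, e1, smul_zero]

lemma caseB (h1 : (1:R) ∈ M) (V W : R) (hV : V ∈ M) (hW : W ∈ M) (hI : I3 1 V W) (α β γ : ℂ)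
    (hVV : V * V = α • 1) (hWW : W * W = β • 1) (hVW : V * W + W * V = (2*γ) • 1) :
    ∃ X ∈ M, ∃ Y ∈ M, I3 1 X Y ∧ Tab X Y := by
  have main : ∀ (V W : R), V ∈ M → W ∈ M → I3 1 V W → ∀ (α β γ : ℂ),
    V * V = α • 1 → W * W = β • 1 → V * W + W * V = (2*γ) • 1 → α ≠ 0 →
    ∃ X ∈ M, ∃ Y ∈ M, I3 1 X Y ∧ Tab X Y := by
    intro V W hV hW hI α β γ hVV hWW hVW h0
    obtain ⟨w, rfl⟩ := exists_sq α
    have hw : w ≠ 0 := by rintro rfl; simp at h0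
    apply caseB1 M h1 (w⁻¹ • V) W (M.smul_mem _ hV) hW _ β (w⁻¹ * γ) _ hWW
    · rw [mul_smul_comm, smul_mul_assoc, ← smul_add, hVW]; module
    · intro x y z h
      obtain ⟨a, b, c⟩ := hI x (y * w⁻¹) z (by rw [← h]; module)
      exact ⟨a, (mul_eq_zero.1 b).resolve_right (inv_ne_zero hw), c⟩
    · rw [mul_smul_comm, smul_mul_assoc, hVV, smul_smul, smul_smul]
      have : w⁻¹ * w⁻¹ * (w * w) = 1 := by field_simp
      rw [this, one_smul]
  by_cases ha : α = 0
  · by_cases hb : β = 0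
    · by_cases hc : γ = 0
      · subst ha; subst hb; subst hc
        exact ⟨V, hV, W, hW, hI, Or.inr (Or.inr (Or.inr (Or.inr (Or.inr
          ⟨by simpa using hVV, by simpa using hWW, by simpa using hVW⟩))))⟩
      · subst ha; subst hb
        refine main (V + W) V (M.add_mem hV hW) hV ?_ (2*γ) 0 γ ?_ hVV ?_ (by simpa using hc)
        · intro x y z h
          obtain ⟨a, b, c⟩ := hI x (y + z) y (by rw [← h]; module)
          exact ⟨a, c, by linear_combination b - c⟩
        · have : (V + W) * (V + W) = V * V + W * W + (V * W + W * V) := by noncomm_ring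
          rw [this, hVV, hWW, hVW]; module
        · have : (V + W) * V + V * (V + W) = (2:ℂ) • (V * V) + (V * W + W * V) := by
            simp only [mul_add, add_mul]; module
          rw [this, hVV, hVW]; module
    · refine main W V hW hV ?_ β α γ hWW hVV (by rw [add_comm]; exact hVW) hb
      intro x y z h
      obtain ⟨a, b, c⟩ := hI x z y (by rw [← h]; module)
      exact ⟨a, c, b⟩
  · exact main V W hV hW hI α β γ hVV hWW hVW ha

lemma classify (h1 : (1:R) ∈ M) (hsq : ∀ A ∈ M, ∀ B ∈ M, (1/2:ℂ) • (A * B + B * A) ∈ M)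
    (hspan : ∀ a ∈ M, ∀ b ∈ M, ∀ c ∈ M, I3 a b c → ∀ d ∈ M, ∃ x y z : ℂ, d = x • a + y • b + z • c)
    (hex : ∃ A ∈ M, ∃ B ∈ M, I3 1 A B) :
    ∃ X ∈ M, ∃ Y ∈ M, I3 1 X Y ∧ Tab X Y := by
  have hs : ∀ A ∈ M, A * A ∈ M := by
    intro A hA
    have := hsq A hA A hA
    rwa [← two_smul ℂ, smul_smul, one_div, inv_mul_cancel₀ two_ne_zero, one_smul] at this
  by_cases hc : ∃ A ∈ M, I3 1 A (A*A)
  · obtain ⟨A, hA, hI⟩ := hc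
    have h3 : A * (A*A) ∈ M := by
      have := hsq A hA (A*A) (hs A hA)
      rwa [mul_assoc A A A, ← two_smul ℂ, smul_smul, one_div, inv_mul_cancel₀ two_ne_zero, one_smul] at this
    obtain ⟨x, y, z, h⟩ := hspan 1 h1 A hA _ (hs A hA) hI _ h3
    exact caseA M h1 A hA (hs A hA) hI z y x (by rw [h]; abel)
  · push Not at hc
    have quad : ∀ A ∈ M, (∀ x y : ℂ, x • (1:R) + y • A = 0 → x = 0 ∧ y = 0) →
        ∃ s t : ℂ, A * A = s • A + t • 1 := by
      intro A hA hli
      by_contra hcon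
      apply hc A hA
      intro x y z h
      have hz : z = 0 := by
        by_contra hz
        apply hcon
        refine ⟨-(z⁻¹*y), -(z⁻¹*x), ?_⟩
        have : A * A = z⁻¹ • (z • (A*A)) := by rw [smul_smul, inv_mul_cancel₀ hz, one_smul]
        rw [this, eq_neg_of_add_eq_zero_right h]; module
      subst hz
      obtain ⟨a, b⟩ := hli x y (by rw [← h]; module)
      exact ⟨a, b, rfl⟩
    have comp : ∀ (A : R) (s t : ℂ), A * A = s • A + t • 1 →
        (A - (s/2) • 1) * (A - (s/2) • 1) = (t + s^2/4) • 1 := by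
      intro A s t h
      simp only [mul_sub, sub_mul, mul_smul_comm, smul_mul_assoc, mul_one, one_mul, h]; module
    obtain ⟨A, hA, B, hB, hI⟩ := hex
    obtain ⟨s, t, hAA⟩ := quad A hA (fun x y h => by
      obtain ⟨a, b, _⟩ := hI x y 0 (by rw [← h]; module)
      exact ⟨a, b⟩)
    obtain ⟨s', t', hBB⟩ := quad B hB (fun x y h => by
      obtain ⟨a, _, b⟩ := hI x 0 y (by rw [← h]; module)
      exact ⟨a, b⟩)
    have hV := comp A s t hAA
    have hW := comp B s' t' hBB
    have hVM : A - (s/2) • 1 ∈ M := M.sub_mem hA (M.smul_mem _ h1)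
    have hWM : B - (s'/2) • 1 ∈ M := M.sub_mem hB (M.smul_mem _ h1)
    have hI' : I3 1 (A - (s/2) • 1) (B - (s'/2) • 1) := by
      intro x y z h
      obtain ⟨a, b, c⟩ := hI (x - y*(s/2) - z*(s'/2)) y z (by rw [← h]; module)
      subst b; subst c
      exact ⟨by linear_combination a, rfl, rfl⟩
    generalize A - (s/2) • (1:R) = V at *
    generalize B - (s'/2) • (1:R) = W at *
    generalize t + s^2/4 = α at *
    generalize t' + s'^2/4 = β at *
    obtain ⟨p, q, hp⟩ := quad (V + W) (M.add_mem hVM hWM) (fun x y h => by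
      obtain ⟨a, b, _⟩ := hI' x y y (by rw [← h]; module)
      exact ⟨a, b⟩)
    obtain ⟨p', q', hp'⟩ := quad (V - W) (M.sub_mem hVM hWM) (fun x y h => by
      obtain ⟨a, b, _⟩ := hI' x y (-y) (by rw [← h]; module)
      exact ⟨a, b⟩)
    have ep : (V + W) * (V + W) = (α + β) • 1 + (V * W + W * V) := by
      have : (V + W) * (V + W) = V * V + W * W + (V * W + W * V) := by noncomm_ring
      rw [this, hV, hW]; module
    have ep' : (V - W) * (V - W) = (α + β) • 1 - (V * W + W * V) := by
      have : (V - W) * (V - W) = V * V + W * W - (V * W + W * V) := by noncomm_ring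
      rw [this, hV, hW]; module
    rw [ep] at hp
    rw [ep'] at hp'
    obtain ⟨_, b, c⟩ := hI' (q + q' - 2*(α+β)) (p + p') (p - p') (by
      have : (q + q' - 2*(α+β)) • (1:R) + (p + p') • V + (p - p') • W
        = (p • (V + W) + q • 1) + (p' • (V - W) + q' • 1) - (2*(α+β)) • 1 := by module
      rw [this, ← hp, ← hp']; module)
    have hp0 : p = 0 := by linear_combination (b + c)/2
    subst hp0
    refine caseB M h1 V W hVM hWM hI' α β ((q - α - β)/2) hV hW ?_
    rw [eq_sub_of_add_eq' hp]; module

end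

end Helpers

/-- Every 3-dimensional Jordan subalgebra `L` of `(Sⁿ, •_U)` has a basis `{U, X, Y}`
for which exactly one of the six multiplication tables
1(a), 1(b), 2(a), 2(b), 3(a), 3(b) of Theorem 2.7 holds. -/
theorem stmt6 {n : ℕ} (U : Mat n) (hU : IsUnit U.det)
    (L : Submodule ℂ (Mat n)) (hsym : ∀ X ∈ L, Matrix.IsSymm X)
    (hUL : U ∈ L) (hclosed : ∀ X ∈ L, ∀ Y ∈ L, jmul U X Y ∈ L)
    (hdim : Module.finrank ℂ L = 3) :
    ∃ X ∈ L, ∃ Y ∈ L, LinearIndependent ℂ ![U, X, Y] ∧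
      Submodule.span ℂ {U, X, Y} = L ∧
      (∃! i : Fin 6,
        ![ -- 1(a)
           jmul U X X = X ∧ jmul U Y Y = Y ∧ jmul U X Y = 0,
           -- 1(b)
           jmul U X X = U ∧ jmul U Y Y = U ∧ jmul U X Y = 0,
           -- 2(a)
           jmul U X X = X ∧ jmul U Y Y = 0 ∧ jmul U X Y = 0,
           -- 2(b)
           jmul U X X = X ∧ jmul U Y Y = 0 ∧ jmul U X Y = (1 / 2 : ℂ) • Y,
           -- 3(a)
           jmul U X X = Y ∧ jmul U Y Y = 0 ∧ jmul U X Y = 0,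
           -- 3(b)
           jmul U X X = 0 ∧ jmul U Y Y = 0 ∧ jmul U X Y = 0 ] i) := by
  have hUi : U⁻¹ * U = 1 := Matrix.nonsing_inv_mul U hU
  have hUi' : U * U⁻¹ = 1 := Matrix.mul_nonsing_inv U hU
  have li_span : ∀ a ∈ L, ∀ b ∈ L, ∀ c ∈ L, I3 a b c → Submodule.span ℂ {a, b, c} = L := by
    intro a ha b hb c hc hI
    apply Submodule.eq_of_le_of_finrank_eq
    · rw [Submodule.span_le]
      rintro x (rfl | rfl | rfl) <;> assumption
    · rw [hdim]
      have := finrank_span_eq_card ((I3_iff a b c).2 hI)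
      have hr : Set.range ![a, b, c] = {a, b, c} := by
        ext x
        simp [eq_comm]
        tauto
      rw [hr] at this
      simpa using this
  let M : Submodule ℂ (Mat n) := L.comap (LinearMap.mulRight ℂ U)
  have hM : ∀ A, A ∈ M ↔ A * U ∈ L := fun A => Iff.rfl
  have inj : ∀ A : Mat n, A * U = 0 → A = 0 := by
    intro A h
    have : A * U * U⁻¹ = 0 := by rw [h, zero_mul]
    rwa [mul_assoc, hUi', mul_one] at this
  have I3U : ∀ a b c : Mat n, I3 a b c → I3 (a*U) (b*U) (c*U) := by
    intro a b c h x y z e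
    apply h
    apply inj
    rw [← e]; simp only [add_mul, smul_mul_assoc]
  have jm : ∀ A B : Mat n, jmul U (A*U) (B*U) = (1/2:ℂ) • ((A*B+B*A) * U) := by
    intro A B
    have e : ∀ A B : Mat n, A * U * U⁻¹ * (B * U) = A * B * U := by
      intro A B
      rw [mul_assoc A U, hUi', mul_one, mul_assoc]
    rw [jmul, e, e, add_mul]
  have back : ∀ X : Mat n, X * U⁻¹ * U = X := by
    intro X; rw [mul_assoc, hUi, mul_one]
  obtain ⟨X, hX, Y, hY, hI, hT⟩ := classify M (by rw [hM, one_mul]; exact hUL)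
    (by
      intro A hA B hB
      have := hclosed _ hA _ hB
      simp only [LinearMap.mulRight_apply] at this
      rw [jm] at this
      rw [hM, smul_mul_assoc]; exact this)
    (by
      intro a ha b hb c hc hI d hd
      have hs := li_span _ ha _ hb _ hc (I3U _ _ _ hI)
      have hd' : d * U ∈ Submodule.span ℂ {a*U, b*U, c*U} := by
        have := (hM d).1 hd
        rw [← hs] at this
        exact this
      rw [Submodule.mem_span_triple] at hd'
      obtain ⟨x, y, z, h⟩ := hd'
      refine ⟨x, y, z, ?_⟩
      rw [← sub_eq_zero]
      apply inj
      rw [sub_mul, ← h]; simp only [add_mul, smul_mul_assoc]; exact sub_self _)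
    (by
      have lt1 : ∀ X : Mat n, ∃ A ∈ L, A ∉ Submodule.span ℂ {U, X} := by
        intro X
        by_contra hcon
        push Not at hcon
        have h1 : Module.finrank ℂ L ≤ _ := Submodule.finrank_mono (show L ≤ Submodule.span ℂ {U, X} from hcon)
        have h2 : Module.finrank ℂ (Submodule.span ℂ ({U, X} : Set (Mat n))) ≤ 2 := by
          have := finrank_span_finset_le_card (R := ℂ) ({U, X} : Finset (Mat n))
          simp only [Finset.coe_insert, Finset.coe_singleton] at this
          exact this.trans Finset.card_le_two
        omega
      have hU0 : U ≠ 0 := by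
        rintro rfl
        have h10 : (1 : Mat n) = 0 := by rw [← hUi', zero_mul]
        obtain ⟨A, _, hA⟩ := lt1 0
        apply hA
        have : A = 0 := by rw [← mul_one A, h10, mul_zero]
        rw [this]; exact Submodule.zero_mem _
      obtain ⟨A, hA, hAn⟩ := lt1 0
      obtain ⟨B, hB, hBn⟩ := lt1 A
      refine ⟨A * U⁻¹, by rw [hM, back]; exact hA, B * U⁻¹, by rw [hM, back]; exact hB, ?_⟩
      intro x y z h
      have h' : x • U + y • A + z • B = 0 := by
        have := congrArg (· * U) h
        simpa only [add_mul, smul_mul_assoc, back, one_mul, zero_mul] using this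
      have hz : z = 0 := by
        by_contra hz
        apply hBn
        rw [Submodule.mem_span_pair]
        refine ⟨-(z⁻¹*x), -(z⁻¹*y), ?_⟩
        have : B = z⁻¹ • (z • B) := by rw [smul_smul, inv_mul_cancel₀ hz, one_smul]
        rw [this, eq_neg_of_add_eq_zero_right h']; module
      subst hz
      have hy : y = 0 := by
        by_contra hy
        apply hAn
        rw [Submodule.mem_span_pair]
        refine ⟨-(y⁻¹*x), 0, ?_⟩
        rw [zero_smul, add_zero] at h'
        have : A = y⁻¹ • (y • A) := by rw [smul_smul, inv_mul_cancel₀ hy, one_smul]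
        rw [this, eq_neg_of_add_eq_zero_right h']; module
      subst hy
      simp only [zero_smul, add_zero] at h'
      exact ⟨(smul_eq_zero.1 h').resolve_right hU0, rfl, rfl⟩)
  have hIU := I3U _ _ _ hI
  rw [one_mul] at hIU
  refine ⟨X * U, hX, Y * U, hY, (I3_iff _ _ _).2 hIU, li_span _ hUL _ hX _ hY hIU, ?_⟩
  have jXX : jmul U (X*U) (X*U) = X*X*U := by
    rw [jm, ← two_smul ℂ, smul_mul_assoc, smul_smul]; norm_num
  have jYY : jmul U (Y*U) (Y*U) = Y*Y*U := by
    rw [jm, ← two_smul ℂ, smul_mul_assoc, smul_smul]; norm_num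
  have jXY := jm X Y
  have ne : ∀ x y z : ℂ, (x ≠ 0 ∨ y ≠ 0 ∨ z ≠ 0) → x • U + y • (X*U) + z • (Y*U) ≠ 0 := by
    intro x y z hne h
    obtain ⟨a, b, c⟩ := hIU x y z h
    simp_all
  have hX0 : X*U ≠ 0 := by simpa using ne 0 1 0 (by simp)
  have hY0 : Y*U ≠ 0 := by simpa using ne 0 0 1 (by simp)
  have hU0 : U ≠ 0 := by simpa using ne 1 0 0 (by simp)
  have hXU : X*U ≠ U := by
    intro h; apply ne 1 (-1) 0 (by simp); rw [h]; module
  have hXY : X*U ≠ Y*U := by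
    intro h; apply ne 0 1 (-1) (by simp); rw [h]; module
  have hYU : Y*U ≠ U := by
    intro h; apply ne 1 0 (-1) (by simp); rw [h]; module
  have hhY : (1/2:ℂ) • (Y*U) ≠ 0 := smul_ne_zero (by norm_num) hY0
  have ex : ∃ i : Fin 6, ![
           jmul U (X*U) (X*U) = X*U ∧ jmul U (Y*U) (Y*U) = Y*U ∧ jmul U (X*U) (Y*U) = 0,
           jmul U (X*U) (X*U) = U ∧ jmul U (Y*U) (Y*U) = U ∧ jmul U (X*U) (Y*U) = 0,
           jmul U (X*U) (X*U) = X*U ∧ jmul U (Y*U) (Y*U) = 0 ∧ jmul U (X*U) (Y*U) = 0,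
           jmul U (X*U) (X*U) = X*U ∧ jmul U (Y*U) (Y*U) = 0 ∧ jmul U (X*U) (Y*U) = (1 / 2 : ℂ) • (Y*U),
           jmul U (X*U) (X*U) = Y*U ∧ jmul U (Y*U) (Y*U) = 0 ∧ jmul U (X*U) (Y*U) = 0,
           jmul U (X*U) (X*U) = 0 ∧ jmul U (Y*U) (Y*U) = 0 ∧ jmul U (X*U) (Y*U) = 0 ] i := by
    rw [jXX, jYY, jXY]
    rcases hT with ⟨a, b, c⟩ | ⟨a, b, c⟩ | ⟨a, b, c⟩ | ⟨a, b, c⟩ | ⟨a, b, c⟩ | ⟨a, b, c⟩ <;>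
      rw [a, b, c] <;> simp only [one_mul, zero_mul, smul_zero]
    · refine ⟨0, ?_, ?_, ?_⟩ <;> trivial
    · refine ⟨1, ?_, ?_, ?_⟩ <;> trivial
    · refine ⟨2, ?_, ?_, ?_⟩ <;> trivial
    · refine ⟨3, ?_, ?_, ?_⟩ <;> trivial
    · refine ⟨4, ?_, ?_, ?_⟩ <;> trivial
    · refine ⟨5, ?_, ?_, ?_⟩ <;> trivial
  obtain ⟨i, hi⟩ := ex
  refine ⟨i, hi, ?_⟩
  intro j hj
  generalize jmul U (X*U) (X*U) = P at *
  generalize jmul U (Y*U) (Y*U) = Q at *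
  generalize jmul U (X*U) (Y*U) = S at *
  generalize (1/2:ℂ) • (Y*U) = H at *
  clear jXX jYY jXY hT hI hIU ne hX hY jm back I3U inj hM li_span
  clear hclosed hsym hUL hdim
  generalize X*U = X' at *
  generalize Y*U = Y' at *
  fin_cases i <;> fin_cases j <;> first | rfl | (exfalso; obtain ⟨a, b, c⟩ := hi; obtain ⟨a', b', c'⟩ := hj; simp_all)
end
end

section
/- Let L ⊆ Sⁿ be a Jordan subalgebra of (Sⁿ, •_U) with unit U ∈ L invertible, and suppose L ≠ Sⁿ. Then the codimension of L in Sⁿ is at least n − 1, i.e., dim L ≤ n(n+1)/2 − (n − 1). -/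
open Matrix

noncomputable section

/-- The space `Sⁿ` of symmetric `n × n` complex matrices, as a submodule of all
`n × n` matrices. -/
def symmSub (n : ℕ) : Submodule ℂ (Mat n) where
  carrier := {X : Mat n | X.IsSymm}
  add_mem' := fun ha hb => ha.add hb
  zero_mem' := Matrix.isSymm_zero
  smul_mem' := fun c _ hX => hX.smul c

namespace JP

variable {ι : Type*} [Fintype ι] [DecidableEq ι]

def F (p q : ι) : Matrix ι ι ℂ := single p q 1 + single q p 1

def tri (w z : ι → ℂ) (X : Matrix ι ι ℂ) : Matrix ι ι ℂ :=
  diagonal w * X * diagonal z + diagonal z * X * diagonal w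

lemma tri_F (w z : ι → ℂ) (p q : ι) : tri w z (F p q) = (w p * z q + z p * w q) • F p q := by
  ext k l
  simp only [tri, F, Matrix.add_apply, diagonal_mul, mul_diagonal, Matrix.smul_apply,
    single_apply, smul_eq_mul]
  by_cases h1 : p = k ∧ q = l <;> by_cases h2 : q = k ∧ p = l
  · obtain ⟨rfl, rfl⟩ := h1
    obtain ⟨rfl, _⟩ := h2
    simp; ring
  · obtain ⟨rfl, rfl⟩ := h1
    rw [if_neg h2]; simp
  · obtain ⟨rfl, rfl⟩ := h2
    rw [if_neg h1]; simp; ring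
  · simp [h1, h2]

lemma tri_E (w z : ι → ℂ) (a : ι) :
    tri w z (single a a 1) = (2 * (w a * z a)) • single a a (1 : ℂ) := by
  ext k l
  simp only [tri, Matrix.add_apply, diagonal_mul, mul_diagonal, Matrix.smul_apply,
    single_apply, smul_eq_mul]
  by_cases h1 : a = k ∧ a = l
  · obtain ⟨rfl, rfl⟩ := h1
    simp; ring
  · simp [h1]

lemma tri_sum (w z v : ι → ℂ) (b : ι → Matrix ι ι ℂ) :
    tri w z (∑ a, v a • b a) = ∑ a, v a • tri w z (b a) := by
  simp [tri, Finset.mul_sum, Finset.sum_mul, Finset.sum_add_distrib]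

lemma sum_E (u : ι → ℂ) : ∑ a, u a • single a a (1 : ℂ) = diagonal u := by
  ext k l
  simp only [Matrix.sum_apply, Matrix.smul_apply, single_apply, diagonal_apply, smul_eq_mul]
  by_cases h : k = l
  · subst h; simp
  · rw [if_neg h]
    apply Finset.sum_eq_zero
    intro a _
    rw [if_neg]; simp
    rintro ⟨rfl, rfl⟩; exact h rfl

lemma count (J S : Submodule ℂ (Matrix ι ι ℂ)) (hJS : J ≤ S) (b : ι → Matrix ι ι ℂ)
    (hb : ∀ a, b a ∈ S) (a0 : ι)
    (h : ∀ v : ι → ℂ, v a0 = 0 → ∑ a, v a • b a ∈ J → v = 0) :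
    Module.finrank ℂ J + Fintype.card ι ≤ Module.finrank ℂ S + 1 := by
  let Φ : (ι → ℂ) →ₗ[ℂ] S := Fintype.linearCombination ℂ (fun a => (⟨b a, hb a⟩ : S))
  have hΦ : ∀ v, (Φ v : Matrix ι ι ℂ) = ∑ a, v a • b a := by
    intro v; simp [Φ, Fintype.linearCombination_apply]
  let Ψ : (J × (ι → ℂ)) →ₗ[ℂ] S × ℂ :=
    LinearMap.prod ((Submodule.inclusion hJS).coprod Φ)
      ((LinearMap.proj a0).comp (LinearMap.snd ℂ J (ι → ℂ)))
  have hinj : Function.Injective Ψ := by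
    rw [← LinearMap.ker_eq_bot, LinearMap.ker_eq_bot']
    rintro ⟨X, v⟩ hx
    have h1 : Submodule.inclusion hJS X + Φ v = 0 := congrArg Prod.fst hx
    have h2 : v a0 = 0 := congrArg Prod.snd hx
    have h3 : (X : Matrix ι ι ℂ) + ∑ a, v a • b a = 0 := by
      rw [← hΦ]; exact congrArg Subtype.val h1
    have h4 : v = 0 := by
      apply h v h2
      rw [← neg_eq_of_add_eq_zero_right h3]
      exact J.neg_mem X.2
    subst h4
    simp at h3
    simp [h3]
  have := LinearMap.finrank_le_finrank_of_injective hinj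
  simpa using this

section
variable (J : Submodule ℂ (Matrix ι ι ℂ)) (h1 : (1 : Matrix ι ι ℂ) ∈ J)
  (hc : ∀ X ∈ J, ∀ Y ∈ J, X * Y + Y * X ∈ J)

def R (a b : ι) : Prop := ∀ d : ι → ℂ, diagonal d ∈ J → d a = d b

include hc in
lemma diag_mul {d e : ι → ℂ} (hd : diagonal d ∈ J) (he : diagonal e ∈ J) :
    diagonal (d * e) ∈ J := by
  have := J.smul_mem (1/2 : ℂ) (hc _ hd _ he)
  convert this using 1
  ext k l
  by_cases h : k = l
  · subst h; simp; ring
  · simp [h]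

include h1 hc in
lemma ind_mem [DecidableRel (R J)] (c : ι) :
    diagonal (fun k => if R J k c then (1 : ℂ) else 0) ∈ J := by
  let D : Subalgebra ℂ (ι → ℂ) :=
    { carrier := {d | diagonal d ∈ J}
      mul_mem' := fun ha hb => diag_mul J hc ha hb
      add_mem' := fun {a b} ha hb => by
        have := J.add_mem ha hb
        rw [diagonal_add] at this
        exact this
      algebraMap_mem' := fun r => by
        have := J.smul_mem r h1
        have e : diagonal (algebraMap ℂ (ι → ℂ) r) = r • (1 : Matrix ι ι ℂ) := by
          ext k l
          by_cases h : k = l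
          · subst h; simp
          · simp [h]
        show diagonal (algebraMap ℂ (ι → ℂ) r) ∈ J
        rw [e]; exact this }
  have key : ∀ b, ∃ d ∈ D, (¬ R J b c → d b = 0) ∧ d c = 1 := by
    intro b
    by_cases hb : R J b c
    · exact ⟨1, D.one_mem, fun h => absurd hb h, rfl⟩
    · have hb' := hb
      unfold R at hb'
      push Not at hb'
      obtain ⟨d, hd, hne⟩ := hb'
      refine ⟨(d c - d b)⁻¹ • (d - algebraMap ℂ (ι → ℂ) (d b)),
        D.smul_mem (D.sub_mem hd (D.algebraMap_mem _)) _, fun _ => by simp, ?_⟩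
      have : d c - d b ≠ 0 := sub_ne_zero.mpr (Ne.symm hne)
      simp [this]
  choose d hdD hd0 hd1 using key
  have hP : (∏ b, d b) ∈ D := D.prod_mem fun b _ => hdD b
  have hP' : diagonal (∏ b, d b) ∈ J := hP
  convert hP' using 2
  ext k
  by_cases hk : R J k c
  · rw [if_pos hk, hk _ hP']
    simp [hd1]
  · rw [if_neg hk, Finset.prod_apply]
    exact (Finset.prod_eq_zero (f := fun b => d b k) (Finset.mem_univ k) (hd0 k hk)).symm

include hc in
lemma tri_mem {w z : ι → ℂ} {X : Matrix ι ι ℂ} (hw : diagonal w ∈ J) (hz : diagonal z ∈ J)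
    (hX : X ∈ J) : tri w z X ∈ J := by
  have a := hc _ (hc _ hw _ hX) _ hz
  have b := hc _ (hc _ hz _ hX) _ hw
  have c := hc _ (diag_mul J hc hw hz) _ hX
  have := J.smul_mem (1/2 : ℂ) (J.sub_mem (J.add_mem a b) (J.smul_mem (2:ℂ) c))
  have hWZ : diagonal (w * z) = diagonal w * diagonal z := by
    rw [diagonal_mul_diagonal]; rfl
  have hcomm : diagonal z * diagonal w = diagonal w * diagonal z := by
    simp [diagonal_mul_diagonal, mul_comm]
  have hcomm2 : diagonal z * (diagonal w * X) = diagonal w * (diagonal z * X) := by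
    rw [← Matrix.mul_assoc, hcomm, Matrix.mul_assoc]
  rw [hWZ] at this
  have e : tri w z X = (1/2 : ℂ) • ((2 : ℂ) • tri w z X) := by
    rw [smul_smul]; norm_num
  rw [e]
  convert this using 2
  simp only [tri, two_smul, Matrix.add_mul, Matrix.mul_add, Matrix.mul_assoc, hcomm, hcomm2]
  abel

omit [Fintype ι] in
lemma F_comm (p q : ι) : F p q = F q p := add_comm _ _

include hc in
lemma F_trans {p q s : ι} (hpq : p ≠ q) (hqs : q ≠ s) (hps : p ≠ s) (h : F p q ∈ J)
    (h' : F q s ∈ J) : F p s ∈ J := by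
  have := hc _ h _ h'
  convert this using 1
  simp [F, Matrix.add_mul, Matrix.mul_add, single_mul_single_of_ne, hpq, hqs, hps,
    hpq.symm, hqs.symm, hps.symm]

include h1 hc in
theorem core (hJ : ∀ X ∈ J, X.IsSymm) (S : Submodule ℂ (Matrix ι ι ℂ))
    (hS : ∀ X, X ∈ S ↔ X.IsSymm) (hne : J ≠ S) [Nonempty ι] :
    Module.finrank ℂ J + Fintype.card ι ≤ Module.finrank ℂ S + 1 := by
  classical
  have hJS : J ≤ S := fun X hX => (hS X).2 (hJ X hX)
  have hE : ∀ a, single a a (1 : ℂ) ∈ S := fun a => by simp [hS, IsSymm]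
  have hF : ∀ p q : ι, F p q ∈ S := fun p q => by simp [hS, IsSymm, F, add_comm]
  have Rrefl : ∀ a, R J a a := fun a d _ => rfl
  have Rsymm : ∀ {a b}, R J a b → R J b a := fun h d hd => (h d hd).symm
  have Rtrans : ∀ {a b c}, R J a b → R J b c → R J a c :=
    fun h h' d hd => (h d hd).trans (h' d hd)
  have Rne : ∀ {a b}, ¬ R J a b → a ≠ b := by
    rintro a b h rfl; exact h (Rrefl a)
  by_cases hall : ∀ a b, R J a b
  · obtain ⟨a0⟩ := ‹Nonempty ι›
    refine count J S hJS (fun a => single a a 1) hE a0 ?_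
    intro v hv hm
    rw [sum_E] at hm
    ext a
    rw [hall a a0 v hm, hv]; rfl
  push Not at hall
  obtain ⟨x1, y1, hxy1⟩ := hall
  by_cases hfull : ∀ x y, ¬ R J x y → F x y ∈ J
  · exfalso
    apply hne
    have hs : ∀ a, diagonal (Pi.single a 1 : ι → ℂ) ∈ J := by
      intro a
      obtain ⟨b, hb⟩ : ∃ b, ¬ R J a b := by
        by_contra! hcon
        exact hxy1 (Rtrans (Rsymm (hcon x1)) (hcon y1))
      have hab := Rne hb
      have hm := tri_mem J hc (ind_mem J h1 hc a) (ind_mem J h1 hc a)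
        (hc _ (hfull a b hb) _ (hfull a b hb))
      have := J.smul_mem (1/4 : ℂ) hm
      convert this using 1
      have e : F a b * F a b + F a b * F a b
          = (2 : ℂ) • single a a (1:ℂ) + (2 : ℂ) • single b b (1:ℂ) := by
        simp [F, Matrix.add_mul, Matrix.mul_add, single_mul_single_of_ne, hab, hab.symm, two_smul]
        abel
      have hb' : ¬ R J b a := fun h => hb (Rsymm h)
      rw [e]
      have e2 : ∀ w z : ι → ℂ, tri w z ((2 : ℂ) • single a a (1:ℂ) + (2 : ℂ) • single b b (1:ℂ))
        = (2:ℂ) • tri w z (single a a 1) + (2:ℂ) • tri w z (single b b 1) := by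
        intro w z
        simp only [tri, Matrix.add_mul, Matrix.mul_add, two_smul]
        abel
      rw [e2, tri_E, tri_E]
      simp only [Rrefl a, hb', if_true, if_false]
      rw [diagonal_single, smul_smul, smul_add, smul_smul]
      norm_num
    have hR : ∀ a b, R J a b → a = b := by
      intro a b h
      by_contra hab
      have := h _ (hs a)
      simp [Pi.single_apply, Ne.symm hab] at this
    have hFJ : ∀ a b, F a b ∈ J := by
      intro a b
      by_cases hab : a = b
      · subst hab
        have := J.add_mem (hs a) (hs a)
        rw [diagonal_single] at this
        exact this
      · exact hfull a b fun h => hab (hR a b h)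
    refine le_antisymm hJS fun X hX => ?_
    have hXs := (hS X).1 hX
    have : X = (1/2 : ℂ) • ∑ k, ∑ l, X k l • F k l := by
      have e1 : ∑ k, ∑ l, X k l • F k l = X + Xᵀ := by
        have := matrix_eq_sum_single X
        have h2 := congrArg transpose this
        simp only [F, smul_add, Finset.sum_add_distrib, smul_single, smul_eq_mul, mul_one]
        rw [← this]
        congr 1
        rw [h2]
        simp [transpose_sum]
      rw [e1, hXs.eq, ← two_smul ℂ X, smul_smul]
      norm_num
    rw [this]
    exact J.smul_mem _ (J.sum_mem fun k _ => J.sum_mem fun l _ => J.smul_mem _ (hFJ k l))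
  push Not at hfull
  obtain ⟨x0, y0, hxy, hFxy⟩ := hfull
  -- edges
  have edge : ∀ a, ∃ p q, ¬ R J a x0 → (R J p a ∧ ¬ R J q a ∧ (R J q x0 ∨ R J q y0) ∧
      (R J a y0 → R J q x0) ∧ F p q ∉ J) := by
    intro a
    by_cases hax : R J a x0
    · exact ⟨a, a, fun h => absurd hax h⟩
    by_cases hay : R J a y0
    · exact ⟨y0, x0, fun _ => ⟨Rsymm hay, fun h => hax (Rsymm h), Or.inl (Rrefl _),
        fun _ => Rrefl _, by rwa [F_comm]⟩⟩
    by_cases h : F a x0 ∈ J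
    · refine ⟨a, y0, fun _ => ⟨Rrefl _, fun h => hay (Rsymm h), Or.inr (Rrefl _),
        fun h => absurd h hay, fun h' => hFxy ?_⟩⟩
      rw [F_comm] at h
      exact F_trans J hc (Rne hax).symm (Rne hay) (Rne hxy) h h'
    · exact ⟨a, x0, fun _ => ⟨Rrefl _, fun h => hax (Rsymm h), Or.inl (Rrefl _),
        fun h => absurd h hay, h⟩⟩
  choose p q hpq using edge
  obtain ⟨r, hr1, hr2⟩ : ∃ r : ι → ι, (∀ a, R J (r a) a) ∧ ∀ a b, R J a b → r a = r b := by
    let s : Setoid ι := ⟨R J, Rrefl, Rsymm, Rtrans⟩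
    refine ⟨fun a => (Quotient.mk s a).out, fun a => Quotient.mk_out (s := s) a, fun a b h => ?_⟩
    have : Quotient.mk s a = Quotient.mk s b := Quotient.sound h
    simp only [this]
  refine count J S hJS (fun a => if r a = a then F (p a) (q a) else single a a 1)
    (fun a => by split_ifs; exacts [hF _ _, hE _]) (r x0) ?_
  intro v hv hm
  have hnx : ∀ a, r a = a → v a ≠ 0 → ¬ R J a x0 := by
    intro a ha hva h
    apply hva
    rw [← ha, hr2 _ _ h, hv]
  have hT : ∀ w z : ι → ℂ, tri w z (∑ a, v a • (if r a = a then F (p a) (q a) else single a a 1))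
     = ∑ a, if r a = a then (v a * (w (p a) * z (q a) + z (p a) * w (q a))) • F (p a) (q a)
        else (v a * (2 * (w a * z a))) • single a a (1:ℂ) := by
    intro w z
    rw [tri_sum]
    refine Finset.sum_congr rfl fun a _ => ?_
    split_ifs
    · rw [tri_F, smul_smul]
    · rw [tri_E, smul_smul]
  ext c
  by_contra hvc
  replace hvc : v c ≠ 0 := hvc
  by_cases hrc : r c = c
  · have hcx := hnx c hrc hvc
    obtain ⟨g1, g2, g3, g4, g5⟩ := hpq c hcx
    have hm2 := tri_mem J hc (ind_mem J h1 hc c) (ind_mem J h1 hc (q c)) hm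
    rw [hT, Finset.sum_eq_single c] at hm2
    · rw [if_pos hrc, if_pos g1, if_pos (Rrefl _), if_neg g2] at hm2
      apply g5
      have := J.smul_mem (v c)⁻¹ hm2
      rw [smul_smul] at this
      simpa [hvc] using this
    · intro a _ hac
      by_cases hra : r a = a
      · rw [if_pos hra]
        by_cases hva : v a = 0
        · simp [hva]
        have hax := hnx a hra hva
        obtain ⟨k1, k2, k3, k4, k5⟩ := hpq a hax
        have e1 : ¬ R J (p a) c := by
          intro h
          apply hac
          rw [← hra, ← hrc]
          exact hr2 _ _ (Rtrans (Rsymm k1) h)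
        have e2 : ¬ (R J (p a) (q c) ∧ R J (q a) c) := by
          rintro ⟨m1, m2⟩
          have m3 : R J a (q c) := Rtrans (Rsymm k1) m1
          rcases g3 with g | g
          · exact hax (Rtrans m3 g)
          · exact hcx (Rtrans (Rsymm m2) (k4 (Rtrans m3 g)))
        rw [if_neg e1]
        by_cases m1 : R J (p a) (q c)
        · have m2 : ¬ R J (q a) c := fun h => e2 ⟨m1, h⟩
          rw [if_neg m2]; simp
        · rw [if_neg m1]; simp
      · rw [if_neg hra]
        by_cases m1 : R J a c
        · have : ¬ R J a (q c) := fun h => g2 (Rtrans (Rsymm h) m1)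
          rw [if_neg this]; simp
        · rw [if_neg m1]; simp
    · simp
  · have hm2 := tri_mem J hc (ind_mem J h1 hc c) (ind_mem J h1 hc c) hm
    have e : ∀ a, (if r a = a then (v a * ((if R J (p a) c then (1:ℂ) else 0) *
          (if R J (q a) c then (1:ℂ) else 0) + (if R J (p a) c then (1:ℂ) else 0) *
          (if R J (q a) c then (1:ℂ) else 0))) • F (p a) (q a)
        else (v a * (2 * ((if R J a c then (1:ℂ) else 0) * (if R J a c then (1:ℂ) else 0))))
          • single a a (1:ℂ)) =
        (if r a = a then 0 else if R J a c then 2 * v a else 0) • single a a (1:ℂ) := by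
      intro a
      by_cases hra : r a = a
      · rw [if_pos hra, if_pos hra]
        by_cases hva : v a = 0
        · simp [hva]
        obtain ⟨k1, k2, k3, k4, k5⟩ := hpq a (hnx a hra hva)
        by_cases m1 : R J (p a) c
        · have : ¬ R J (q a) c := fun h => k2 (Rtrans h (Rtrans (Rsymm m1) k1))
          rw [if_neg this]; simp
        · rw [if_neg m1]; simp
      · rw [if_neg hra, if_neg hra]
        by_cases m1 : R J a c
        · simp [m1, mul_comm]
        · simp [m1]
    rw [hT, Finset.sum_congr rfl fun a _ => e a, sum_E] at hm2
    have := hr1 c _ hm2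
    have hrr : r (r c) = r c := hr2 _ _ (hr1 c)
    simp [hrr, hrc, Rrefl c] at this
    exact hvc this

end

lemma finrank_symm (n : ℕ) : Module.finrank ℂ (symmSub n) ≤ n * (n + 1) / 2 := by
  let f : (Sym2 (Fin n) → ℂ) →ₗ[ℂ] Mat n :=
    { toFun := fun g => Matrix.of fun i j => g s(i, j)
      map_add' := fun _ _ => rfl
      map_smul' := fun _ _ => rfl }
  have hle : symmSub n ≤ LinearMap.range f := by
    intro X hX
    have hX' : X.IsSymm := hX
    refine ⟨fun s => Sym2.lift ⟨fun i j => X i j, fun i j => hX'.apply j i⟩ s, ?_⟩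
    ext i j
    rfl
  have h1 := Submodule.finrank_mono hle
  have h2 := LinearMap.finrank_range_le f
  have h3 : Module.finrank ℂ (Sym2 (Fin n) → ℂ) = n * (n + 1) / 2 := by
    rw [Module.finrank_fintype_fun_eq_card, Sym2.card, Nat.choose_two_right, Fintype.card_fin]
    simp [mul_comm]
  omega

lemma exists_factor {n : ℕ} (U : Mat n) (hU : IsUnit U.det) (hs : U.IsSymm) :
    ∃ A : Mat n, U = Aᵀ * A := by
  have hsymB : ∀ M : Mat n, M.IsSymm → ∀ x y : Fin n → ℂ,
      Matrix.toLinearMap₂' ℂ M x y = Matrix.toLinearMap₂' ℂ M y x := by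
    intro M hM x y
    rw [toLinearMap₂'_apply', toLinearMap₂'_apply', dotProduct_mulVec, ← mulVec_transpose, hM.eq,
      dotProduct_comm]
  have hass : ∀ M : Mat n, M.IsSymm →
      QuadraticMap.associated (R := ℂ) M.toQuadraticForm' = Matrix.toLinearMap₂' ℂ M :=
    fun M hM => QuadraticMap.associated_left_inverse ℂ (hsymB M hM)
  have hsep : ∀ M : Mat n, M.IsSymm → M.det ≠ 0 →
      (QuadraticMap.associated (R := ℂ) M.toQuadraticForm').SeparatingLeft := by
    intro M hM hd
    rw [hass M hM]
    exact LinearMap.separatingLeft_toLinearMap₂'_iff_det_ne_zero.mpr hd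
  obtain ⟨f⟩ := QuadraticForm.equivalent_of_isAlgClosed U.toQuadraticForm'
    (1 : Mat n).toQuadraticForm' (hsep U hs hU.ne_zero) (hsep 1 isSymm_one (by simp))
  let A : Mat n := LinearMap.toMatrix' (f.toLinearEquiv : (Fin n → ℂ) →ₗ[ℂ] (Fin n → ℂ))
  have hAf : ∀ x, A *ᵥ x = f x := fun x => by
    rw [LinearMap.toMatrix'_mulVec]; rfl
  refine ⟨A, ?_⟩
  have hsA : (Aᵀ * A).IsSymm := by simp [IsSymm]
  have hQ : U.toQuadraticForm' = (Aᵀ * A).toQuadraticForm' := by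
    ext x
    rw [← f.map_app x, ← hAf]
    simp only [toQuadraticForm', LinearMap.BilinMap.toQuadraticMap_apply, toLinearMap₂'_apply',
      one_mulVec]
    rw [← mulVec_mulVec, dotProduct_mulVec x, vecMul_transpose]
  apply (Matrix.toLinearMap₂' ℂ (n := Fin n) (m := Fin n) (S₁ := ℂ) (S₂ := ℂ) (N₂ := ℂ)).injective
  rw [← hass U hs, ← hass _ hsA, hQ]

end JP

/-- A proper Jordan subalgebra `L` of `(Sⁿ, •_U)` has codimension at least `n - 1`
in `Sⁿ`, i.e. `dim L ≤ n(n+1)/2 - (n-1)`. -/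
theorem stmt8 {n : ℕ} (U : Mat n) (hU : IsUnit U.det)
    (L : Submodule ℂ (Mat n)) (hLsub : L ≤ symmSub n)
    (hUL : U ∈ L) (hclosed : ∀ X ∈ L, ∀ Y ∈ L, jmul U X Y ∈ L)
    (hproper : L ≠ symmSub n) :
    Module.finrank ℂ L ≤ n * (n + 1) / 2 - (n - 1) := by
  have hdim := JP.finrank_symm n
  rcases Nat.eq_zero_or_pos n with h0 | hpos
  · subst h0
    have := Submodule.finrank_mono hLsub
    omega
  obtain ⟨A, hA⟩ := JP.exists_factor U hU (hLsub hUL)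
  have hAdet : IsUnit A.det := by
    rw [hA, det_mul, det_transpose] at hU
    exact isUnit_of_mul_isUnit_left hU
  have hAt : IsUnit (Aᵀ).det := by rwa [det_transpose]
  let φ : Mat n ≃ₗ[ℂ] Mat n :=
    { toFun := fun X => Aᵀ * X * A
      invFun := fun X => Aᵀ⁻¹ * X * A⁻¹
      map_add' := fun X Y => by simp [Matrix.mul_add, Matrix.add_mul]
      map_smul' := fun c X => by simp
      left_inv := fun X => by
        simp only [Matrix.mul_assoc, mul_nonsing_inv _ hAdet, Matrix.mul_one]
        rw [← Matrix.mul_assoc, nonsing_inv_mul _ hAt, Matrix.one_mul]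
      right_inv := fun X => by
        simp only [Matrix.mul_assoc, nonsing_inv_mul _ hAdet, Matrix.mul_one]
        rw [← Matrix.mul_assoc, mul_nonsing_inv _ hAt, Matrix.one_mul] }
  have hφ : ∀ X, φ X = Aᵀ * X * A := fun _ => rfl
  have hφi : ∀ X, φ.symm X = Aᵀ⁻¹ * X * A⁻¹ := fun _ => rfl
  have hφs : ∀ X : Mat n, (φ X).IsSymm ↔ X.IsSymm := by
    intro X
    constructor
    · intro h
      rw [← φ.symm_apply_apply X, hφi]
      simp only [IsSymm, transpose_mul, transpose_nonsing_inv, transpose_transpose, h.eq,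
        Matrix.mul_assoc]
    · intro h
      rw [hφ]
      simp only [IsSymm, transpose_mul, transpose_transpose, h.eq, Matrix.mul_assoc]
  let J : Submodule ℂ (Mat n) := L.comap φ.toLinearMap
  have hJmem : ∀ X, X ∈ J ↔ φ X ∈ L := fun _ => Iff.rfl
  have hmap : J.map φ.toLinearMap = L := Submodule.map_comap_eq_of_surjective φ.surjective L
  have hfr : Module.finrank ℂ J = Module.finrank ℂ L := by
    rw [← hmap]; exact (LinearEquiv.finrank_map_eq φ J).symm
  have : Nonempty (Fin n) := ⟨⟨0, hpos⟩⟩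
  have main : Module.finrank ℂ J + Fintype.card (Fin n) ≤ Module.finrank ℂ (symmSub n) + 1 := JP.core J (by rw [hJmem, hφ, Matrix.mul_one, ← hA]; exact hUL)
    (by
      intro X hX Y hY
      have := L.smul_mem (2:ℂ) (hclosed _ hX _ hY)
      rw [hJmem]
      convert this using 1
      have hUi : A * U⁻¹ * Aᵀ = 1 := by
        rw [hA, Matrix.mul_inv_rev, ← Matrix.mul_assoc, mul_nonsing_inv _ hAdet, Matrix.one_mul,
          nonsing_inv_mul _ hAt]
      have e : ∀ X Y : Mat n, φ X * U⁻¹ * φ Y = φ (X * Y) := by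
        intro X Y
        calc φ X * U⁻¹ * φ Y = Aᵀ * X * (A * U⁻¹ * Aᵀ) * Y * A := by
              simp only [hφ, Matrix.mul_assoc]
          _ = _ := by rw [hUi, hφ]; simp only [Matrix.mul_assoc, Matrix.one_mul]
      show φ (X * Y + Y * X) = (2:ℂ) • jmul U (φ X) (φ Y)
      rw [jmul, e, e, map_add, smul_smul]
      norm_num)
    (fun X hX => (hφs X).1 (hLsub hX)) (symmSub n) (fun X => Iff.rfl)
    (by
      intro h
      apply hproper
      rw [← hmap, h]
      ext X
      constructor
      · rintro ⟨Y, hY, rfl⟩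
        exact (hφs Y).2 hY
      · intro hX
        refine ⟨φ.symm X, (hφs _).1 ?_, φ.apply_symm_apply X⟩
        rw [φ.apply_symm_apply]; exact hX)
  rw [hfr, Fintype.card_fin] at main
  omega
end
end

section
/- Let L ⊆ Sⁿ be a Jordan subalgebra of (Sⁿ, •_U) with unit U ∈ L invertible, and suppose U is primitive in L, i.e., there do not exist nonzero X₁, X₂ ∈ L with X₁ •_U X₁ = X₁, X₂ •_U X₂ = X₂, X₁ •_U X₂ = 0, and X₁ + X₂ = U. Then there exists an invertible P ∈ GL(n, ℂ) such that P L Pᵀ = ℂ·Jₙ ⊕ L′, where Jₙ is the n×n matrix with ones on the antidiagonal and zeros elsewhere, and L′ is a linear subspace of Sⁿ all of whose elements A satisfy A_{ij} = 0 whenever i + j ≥ n + 1 (upper anti-triangular matrices). -/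
open Matrix

noncomputable section

/-- Congruence by `P`, i.e. `X ↦ P X Pᵀ`, as a linear map. -/
def congMap {n : ℕ} (P : Mat n) : Mat n →ₗ[ℂ] Mat n where
  toFun X := P * X * Pᵀ
  map_add' := by intros; simp [Matrix.mul_add, Matrix.add_mul]
  map_smul' := by intros; simp [Matrix.mul_smul, Matrix.smul_mul]

/-- `Jₙ`, the `n × n` matrix with ones on the antidiagonal and zeros elsewhere
(`0`-indexed: entry `(i,j)` is `1` iff `i + j = n - 1`). -/
def Jmat (n : ℕ) : Mat n :=
  Matrix.of fun i j => if (i : ℕ) + (j : ℕ) = n - 1 then 1 else 0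


theorem sml {E : Type*} [Ring E] [Algebra ℂ E] {K b c : Submodule ℂ E} (h : K ≤ b) :
    K * c ≤ b * c := mul_le_mul' h le_rfl

theorem smr {E : Type*} [Ring E] [Algebra ℂ E] {K b c : Submodule ℂ E} (h : K ≤ b) :
    c * K ≤ c * b := mul_le_mul' le_rfl h

theorem nil_step {E : Type*} [Ring E] [Algebra ℂ E] (K b : Submodule ℂ E) (m r : ℕ)
    (hK : K ^ m = ⊥) (hb : b ^ r = ⊥) (h : K * b ≤ b * K + K) : ∃ M, (K + b) ^ M = ⊥ := by
  set c : Submodule ℂ E := 1 + b with hc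
  have hKc : K * c ≤ c * K := by
    rw [hc, mul_add, add_mul, mul_one, one_mul]
    exact sup_le le_sup_left (h.trans (by rw [add_comm]))
  have h1c : (1 : Submodule ℂ E) ≤ c := le_sup_left
  have hbc : b ≤ c := le_sup_right
  set C : Submodule ℂ E := ⨆ i : ℕ, c ^ i with hC
  have h1C : (1 : Submodule ℂ E) ≤ C := by
    have := le_iSup (fun i : ℕ => c ^ i) 0
    simpa using this
  have hbC : b * C ≤ C := by
    refine (sml hbc).trans ?_
    rw [hC, Submodule.mul_iSup]
    refine iSup_le fun i => ?_
    rw [← pow_succ']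
    exact le_iSup (fun i : ℕ => c ^ i) (i+1)
  have hKci : ∀ i : ℕ, K * c ^ i ≤ c ^ i * K := by
    intro i
    induction i with
    | zero => simp
    | succ i ih =>
      calc K * c ^ (i+1) = (K * c ^ i) * c := by rw [pow_succ, mul_assoc]
        _ ≤ (c ^ i * K) * c := sml ih
        _ = c ^ i * (K * c) := mul_assoc _ _ _
        _ ≤ c ^ i * (c * K) := smr hKc
        _ = c ^ (i+1) * K := by rw [pow_succ, mul_assoc]
  have hKC : K * C ≤ C * K := by
    rw [hC, Submodule.mul_iSup, Submodule.iSup_mul]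
    exact iSup_mono hKci
  clear_value C c
  obtain ⟨I, hI⟩ : ∃ I : ℕ → Submodule ℂ E, ∀ j, I j = C * (K ^ j * ⊤) := ⟨_, fun _ => rfl⟩
  have hIs : ∀ j, I (j+1) ≤ I j := by
    intro j
    simp only [hI]
    refine smr ?_
    rw [pow_succ, mul_assoc]
    exact smr le_top
  have hKI : ∀ j, K * I j ≤ I (j+1) := by
    intro j
    rw [hI, hI]
    calc K * (C * (K ^ j * ⊤)) = (K * C) * (K ^ j * ⊤) := (mul_assoc _ _ _).symm
      _ ≤ (C * K) * (K ^ j * ⊤) := sml hKC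
      _ = C * (K ^ (j+1) * ⊤) := by rw [pow_succ', mul_assoc, mul_assoc]
  have hbI : ∀ j, b * I j ≤ I j := by
    intro j
    rw [hI]
    calc b * (C * (K ^ j * ⊤)) = (b * C) * (K ^ j * ⊤) := (mul_assoc _ _ _).symm
      _ ≤ C * (K ^ j * ⊤) := sml hbC
  have hbiI : ∀ i j, b ^ i * I j ≤ I j := by
    intro i j
    induction i with
    | zero => simp
    | succ i ih =>
      rw [pow_succ', mul_assoc]
      exact (smr ih).trans (hbI j)
  have key : ∀ j i, (K + b) ^ i * I j ≤ b ^ i * I j + I (j+1) := by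
    intro j i
    induction i with
    | zero => simp
    | succ i ih =>
      rw [pow_succ', mul_assoc]
      refine (smr ih).trans ?_
      rw [add_mul, mul_add, mul_add, ← mul_assoc b, ← pow_succ']
      refine sup_le (sup_le ?_ ?_) (sup_le ?_ ?_)
      · exact ((smr (hbiI i j)).trans (hKI j)).trans le_sup_right
      · exact ((hKI _).trans (hIs _)).trans le_sup_right
      · exact le_sup_left
      · exact (hbI _).trans le_sup_right
  have key2 : ∀ j, (K + b) ^ (r * j) * I 0 ≤ I j := by
    intro j
    induction j with
    | zero => simp
    | succ j ih =>
      rw [Nat.mul_succ, add_comm (r * j) r, pow_add, mul_assoc]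
      refine (smr ih).trans ((key j r).trans ?_)
      rw [hb]
      simp
  refine ⟨r * m, ?_⟩
  rw [eq_bot_iff]
  have h10 : (1 : Submodule ℂ E) ≤ I 0 := by
    simp only [hI, pow_zero, one_mul]
    calc (1 : Submodule ℂ E) = 1 * 1 := (mul_one _).symm
      _ ≤ C * ⊤ := mul_le_mul' h1C le_top
  calc (K + b) ^ (r * m) = (K + b) ^ (r * m) * 1 := (mul_one _).symm
    _ ≤ (K + b) ^ (r * m) * I 0 := smr h10
    _ ≤ I m := key2 m
    _ = ⊥ := by simp [hI, hK]

theorem jacobson {E : Type*} [Ring E] [Algebra ℂ E] [Module.Finite ℂ E] (N : Submodule ℂ E)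
    (hN : ∀ A ∈ N, ∀ B ∈ N, A * B + B * A ∈ N) (hnil : ∀ A ∈ N, IsNilpotent A) :
    ∃ m, N ^ m = ⊥ := by
  obtain ⟨K, ⟨hKN, m, hm⟩, hmax⟩ := WellFounded.has_min
    (wellFounded_gt : WellFounded ((· > ·) : Submodule ℂ E → Submodule ℂ E → Prop))
    {K : Submodule ℂ E | K ≤ N ∧ ∃ m, K ^ m = ⊥} ⟨⊥, bot_le, 1, by simp⟩
  have hmax' : ∀ K' : Submodule ℂ E, K ≤ K' → K' ≤ N → (∃ m, K' ^ m = ⊥) → K' ≤ K := by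
    intro K' h1 h2 h3
    have := hmax K' ⟨h2, h3⟩
    by_contra hcon
    exact this (lt_of_le_not_ge h1 hcon)
  have hKJ : ∀ A ∈ K, ∀ B ∈ K, A * B + B * A ∈ K := by
    intro A hA B hB
    have h1 : N ⊓ (K + K * K) ≤ K := by
      apply hmax' _ (le_inf hKN le_sup_left) inf_le_left
      refine ⟨m, ?_⟩
      rw [eq_bot_iff]
      refine (pow_le_pow_left₀ bot_le inf_le_right m).trans ?_
      have : K ⊔ K * K = K * (1 + K) := by rw [mul_add, mul_one]; rfl
      rw [this, Commute.mul_pow, hm]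
      · simp
      · exact (Commute.one_right K).add_right (Commute.refl K)
    apply h1
    refine ⟨hN A (hKN hA) B (hKN hB), ?_⟩
    exact Submodule.mem_sup_right (add_mem (Submodule.mul_mem_mul hA hB) (Submodule.mul_mem_mul hB hA))
  by_cases hEq : N ≤ K
  · exact ⟨m, by rw [le_antisymm hEq hKN]; exact hm⟩
  exfalso
  have hB : ∃ X ∈ N, X ∉ K ∧ ∀ A ∈ K, A * X + X * A ∈ K := by
    by_contra hcon
    push Not at hcon
    have hQ : ∀ i : ℕ, ∃ X ∈ N, X ∉ K ∧
        X ∈ ⨆ p : {p : ℕ × ℕ // p.1 + p.2 = i}, K ^ p.1.1 * (N * K ^ p.1.2) := by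
      intro i
      induction i with
      | zero =>
        obtain ⟨X, hX, hXK⟩ := Set.not_subset.1 hEq
        refine ⟨X, hX, hXK, ?_⟩
        refine Submodule.mem_iSup_of_mem ⟨(0, 0), rfl⟩ ?_
        simpa using hX
      | succ i ih =>
        obtain ⟨X, hX, hXK, hXi⟩ := ih
        obtain ⟨A, hA, hAX⟩ := hcon X hX hXK
        refine ⟨_, hN A (hKN hA) X hX, hAX, ?_⟩
        have : (⨆ p : {p : ℕ × ℕ // p.1 + p.2 = i}, K ^ p.1.1 * (N * K ^ p.1.2)) ≤
          (⨆ p : {p : ℕ × ℕ // p.1 + p.2 = i + 1}, K ^ p.1.1 * (N * K ^ p.1.2)).comap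
            (LinearMap.mulLeft ℂ A + LinearMap.mulRight ℂ A) := by
          refine iSup_le ?_
          rintro ⟨⟨p, q⟩, hpq⟩ Y hY
          simp only at hY hpq
          simp only [Submodule.mem_comap, LinearMap.add_apply, LinearMap.mulLeft_apply,
            LinearMap.mulRight_apply]
          refine add_mem ?_ ?_
          · refine Submodule.mem_iSup_of_mem ⟨(p+1, q), by simp; omega⟩ ?_
            simp only
            rw [pow_succ', mul_assoc]
            exact Submodule.mul_mem_mul hA hY
          · refine Submodule.mem_iSup_of_mem ⟨(p, q+1), by simp; omega⟩ ?_
            simp only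
            rw [pow_succ, ← mul_assoc N, ← mul_assoc]
            exact Submodule.mul_mem_mul hY hA
        exact this hXi
    obtain ⟨X, -, hXK, hX⟩ := hQ (m + m)
    apply hXK
    have : (⨆ p : {p : ℕ × ℕ // p.1 + p.2 = m + m}, K ^ p.1.1 * (N * K ^ p.1.2)) ≤ ⊥ := by
      refine iSup_le ?_
      rintro ⟨⟨p, q⟩, hpq⟩
      simp only at hpq ⊢
      rcases le_total m p with h | h
      · obtain ⟨k, rfl⟩ := Nat.exists_eq_add_of_le h
        simp [pow_add, hm]
      · obtain ⟨k, rfl⟩ := Nat.exists_eq_add_of_le (show m ≤ q by omega)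
        simp [pow_add, hm]
    have h0 : X = 0 := by simpa using this hX
    rw [h0]; exact zero_mem _
  obtain ⟨X, hXN, hXK, hXA⟩ := hB
  obtain ⟨r, hr⟩ := hnil X hXN
  have := nil_step K (Submodule.span ℂ {X}) m r hm (by rw [Submodule.span_pow]; simp [hr]) (by
    rw [Submodule.mul_le]
    intro A hA Y hY
    obtain ⟨c, rfl⟩ := Submodule.mem_span_singleton.1 hY
    have : A * c • X = (c • X) * (-A) + c • (A * X + X * A) := by
      simp [smul_add]
    rw [this]
    exact Submodule.add_mem_sup (Submodule.mul_mem_mul hY (neg_mem hA))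
      (K.smul_mem _ (hXA A hA)))
  have h2 := hmax' _ (le_sup_left : K ≤ K + Submodule.span ℂ {X})
    (sup_le hKN (by simpa using hXN)) this
  exact hXK (h2 (Submodule.mem_sup_right (Submodule.mem_span_singleton_self X)))

theorem jacobson' {E : Type*} [Ring E] [Algebra ℂ E] [Module.Finite ℂ E] [Nontrivial E]
    (N : Submodule ℂ E)
    (hN : ∀ A ∈ N, ∀ B ∈ N, A * B + B * A ∈ N) (hnil : ∀ A ∈ N, IsNilpotent A) :
    ∃ T : E, T ≠ 0 ∧ (∀ A ∈ N, A * T = 0) ∧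
      (N = ⊥ ∨ T ∈ Submodule.span ℂ {X | ∃ A ∈ N, ∃ S, X = A * S}) := by
  classical
  have hex := jacobson N hN hnil
  obtain ⟨m, hm0, hmin⟩ : ∃ m, N ^ m = ⊥ ∧ ∀ k < m, N ^ k ≠ ⊥ :=
    ⟨Nat.find hex, Nat.find_spec hex, fun k hk => Nat.find_min hex hk⟩
  match m, hm0, hmin with
  | 0, h0, _ =>
    exfalso
    rw [pow_zero] at h0
    have : (1 : E) ∈ (1 : Submodule ℂ E) := Submodule.one_le.1 le_rfl
    rw [h0, Submodule.mem_bot] at this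
    exact one_ne_zero this
  | 1, h0, _ =>
    rw [pow_one] at h0
    refine ⟨1, one_ne_zero, ?_, Or.inl h0⟩
    intro A hA
    rw [h0, Submodule.mem_bot] at hA
    simp [hA]
  | k+2, h0, hmin =>
    obtain ⟨T, hT, hT0⟩ := Submodule.exists_mem_ne_zero_of_ne_bot (hmin (k+1) (by omega))
    refine ⟨T, hT0, ?_, Or.inr ?_⟩
    · intro A hA
      have : A * T ∈ N ^ (k+2) := by
        rw [pow_succ']; exact Submodule.mul_mem_mul hA hT
      rwa [h0, Submodule.mem_bot] at this
    · rw [pow_succ'] at hT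
      refine Submodule.mul_induction_on hT ?_ ?_
      · intro A hA S _
        exact Submodule.subset_span ⟨A, hA, S, rfl⟩
      · intro x y hx hy
        exact add_mem hx hy

theorem ck {V : Type*} [AddCommGroup V] [Module ℂ V] [FiniteDimensional ℂ V] [Nontrivial V]
    (B : V →ₗ[ℂ] V →ₗ[ℂ] ℂ) (hB : ∀ x y, B x y = B y x)
    (N : Submodule ℂ (Module.End ℂ V)) (hsa : ∀ A ∈ N, ∀ x y, B (A x) y = B x (A y))
    (hN : ∀ A ∈ N, ∀ B ∈ N, A * B + B * A ∈ N) (hnil : ∀ A ∈ N, IsNilpotent A) :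
    ∃ v : V, v ≠ 0 ∧ (∀ A ∈ N, A v = 0) ∧ (2 ≤ Module.finrank ℂ V → B v v = 0) := by
  obtain ⟨T, hT0, hTA, h0 | hT⟩ := jacobson' N hN hnil
  · have hz : ∀ A ∈ N, ∀ v : V, A v = 0 := by
      intro A hA v
      rw [h0, Submodule.mem_bot] at hA
      simp [hA]
    by_cases h2 : 2 ≤ Module.finrank ℂ V
    · obtain ⟨y, hy⟩ := exists_ne (0 : V)
      have : ∃ x : V, x ∉ Submodule.span ℂ {y} := by
        by_contra hcon
        push Not at hcon
        have h1 : Submodule.span ℂ {y} = ⊤ := by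
          rw [eq_top_iff]; exact fun x _ => hcon x
        have := finrank_span_singleton (K := ℂ) hy
        rw [h1, finrank_top] at this
        omega
      obtain ⟨x, hx⟩ := this
      by_cases hyy : B y y = 0
      · exact ⟨y, hy, fun A hA => hz A hA y, fun _ => hyy⟩
      · obtain ⟨t, ht⟩ := exists_quadratic_eq_zero (b := 2 * B x y) (c := B x x) hyy
          (IsAlgClosed.exists_eq_mul_self _)
        refine ⟨x + t • y, ?_, fun A hA => hz A hA _, fun _ => ?_⟩
        · intro h
          apply hx
          have : x = (-t) • y := by rw [neg_smul]; exact eq_neg_of_add_eq_zero_left h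
          rw [this]
          exact Submodule.smul_mem _ _ (Submodule.mem_span_singleton_self y)
        · simp only [map_add, map_smul, LinearMap.add_apply, LinearMap.smul_apply, smul_eq_mul]
          rw [hB y x]
          linear_combination ht
    · obtain ⟨y, hy⟩ := exists_ne (0 : V)
      exact ⟨y, hy, fun A hA => hz A hA y, fun h => absurd h h2⟩
  · obtain ⟨u, hu⟩ : ∃ u, T u ≠ 0 := by
      by_contra hcon
      push Not at hcon
      exact hT0 (LinearMap.ext hcon)
    have hker : ∀ A ∈ N, A (T u) = 0 := by
      intro A hA
      exact LinearMap.congr_fun (hTA A hA) u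
    refine ⟨T u, hu, hker, fun _ => ?_⟩
    have gen : Submodule.span ℂ {X | ∃ A ∈ N, ∃ S, X = A * S} ≤
        LinearMap.ker (B (T u) ∘ₗ LinearMap.applyₗ u) := by
      rw [Submodule.span_le]
      rintro _ ⟨A, hA, S, rfl⟩
      change B (T u) (A (S u)) = 0
      rw [← hsa A hA, hker A hA]
      simp
    exact gen hT

theorem flag (n : ℕ) : ∀ (V : Type) [AddCommGroup V] [Module ℂ V] [FiniteDimensional ℂ V]
    (_ : Module.finrank ℂ V = n)
    (B : V →ₗ[ℂ] V →ₗ[ℂ] ℂ) (_ : ∀ x y, B x y = B y x) (_ : ∀ x, (∀ y, B x y = 0) → x = 0)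
    (N : Submodule ℂ (Module.End ℂ V)) (_ : ∀ A ∈ N, ∀ x y, B (A x) y = B x (A y))
    (_ : ∀ A ∈ N, ∀ B ∈ N, A * B + B * A ∈ N) (_ : ∀ A ∈ N, IsNilpotent A),
    ∃ b : ℕ → V, (∀ i j, i < n → j < n → B (b i) (b j) = if i + j + 1 = n then 1 else 0) ∧
      ∀ A ∈ N, ∀ i j, i < n → j < n → n ≤ i + j + 1 → B (b i) (A (b j)) = 0 := by
  induction n using Nat.strong_induction_on with
  | _ n ih =>
  intro V _ _ _ hn B hB hnd N hsa hN hnil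
  match n, ih, hn with
  | 0, _, _ => exact ⟨fun _ => 0, by simp, by simp⟩
  | 1, _, hn =>
    have : Nontrivial V := Module.nontrivial_of_finrank_pos (R := ℂ) (by omega)
    obtain ⟨v, hv, hNv, -⟩ := ck B hB N hsa hN hnil
    have hvv : B v v ≠ 0 := by
      intro h
      apply hv
      apply hnd
      intro y
      obtain ⟨c, rfl⟩ := (finrank_eq_one_iff_of_nonzero' v hv).1 hn y
      simp [h]
    obtain ⟨z, hz⟩ := IsAlgClosed.exists_eq_mul_self (B v v)
    have hz0 : z ≠ 0 := by rintro rfl; simp at hz; exact hvv hz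
    refine ⟨fun _ => z⁻¹ • v, ?_, ?_⟩
    · intro i j hi hj
      rw [if_pos (by omega)]
      simp [hz]
      field_simp
    · intro A hA i j _ _ _
      simp [hNv A hA]
  | n+2, ih, hn =>
    have : Nontrivial V := Module.nontrivial_of_finrank_pos (R := ℂ) (by omega)
    obtain ⟨v, hv, hNv, hvv⟩ := ck B hB N hsa hN hnil
    replace hvv := hvv (by omega)
    obtain ⟨w, hvw, hww⟩ : ∃ w, B v w = 1 ∧ B w w = 0 := by
      have : ∃ u, B v u ≠ 0 := by
        by_contra hcon
        push Not at hcon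
        exact hv (hnd v hcon)
      obtain ⟨u, hu⟩ := this
      set u' := (B v u)⁻¹ • u with hu'
      have h1 : B v u' = 1 := by simp [hu', hu]
      refine ⟨u' - (B u' u' / 2) • v, ?_, ?_⟩
      · simp [h1, hvv]
      · simp [h1, hvv, hB u' v]
        ring
    have hwv : B w v = 1 := by rw [hB, hvw]
    let W : Submodule ℂ V := LinearMap.ker (B v) ⊓ LinearMap.ker (B w)
    have hWv : ∀ x : W, B v x = 0 := fun x => x.2.1
    have hWw : ∀ x : W, B w x = 0 := fun x => x.2.2
    let π0 : V →ₗ[ℂ] V := LinearMap.id - (B w).smulRight v - (B v).smulRight w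
    have hπ0 : ∀ x, π0 x = x - B w x • v - B v x • w := fun x => rfl
    let π : V →ₗ[ℂ] W := π0.codRestrict W (by
      intro x
      refine ⟨?_, ?_⟩
      · simp [hπ0, hvv, hvw]
      · simp [hπ0, hww, hwv])
    have hπ : ∀ x, (π x : V) = x - B w x • v - B v x • w := fun x => rfl
    have hπW : ∀ x : W, π x = x := by
      intro x; ext; simp [hπ, hWv, hWw]
    have hπv : π v = 0 := by ext; simp [hπ, hvv, hwv]
    have hWfin : Module.finrank ℂ W = n := by
      have e : V ≃ₗ[ℂ] W × ℂ × ℂ := 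
        { toFun := fun x => (π x, B w x, B v x)
          map_add' := by intro x y; simp
          map_smul' := by intro x y; simp
          invFun := fun p => p.1 + p.2.1 • v + p.2.2 • w
          left_inv := by intro x; simp only [hπ]; abel
          right_inv := by
            rintro ⟨p, a, c⟩
            have hπw : π w = 0 := by ext; simp [hπ, hww, hvw]
            simp [hπW, hπv, hπw, hvv, hvw, hwv, hww, hWv, hWw] }
      have := e.finrank_eq
      simp at this
      omega
    let comp : Module.End ℂ V →ₗ[ℂ] Module.End ℂ W :=
      { toFun := fun A => π ∘ₗ A ∘ₗ W.subtype
        map_add' := by intros; ext; simp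
        map_smul' := by intros; ext; simp }
    have hcomp : ∀ A x, comp A x = π (A x) := fun A x => rfl
    have hcompA : ∀ A ∈ N, ∀ x : W, A x = (comp A x : V) + B w (A x) • v := by
      intro A hA x
      rw [hcomp, hπ, ← hsa A hA v, hNv A hA]
      simp
    have hcompmul : ∀ A ∈ N, ∀ C ∈ N, comp A * comp C = comp (A * C) := by
      intro A hA C hC
      refine LinearMap.ext fun x => ?_
      rw [Module.End.mul_apply, hcomp, hcomp (A * C), Module.End.mul_apply, hcompA C hC x,
        map_add, map_smul, hNv A hA]
      simp
    have hNpow : ∀ A ∈ N, ∀ k, ∀ x : W, ∃ c : ℂ, (A ^ k) (x : V) = ((comp A ^ k) x : W) + c • v := by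
      intro A hA k x
      induction k with
      | zero => exact ⟨0, by simp⟩
      | succ k ihk =>
        obtain ⟨c, hc⟩ := ihk
        refine ⟨B w (A ((comp A ^ k) x : W)), ?_⟩
        rw [pow_succ', pow_succ', Module.End.mul_apply, Module.End.mul_apply, hc, map_add, map_smul,
          hNv A hA, smul_zero, add_zero]
        exact hcompA A hA _
    have hBW : ∀ (x : W) y, B x (π y) = B x y := by
      intro x y
      rw [hπ]
      simp [hB x v, hB x w, hWv, hWw]
    obtain ⟨b', hb1, hb2⟩ := ih n (by omega) W hWfin (B.compl₁₂ W.subtype W.subtype)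
      (fun x y => hB x y)
      (by
        intro x hx
        have : (x : V) = 0 := by
          apply hnd
          intro y
          rw [← hBW]
          exact hx (π y)
        exact Subtype.ext this)
      (N.map comp)
      (by
        rintro _ ⟨A, hA, rfl⟩ x y
        change B (π (A x)) y = B x (π (A y))
        rw [hBW, hB, hBW, hB, hsa A hA])
      (by
        rintro _ ⟨A, hA, rfl⟩ _ ⟨C, hC, rfl⟩
        rw [hcompmul A hA C hC, hcompmul C hC A hA, ← map_add]
        exact ⟨_, hN A hA C hC, rfl⟩)
      (by
        rintro _ ⟨A, hA, rfl⟩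
        obtain ⟨k, hk⟩ := hnil A hA
        refine ⟨k, LinearMap.ext fun x => ?_⟩
        obtain ⟨c, hc⟩ := hNpow A hA k x
        have := congrArg π hc
        rw [hk] at this
        rw [map_add, map_smul, hπv, hπW] at this
        simpa using this.symm)
    let b : ℕ → V := fun i => match i with
      | 0 => w
      | i+1 => if i = n then v else b' i
    have hb0 : b 0 = w := rfl
    have hbn : b (n+1) = v := by simp [b]
    have hbi : ∀ i, i < n → b (i+1) = b' i := by
      intro i hi
      simp [b, hi.ne]
    have hcases : ∀ i, i < n + 2 → i = 0 ∨ i = n + 1 ∨ ∃ k, k < n ∧ i = k + 1 := by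
      intro i hi
      rcases i with _ | i
      · simp
      · by_cases h : i = n
        · simp [h]
        · exact Or.inr (Or.inr ⟨i, by omega, rfl⟩)
    have hWv' : ∀ x : W, B x v = 0 := fun x => by rw [hB, hWv]
    have hWw' : ∀ x : W, B x w = 0 := fun x => by rw [hB, hWw]
    refine ⟨b, ?_, ?_⟩
    · intro i j hi hj
      rcases hcases i hi with rfl | rfl | ⟨k, hk, rfl⟩ <;>
      rcases hcases j hj with rfl | rfl | ⟨l, hl, rfl⟩
      · rw [hb0, hww, if_neg (by omega)]
      · rw [hb0, hbn, hwv, if_pos (by omega)]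
      · rw [hb0, hbi l hl, hWw, if_neg (by omega)]
      · rw [hb0, hbn, hvw, if_pos (by omega)]
      · rw [hbn, hvv, if_neg (by omega)]
      · rw [hbn, hbi l hl, hWv, if_neg (by omega)]
      · rw [hb0, hbi k hk, hWw', if_neg (by omega)]
      · rw [hbn, hbi k hk, hWv', if_neg (by omega)]
      · rw [hbi k hk, hbi l hl]
        refine (hb1 k l hk hl).trans ?_
        congr 1
        exact propext (by omega)
    · intro A hA i j hi hj hij
      rcases hcases j hj with rfl | rfl | ⟨l, hl, rfl⟩
      · have : i = n + 1 := by omega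
        rw [this, hbn, ← hsa A hA, hNv A hA]; simp
      · rw [hbn, hNv A hA]; simp
      · rcases hcases i hi with rfl | rfl | ⟨k, hk, rfl⟩
        · omega
        · rw [hbn, ← hsa A hA, hNv A hA]; simp
        · rw [hbi k hk, hbi l hl, ← hBW]
          exact hb2 (comp A) ⟨A, hA, rfl⟩ k l hk hl (by omega)

open Polynomial in
theorem fitting {E : Type*} [Ring E] [Algebra ℂ E] [Module.Finite ℂ E]
    (M : Submodule ℂ E) (h1 : (1 : E) ∈ M) (hM : ∀ A ∈ M, ∀ B ∈ M, A * B + B * A ∈ M)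
    (hid : ∀ e ∈ M, e * e = e → e = 0 ∨ e = 1) (A : E) (hA : A ∈ M) (hns : ¬ IsUnit A) :
    IsNilpotent A := by
  have hpow : ∀ k : ℕ, A ^ k ∈ M := by
    intro k
    induction k with
    | zero => simpa using h1
    | succ k ih =>
      have h := M.smul_mem (1/2 : ℂ) (hM A hA _ ih)
      rw [← pow_succ, ← pow_succ', ← two_smul ℂ, smul_smul] at h
      simpa using h
  have hpoly : ∀ p : ℂ[X], aeval A p ∈ M := by
    intro p
    rw [aeval_eq_sum_range]
    exact Submodule.sum_mem _ fun i _ => M.smul_mem _ (hpow i)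
  have hint : IsIntegral ℂ A := Algebra.IsIntegral.isIntegral A
  have hp0 : minpoly ℂ A ≠ 0 := minpoly.ne_zero hint
  obtain ⟨q, hq, hqn⟩ := exists_eq_pow_rootMultiplicity_mul_and_not_dvd (minpoly ℂ A) hp0 0
  rw [C_0, sub_zero] at hq hqn
  set k := rootMultiplicity 0 (minpoly ℂ A)
  have hAq : A ^ (k+1) * aeval A q = 0 := by
    have := minpoly.aeval ℂ A
    rw [hq] at this
    rw [pow_succ', mul_assoc]
    simp at this
    rw [this, mul_zero]
  obtain ⟨a, c, hac⟩ : IsCoprime (X ^ (k+1) : ℂ[X]) q :=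
    (irreducible_X.coprime_iff_not_dvd.2 hqn).pow_left
  have hac' : aeval A a * A ^ (k+1) + aeval A c * aeval A q = 1 := by
    have := congrArg (aeval A) hac
    simpa using this
  have hcom : ∀ p r : ℂ[X], aeval A p * aeval A r = aeval A r * aeval A p := by
    intro p r; rw [← map_mul, mul_comm, map_mul]
  have hX : aeval A (X : ℂ[X]) = A := aeval_X A
  have hz : aeval A (X ^ (k+1) * q) = 0 := by simpa using hAq
  rcases hid (aeval A (c * q)) (hpoly _) (by
    have e : c * q * (c * q) = c * q - (a * c) * (X ^ (k+1) * q) := by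
      linear_combination (c * q) * hac
    rw [← map_mul, e, map_sub, map_mul _ (a * c), hz]; simp) with h | h
  · exfalso
    apply hns
    have e : aeval A (a * X ^ k) * A = 1 := by
      rw [← hac', ← map_mul _ c q, h, add_zero, map_mul, map_pow, hX, mul_assoc, pow_succ]
    have e' : A * aeval A (a * X ^ k) = 1 := by
      rw [← e]; nth_rw 1 [← hX]; nth_rw 3 [← hX]; rw [hcom]; simp
    exact ⟨⟨A, _, e', e⟩, rfl⟩
  · refine ⟨k+1, ?_⟩
    calc A ^ (k+1) = A ^ (k+1) * aeval A (c * q) := by rw [h, mul_one]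
      _ = A ^ (k+1) * aeval A q * aeval A c := by rw [mul_comm c q, map_mul, mul_assoc]
      _ = 0 := by rw [hAq, zero_mul]

theorem stmt9 {n : ℕ} (U : Mat n) (hU : IsUnit U.det)
    (L : Submodule ℂ (Mat n)) (hsym : ∀ X ∈ L, Matrix.IsSymm X)
    (hUL : U ∈ L) (hclosed : ∀ X ∈ L, ∀ Y ∈ L, jmul U X Y ∈ L)
    (hprim : ¬ ∃ X₁ X₂ : Mat n, X₁ ∈ L ∧ X₂ ∈ L ∧ X₁ ≠ 0 ∧ X₂ ≠ 0 ∧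
      jmul U X₁ X₁ = X₁ ∧ jmul U X₂ X₂ = X₂ ∧ jmul U X₁ X₂ = 0 ∧ X₁ + X₂ = U) :
    ∃ P : Mat n, IsUnit P.det ∧ ∃ L' : Submodule ℂ (Mat n),
      (∀ A ∈ L', ∀ i j : Fin n, n - 1 ≤ (i : ℕ) + (j : ℕ) → A i j = 0) ∧
      Submodule.map (congMap P) L = Submodule.span ℂ {Jmat n} ⊔ L' ∧
      Disjoint (Submodule.span ℂ {Jmat n}) L' := by
  rcases Nat.eq_zero_or_pos n with rfl | hn
  · refine ⟨1, by simp, ⊥, fun _ _ i => i.elim0, Subsingleton.elim _ _, disjoint_bot_right⟩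
  have : Nonempty (Fin n) := ⟨⟨0, hn⟩⟩
  have hUU : U * U⁻¹ = 1 := Matrix.mul_nonsing_inv U hU
  have hUU' : U⁻¹ * U = 1 := Matrix.nonsing_inv_mul U hU
  have hUs : Uᵀ = U := hsym U hUL
  have hUc : ∀ X : Mat n, U * (U⁻¹ * X) = X := fun X => by rw [← mul_assoc, hUU, one_mul]
  -- the operator algebra
  let M : Submodule ℂ (Mat n) := L.map (LinearMap.mulLeft ℂ U⁻¹)
  have hMm : ∀ X ∈ L, U⁻¹ * X ∈ M := fun X hX => ⟨X, hX, rfl⟩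
  have h1M : (1 : Mat n) ∈ M := ⟨U, hUL, hUU'⟩
  have hMJ : ∀ A ∈ M, ∀ B ∈ M, A * B + B * A ∈ M := by
    rintro _ ⟨X, hX, rfl⟩ _ ⟨Y, hY, rfl⟩
    refine ⟨(2 : ℂ) • jmul U X Y, L.smul_mem _ (hclosed X hX Y hY), ?_⟩
    simp [jmul, smul_smul, mul_add, mul_assoc]
  have hid : ∀ e ∈ M, e * e = e → e = 0 ∨ e = 1 := by
    rintro _ ⟨X, hX, rfl⟩ he
    simp only [LinearMap.mulLeft_apply] at he ⊢
    by_contra hcon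
    push Not at hcon
    have hXX : X * U⁻¹ * X = X := by
      have := congrArg (U * ·) he
      simp only [mul_assoc, hUc] at this
      rw [mul_assoc]; exact this
    apply hprim
    refine ⟨X, U - X, hX, L.sub_mem hUL hX, ?_, ?_, ?_, ?_, ?_, by abel⟩
    · rintro rfl; simp at hcon
    · intro h
      apply hcon.2
      rw [← sub_eq_zero.1 h, hUU']
    · rw [jmul, hXX, ← two_smul ℂ X, smul_smul]; simp
    · have : (U - X) * U⁻¹ * (U - X) = U - X := by
        rw [sub_mul, hUU, sub_mul, one_mul, mul_sub, mul_assoc X U⁻¹ U, hUU', hXX]; simp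
      rw [jmul, this, ← two_smul ℂ (U - X), smul_smul]; simp
    · have h1 : X * U⁻¹ * (U - X) = 0 := by
        rw [mul_sub, mul_assoc X U⁻¹ U, hUU', hXX]; simp
      have h2 : (U - X) * U⁻¹ * X = 0 := by
        rw [sub_mul, hUU, sub_mul, hXX]; simp
      rw [jmul, h1, h2]; simp
  have hsplit : ∀ A ∈ M, ∃ c : ℂ, IsNilpotent (A - c • (1 : Mat n)) := by
    intro A hA
    obtain ⟨c, hc⟩ := spectrum.nonempty_of_isAlgClosed_of_finiteDimensional ℂ A
    refine ⟨c, fitting M h1M hMJ hid _ (M.sub_mem hA (M.smul_mem _ h1M)) ?_⟩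
    intro h
    apply hc
    have h2 := h.neg
    rw [neg_sub] at h2
    change IsUnit (algebraMap ℂ (Mat n) c - A)
    rwa [Algebra.algebraMap_eq_smul_one]
  have hnt : ∀ A : Mat n, IsNilpotent A → A.trace = 0 := fun A hA =>
    (Matrix.isNilpotent_trace_of_isNilpotent hA).eq_zero
  have hnil : ∀ A ∈ M, A.trace = 0 → IsNilpotent A := by
    intro A hA htr
    obtain ⟨c, hc⟩ := hsplit A hA
    have := hnt _ hc
    have hn0 : (n : ℂ) ≠ 0 := by exact_mod_cast hn.ne'
    simp [htr, hn0] at this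
    simpa [this] using hc
  let N : Submodule ℂ (Mat n) := M ⊓ LinearMap.ker (Matrix.traceLinearMap (Fin n) ℂ ℂ)
  have hNnil : ∀ A ∈ N, IsNilpotent A := fun A hA => hnil A hA.1 hA.2
  have hNJ : ∀ A ∈ N, ∀ B ∈ N, A * B + B * A ∈ N := by
    intro A hA B hB
    refine ⟨hMJ A hA.1 B hB.1, ?_⟩
    have e : A * B + B * A = (A + B) ^ 2 - A ^ 2 - B ^ 2 := by noncomm_ring
    have hsq : ∀ C ∈ N, (C ^ 2).trace = 0 := fun C hC => hnt _ ((hNnil C hC).pow_succ 1)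
    change (A * B + B * A).trace = 0
    rw [e, Matrix.trace_sub, Matrix.trace_sub, hsq _ (add_mem hA hB), hsq A hA, hsq B hB]
    simp
  let Φ : Mat n ≃ₐ[ℂ] Module.End ℂ (Fin n → ℂ) := Matrix.toLinAlgEquiv'
  have hΦ : ∀ A x, Φ A x = A *ᵥ x := fun A x => Matrix.toLinAlgEquiv'_apply A x
  let B : (Fin n → ℂ) →ₗ[ℂ] (Fin n → ℂ) →ₗ[ℂ] ℂ := Matrix.toLinearMap₂' ℂ U
  have hBa : ∀ x y, B x y = x ⬝ᵥ (U *ᵥ y) := fun x y => Matrix.toLinearMap₂'_apply' U x y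
  have hswap : ∀ X : Mat n, Xᵀ = X → ∀ x y, x ⬝ᵥ (X *ᵥ y) = y ⬝ᵥ (X *ᵥ x) := by
    intro X hX x y
    rw [Matrix.dotProduct_mulVec, dotProduct_comm, ← Matrix.mulVec_transpose, hX]
  have hBX : ∀ X x y, B x (Φ (U⁻¹ * X) y) = x ⬝ᵥ (X *ᵥ y) := by
    intro X x y
    rw [hBa, hΦ, Matrix.mulVec_mulVec, hUc]
  have hBs : ∀ x y, B x y = B y x := by
    intro x y; rw [hBa, hBa, hswap U hUs]
  obtain ⟨b, hb1, hb2⟩ := flag n (Fin n → ℂ) (by simp) B hBs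
    (by
      intro x hx
      have h0 : U *ᵥ x = 0 := by
        refine dotProduct_eq_zero _ fun y => ?_
        rw [dotProduct_comm, ← hBa, hBs]
        exact hx y
      have := congrArg (U⁻¹ *ᵥ ·) h0
      simpa [Matrix.mulVec_mulVec, hUU'] using this)
    (N.map Φ.toLinearMap)
    (by
      rintro _ ⟨_, ⟨⟨X, hX, rfl⟩, -⟩, rfl⟩ x y
      change B (Φ (U⁻¹ * X) x) y = B x (Φ (U⁻¹ * X) y)
      rw [hBs, hBX, hBX, hswap X (hsym X hX)])
    (by
      rintro _ ⟨A, hA, rfl⟩ _ ⟨C, hC, rfl⟩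
      refine ⟨_, hNJ A hA C hC, ?_⟩
      simp)
    (by
      rintro _ ⟨A, hA, rfl⟩
      exact (hNnil A hA).map Φ)
  let P : Mat n := Matrix.of fun i => b i
  have hP : ∀ X i j, (congMap P X) i j = b i ⬝ᵥ (X *ᵥ b j) := by
    intro X i j
    change (P * X * Pᵀ) i j = _
    rw [Matrix.dotProduct_mulVec]
    rfl
  have hPU : congMap P U = Jmat n := by
    ext i j
    rw [hP, ← hBa, hb1 i j i.2 j.2, Jmat, Matrix.of_apply]
    congr 1
    exact propext (by omega)
  have hJJ : Jmat n * Jmat n = 1 := by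
    ext i j
    rw [Matrix.mul_apply, Finset.sum_eq_single (Fin.rev i)]
    · simp only [Jmat, Matrix.of_apply, Fin.val_rev, Matrix.one_apply, Fin.ext_iff]
      rw [if_pos (by omega), one_mul]
      congr 1
      exact propext (by omega)
    · intro k _ hk
      simp only [Jmat, Matrix.of_apply]
      rw [if_neg, zero_mul]
      intro h
      apply hk
      ext
      rw [Fin.val_rev]
      omega
    · simp
  have hPdet : IsUnit P.det := by
    have h1 : IsUnit (Jmat n).det := by
      have := congrArg Matrix.det hJJ
      rw [Matrix.det_mul, Matrix.det_one] at this
      exact IsUnit.of_mul_eq_one _ this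
    rw [← hPU] at h1
    change IsUnit (P * U * Pᵀ).det at h1
    rw [Matrix.det_mul] at h1
    have := isUnit_of_mul_isUnit_right h1
    rwa [Matrix.det_transpose] at this
  have hanti : ∀ A ∈ (L ⊓ N.comap (LinearMap.mulLeft ℂ U⁻¹)).map (congMap P),
      ∀ i j : Fin n, n - 1 ≤ (i : ℕ) + (j : ℕ) → A i j = 0 := by
    rintro _ ⟨X, ⟨hX, hXN⟩, rfl⟩ i j hij
    rw [hP, ← hBX]
    exact hb2 _ ⟨_, hXN, rfl⟩ i j i.2 j.2 (by omega)
  refine ⟨P, hPdet, (L ⊓ N.comap (LinearMap.mulLeft ℂ U⁻¹)).map (congMap P), hanti, ?_, ?_⟩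
  · apply le_antisymm
    · rintro _ ⟨X, hX, rfl⟩
      obtain ⟨c, hc⟩ := hsplit _ (hMm X hX)
      have e : X = c • U + (X - c • U) := by abel
      rw [e, map_add, map_smul, hPU]
      refine Submodule.add_mem_sup
        (Submodule.smul_mem _ _ (Submodule.mem_span_singleton_self _)) ⟨_, ⟨?_, ?_⟩, rfl⟩
      · exact L.sub_mem hX (L.smul_mem _ hUL)
      · have h2 : U⁻¹ * (X - c • U) = U⁻¹ * X - c • 1 := by
          rw [mul_sub, Matrix.mul_smul, hUU']
        change U⁻¹ * (X - c • U) ∈ N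
        rw [h2]
        exact ⟨M.sub_mem (hMm X hX) (M.smul_mem _ h1M), hnt _ hc⟩
    · refine sup_le ?_ (Submodule.map_mono inf_le_left)
      rw [Submodule.span_singleton_le_iff_mem, ← hPU]
      exact ⟨U, hUL, rfl⟩
  · rw [Submodule.disjoint_def]
    intro A hA hA'
    obtain ⟨c, rfl⟩ := Submodule.mem_span_singleton.1 hA
    have := hanti _ hA' ⟨0, hn⟩ ⟨n - 1, by omega⟩ (by simp)
    have hc : c = 0 := by simpa [Jmat] using this
    rw [hc, zero_smul]
end
end

section
/- Let L, L′ ⊆ Sⁿ be linear subspaces that are similar, i.e., L′ = P⁻¹ L P for some invertible P ∈ GL(n, ℂ). Then L and L′ are orthogonally congruent: there exists Q ∈ GL(n, ℂ) with Q Qᵀ = 1ₙ and L′ = Q L Qᵀ. -/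
open Matrix

noncomputable section

lemma sqrt_poly (s : Multiset ℂ) (hs : ∀ a ∈ s, a ≠ 0) :
    ∃ p g : Polynomial ℂ, p ^ 2 - Polynomial.X =
      (s.map (fun a => Polynomial.X - Polynomial.C a)).prod * g := by
  induction s using Multiset.induction_on with
  | empty => exact ⟨0, -Polynomial.X, by simp⟩
  | cons a s ih =>
    obtain ⟨p, g, h⟩ := ih (fun b hb => hs b (Multiset.mem_cons_of_mem hb))
    have ha : a ≠ 0 := hs a (Multiset.mem_cons_self a s)
    set f := (s.map (fun a => Polynomial.X - Polynomial.C a)).prod with hf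
    have hev : (p.eval a) ^ 2 - a = f.eval a * g.eval a := by
      have := congrArg (Polynomial.eval a) h
      simpa using this
    have key : ∃ c : ℂ, g.eval a + 2 * c * p.eval a + c ^ 2 * f.eval a = 0 := by
      by_cases h0 : f.eval a = 0
      · have hp : p.eval a ≠ 0 := by
          intro hp
          rw [h0, hp] at hev
          apply ha
          linear_combination -hev
        refine ⟨-(g.eval a) / (2 * p.eval a), ?_⟩
        rw [h0]
        field_simp
        ring
      · obtain ⟨r, hr⟩ := IsAlgClosed.exists_pow_nat_eq a (n := 2) (by norm_num)
        refine ⟨(r - p.eval a) / f.eval a, ?_⟩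
        field_simp
        linear_combination hr - hev
    obtain ⟨c, hc⟩ := key
    have hd : Polynomial.X - Polynomial.C a ∣
        g + 2 * Polynomial.C c * p + (Polynomial.C c) ^ 2 * f := by
      rw [Polynomial.dvd_iff_isRoot]
      simpa [Polynomial.IsRoot] using hc
    obtain ⟨k, hk⟩ := hd
    refine ⟨p + Polynomial.C c * f, k, ?_⟩
    rw [Multiset.map_cons, Multiset.prod_cons, ← hf]
    linear_combination h + f * hk

lemma aeval_symm {n : ℕ} (M : Matrix (Fin n) (Fin n) ℂ) (hM : Mᵀ = M) (p : Polynomial ℂ) :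
    (Polynomial.aeval M p)ᵀ = Polynomial.aeval M p := by
  induction p using Polynomial.induction_on' with
  | add p q hp hq => simp [hp, hq]
  | monomial k a =>
    simp [Polynomial.aeval_monomial, Algebra.algebraMap_eq_smul_one, Matrix.transpose_pow, hM]

lemma aeval_comm {n : ℕ} (M A : Matrix (Fin n) (Fin n) ℂ) (h : Commute A M)
    (p : Polynomial ℂ) : Commute A (Polynomial.aeval M p) := by
  induction p using Polynomial.induction_on' with
  | add p q hp hq => rw [map_add]; exact hp.add_right hq
  | monomial k a =>
    rw [Polynomial.aeval_monomial]
    exact Commute.mul_right (Algebra.commutes a A).symm (h.pow_right k)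

lemma exists_sqrt_s10 {n : ℕ} (M : Matrix (Fin n) (Fin n) ℂ) (hM : IsUnit M.det) :
    ∃ p : Polynomial ℂ, Polynomial.aeval M p * Polynomial.aeval M p = M := by
  obtain ⟨p, g, h⟩ := sqrt_poly M.charpoly.roots (by
    rintro a ha rfl
    have h1 := Polynomial.isRoot_of_mem_roots ha
    apply hM.ne_zero
    rw [Matrix.det_eq_sign_charpoly_coeff, Polynomial.coeff_zero_eq_eval_zero, h1.eq_zero,
      mul_zero])
  have hsp := IsAlgClosed.splits M.charpoly
  rw [← hsp.eq_prod_roots_of_monic M.charpoly_monic] at h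
  refine ⟨p, ?_⟩
  have := congrArg (Polynomial.aeval M) h
  rw [map_mul, Matrix.aeval_self_charpoly, zero_mul, map_sub, map_pow, Polynomial.aeval_X,
    sub_eq_zero, sq] at this
  exact this

/-- If two linear subspaces `L, L′` of symmetric matrices are similar
(`L′ = P⁻¹ L P`), then they are orthogonally congruent: `L′ = Q L Qᵀ` for a
complex orthogonal matrix `Q`. -/
theorem stmt10 {n : ℕ} (L L' : Submodule ℂ (Mat n))
    (hsym : ∀ X ∈ L, Matrix.IsSymm X) (hsym' : ∀ X ∈ L', Matrix.IsSymm X)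
    (P : Mat n) (hP : IsUnit P.det)
    (hsim : (L' : Set (Mat n)) = (fun A => P⁻¹ * A * P) '' (L : Set (Mat n))) :
    ∃ Q : Mat n, Q * Qᵀ = 1 ∧
      (L' : Set (Mat n)) = (fun A => Q * A * Qᵀ) '' (L : Set (Mat n)) := by
  have hPt : IsUnit Pᵀ.det := by rwa [Matrix.det_transpose]
  have hMd : IsUnit (P * Pᵀ).det := by rw [Matrix.det_mul]; exact hP.mul hPt
  obtain ⟨p, hp⟩ := exists_sqrt_s10 (P * Pᵀ) hMd
  have hS := aeval_symm (P * Pᵀ) (by simp) p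
  have hc := fun A h => aeval_comm (P * Pᵀ) A h p
  generalize Polynomial.aeval (P * Pᵀ) p = S at hp hS hc
  have hSd : IsUnit S.det := by
    rw [← hp, Matrix.det_mul] at hMd
    exact isUnit_of_mul_isUnit_left hMd
  have hQ1 : (P⁻¹ * S) * (P⁻¹ * S)ᵀ = 1 := by
    rw [Matrix.transpose_mul, hS, Matrix.transpose_nonsing_inv]
    calc P⁻¹ * S * (S * Pᵀ⁻¹) = P⁻¹ * (S * S) * Pᵀ⁻¹ := by simp only [Matrix.mul_assoc]
      _ = (P⁻¹ * P) * (Pᵀ * Pᵀ⁻¹) := by rw [hp]; simp only [Matrix.mul_assoc]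
      _ = 1 := by rw [Matrix.nonsing_inv_mul _ hP, Matrix.mul_nonsing_inv _ hPt, one_mul]
  refine ⟨P⁻¹ * S, hQ1, ?_⟩
  rw [hsim]
  apply Set.image_congr
  intro A hA
  have hA1 : Aᵀ = A := hsym A hA
  have hB : (P⁻¹ * A * P)ᵀ = P⁻¹ * A * P := by
    apply hsym'
    have : P⁻¹ * A * P ∈ (L' : Set (Mat n)) := by rw [hsim]; exact ⟨A, hA, rfl⟩
    exact this
  rw [Matrix.transpose_mul, Matrix.transpose_mul, hA1, Matrix.transpose_nonsing_inv] at hB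
  have hcomm : Commute A (P * Pᵀ) := by
    have h2 : P * (Pᵀ * (A * Pᵀ⁻¹)) * Pᵀ = P * (P⁻¹ * A * P) * Pᵀ := by rw [hB]
    have h3 : P * (Pᵀ * (A * Pᵀ⁻¹)) * Pᵀ = P * Pᵀ * A * (Pᵀ⁻¹ * Pᵀ) := by
      simp only [Matrix.mul_assoc]
    have h4 : P * (P⁻¹ * A * P) * Pᵀ = (P * P⁻¹) * (A * (P * Pᵀ)) := by
      simp only [Matrix.mul_assoc]
    rw [h3, h4, Matrix.nonsing_inv_mul _ hPt, Matrix.mul_nonsing_inv _ hP, mul_one, one_mul] at h2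
    exact h2.symm
  have hAS : A * S = S * A := hc A hcomm
  have hPQ : S * (P⁻¹ * S)ᵀ = P := by
    calc S * (P⁻¹ * S)ᵀ = (P * P⁻¹) * (S * (P⁻¹ * S)ᵀ) := by
          rw [Matrix.mul_nonsing_inv _ hP, one_mul]
      _ = P * ((P⁻¹ * S) * (P⁻¹ * S)ᵀ) := by simp only [Matrix.mul_assoc]
      _ = P := by rw [hQ1, mul_one]
  change P⁻¹ * A * P = P⁻¹ * S * A * (P⁻¹ * S)ᵀ
  rw [Matrix.mul_assoc P⁻¹ S A, ← hAS, ← Matrix.mul_assoc P⁻¹ A S,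
    Matrix.mul_assoc (P⁻¹ * A) S, hPQ]
end
end

section
/- Every Jordan copencil in S³, i.e., every regular 4-dimensional linear subspace L ⊆ S³ whose reciprocal variety L⁻¹ is a linear space, is congruent to exactly one of the following two subspaces: L₁ = {all matrices [[x,0,0],[0,y,w],[0,w,z]] : x,y,z,w ∈ ℂ} or L₂ = {all matrices [[x,y,w],[y,z,0],[w,0,0]] : x,y,z,w ∈ ℂ}. -/
open Matrix

noncomputable section

/-- The copencil `L₁` of matrices `[[x,0,0],[0,y,w],[0,w,z]]`. -/
def copencil1 : Submodule ℂ (Mat 3) :=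
  Submodule.span ℂ {!![(1:ℂ),0,0;0,0,0;0,0,0], !![(0:ℂ),0,0;0,1,0;0,0,0],
    !![(0:ℂ),0,0;0,0,0;0,0,1], !![(0:ℂ),0,0;0,0,1;0,1,0]}

/-- The copencil `L₂` of matrices `[[x,y,w],[y,z,0],[w,0,0]]`. -/
def copencil2 : Submodule ℂ (Mat 3) :=
  Submodule.span ℂ {!![(1:ℂ),0,0;0,0,0;0,0,0], !![(0:ℂ),1,0;1,0,0;0,0,0],
    !![(0:ℂ),0,0;0,1,0;0,0,0], !![(0:ℂ),0,1;0,0,0;1,0,0]}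


lemma aux_binary (a b c : ℂ) : ∃ s t : ℂ, (s ≠ 0 ∨ t ≠ 0) ∧ a*s*s + b*s*t + c*t*t = 0 := by
  by_cases ha : a = 0
  · exact ⟨1, 0, by simp, by simp [ha]⟩
  · obtain ⟨r, hr⟩ := IsAlgClosed.exists_pow_nat_eq (discrim a b c) (n := 2) (by norm_num)
    obtain ⟨x, hx⟩ := exists_quadratic_eq_zero ha ⟨r, by rw [← hr]; ring⟩
    exact ⟨x, 1, by simp, by linear_combination hx⟩

lemma aux_q (G : Mat 3) (x y : Fin 3 → ℂ) (s t : ℂ) :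
    (s • x + t • y) ⬝ᵥ G *ᵥ (s • x + t • y) =
      (x ⬝ᵥ G *ᵥ x) * s * s + (x ⬝ᵥ G *ᵥ y + y ⬝ᵥ G *ᵥ x) * s * t + (y ⬝ᵥ G *ᵥ y) * t * t := by
  simp only [mulVec_add, mulVec_smul, dotProduct_add, add_dotProduct, smul_dotProduct,
    dotProduct_smul, smul_eq_mul]
  ring

lemma aux_sing (H G : Mat 3) (hs : H.IsSymm) (hd : H.det = 0) :
    ∃ v : Fin 3 → ℂ, v ≠ 0 ∧ v ⬝ᵥ H *ᵥ v = 0 ∧ v ⬝ᵥ G *ᵥ v = 0 := by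
  obtain ⟨k, hk, hHk⟩ := Matrix.exists_mulVec_eq_zero_iff.mpr hd
  obtain ⟨i, hi⟩ := Function.ne_iff.mp hk
  obtain ⟨j, l, hij, hil, hjl⟩ : ∃ j l : Fin 3, i ≠ j ∧ i ≠ l ∧ j ≠ l := by
    clear hi; clear hHk hk; revert i; decide
  set e : Fin 3 → ℂ := Pi.single j 1
  set f : Fin 3 → ℂ := Pi.single l 1
  obtain ⟨s, t, hst, h1⟩ := aux_binary (e ⬝ᵥ H *ᵥ e) (e ⬝ᵥ H *ᵥ f + f ⬝ᵥ H *ᵥ e) (f ⬝ᵥ H *ᵥ f)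
  rw [← aux_q] at h1
  set p := s • e + t • f with hp
  obtain ⟨a, b, hab, h2⟩ := aux_binary (k ⬝ᵥ G *ᵥ k) (k ⬝ᵥ G *ᵥ p + p ⬝ᵥ G *ᵥ k) (p ⬝ᵥ G *ᵥ p)
  rw [← aux_q] at h2
  refine ⟨a • k + b • p, ?_, ?_, h2⟩
  · intro h0
    have hi0 := congrFun h0 i
    have hj0 := congrFun h0 j
    have hl0 := congrFun h0 l
    simp [hp, e, f, Pi.single_apply, hij, hil, hjl, hjl.symm] at hi0 hj0 hl0
    simp at hi
    have ha : a = 0 := by tauto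
    subst ha
    simp at hj0 hl0 hab
    tauto
  · rw [aux_q, h1, hHk]
    have : k ⬝ᵥ H *ᵥ p = 0 := by
      rw [dotProduct_mulVec, ← mulVec_transpose, hs.eq, hHk, zero_dotProduct]
    simp [this]

lemma aux_conics (F G : Mat 3) (hF : F.IsSymm) (hG : G.IsSymm) :
    ∃ v : Fin 3 → ℂ, v ≠ 0 ∧ v ⬝ᵥ F *ᵥ v = 0 ∧ v ⬝ᵥ G *ᵥ v = 0 := by
  by_cases hd : G.det = 0
  · obtain ⟨v, h0, h1, h2⟩ := aux_sing G F hG hd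
    exact ⟨v, h0, h2, h1⟩
  · obtain ⟨t, ht⟩ := IsAlgClosed.exists_root (-(F * G⁻¹)).charpoly (by
      rw [Matrix.charpoly_degree_eq_dim]; simp)
    rw [Polynomial.IsRoot, Matrix.eval_charpoly] at ht
    have hH : (F + t • G).det = 0 := by
      have : F + t • G = (scalar (Fin 3) t - -(F * G⁻¹)) * G := by
        rw [sub_neg_eq_add, add_mul, Matrix.mul_assoc,
          Matrix.nonsing_inv_mul _ (isUnit_iff_ne_zero.mpr hd)]
        simp [add_comm, Matrix.smul_eq_diagonal_mul]
      rw [this, det_mul, ht, zero_mul]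
    obtain ⟨v, h0, h1, h2⟩ := aux_sing (F + t • G) G (hF.add (hG.smul t)) hH
    refine ⟨v, h0, ?_, h2⟩
    simpa [add_mulVec, smul_mulVec, h2] using h1

def iota : (Fin 6 → ℂ) →ₗ[ℂ] Mat 3 where
  toFun x := !![x 0, x 3, x 4; x 3, x 1, x 5; x 4, x 5, x 2]
  map_add' x y := by ext i j; fin_cases i <;> fin_cases j <;> simp
  map_smul' c x := by ext i j; fin_cases i <;> fin_cases j <;> simp

lemma aux_finrank_map {V W : Type*} [AddCommGroup V] [Module ℂ V] [AddCommGroup W] [Module ℂ W]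
    (f : V →ₗ[ℂ] W) (hf : Function.Injective f) (L : Submodule ℂ V) :
    Module.finrank ℂ (L.map f) = Module.finrank ℂ L :=
  (LinearEquiv.finrank_eq (Submodule.equivMapOfInjective f hf L)).symm

lemma aux_rankone (L : Submodule ℂ (Mat 3)) (hsym : ∀ X ∈ L, Matrix.IsSymm X)
    (hdim : Module.finrank ℂ L = 4) : ∃ v : Fin 3 → ℂ, v ≠ 0 ∧ vecMulVec v v ∈ L := by
  have hinj : Function.Injective iota := by
    intro x y h
    have h' : ∀ i j, iota x i j = iota y i j := fun i j => by rw [h]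
    have h00 := h' 0 0
    have h01 := h' 0 1
    have h02 := h' 0 2
    have h11 := h' 1 1
    have h12 := h' 1 2
    have h22 := h' 2 2
    simp [iota] at h00 h01 h02 h11 h12 h22
    ext i; fin_cases i <;> assumption
  have hle : L ≤ LinearMap.range iota := by
    intro X hX
    have hs := hsym X hX
    refine ⟨![X 0 0, X 1 1, X 2 2, X 0 1, X 0 2, X 1 2], ?_⟩
    have h01 := hs.apply 0 1
    have h02 := hs.apply 0 2
    have h12 := hs.apply 1 2
    ext i j; fin_cases i <;> fin_cases j <;> simp [iota, *]
  have hmap : (L.comap iota).map iota = L := Submodule.map_comap_eq_of_le hle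
  have h4 : Module.finrank ℂ (L.comap iota) = 4 := by
    rw [← aux_finrank_map iota hinj, hmap, hdim]
  have h2 : Module.finrank ℂ ((Fin 6 → ℂ) ⧸ (L.comap iota)) = Module.finrank ℂ (Fin 2 → ℂ) := by
    have := Submodule.finrank_quotient_add_finrank (L.comap iota)
    simp [h4] at this ⊢
    omega
  let E := LinearEquiv.ofFinrankEq _ _ h2
  let g : (Fin 6 → ℂ) →ₗ[ℂ] (Fin 2 → ℂ) := E.toLinearMap ∘ₗ (L.comap iota).mkQ
  have hg : ∀ x, g x = 0 → iota x ∈ L := by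
    intro x hx
    simp only [g, LinearMap.comp_apply, LinearEquiv.coe_coe, LinearEquiv.map_eq_zero_iff,
      Submodule.mkQ_apply, Submodule.Quotient.mk_eq_zero] at hx
    exact hx
  let c : Fin 6 → Fin 2 → ℂ := fun j => g (fun i => if j = i then 1 else 0)
  let F : Fin 2 → Mat 3 := fun a =>
    !![c 0 a, c 3 a / 2, c 4 a / 2; c 3 a / 2, c 1 a, c 5 a / 2; c 4 a / 2, c 5 a / 2, c 2 a]
  have hF : ∀ a, (F a).IsSymm := by
    intro a
    ext i j; fin_cases i <;> fin_cases j <;> simp [F]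
  obtain ⟨v, hv, hv0, hv1⟩ := aux_conics (F 0) (F 1) (hF 0) (hF 1)
  refine ⟨v, hv, ?_⟩
  let x : Fin 6 → ℂ := ![v 0 * v 0, v 1 * v 1, v 2 * v 2, v 0 * v 1, v 0 * v 2, v 1 * v 2]
  have hx : iota x = vecMulVec v v := by
    ext i j; fin_cases i <;> fin_cases j <;> simp [iota, x, vecMulVec_apply] <;> ring
  have key : ∀ a, g x a = v ⬝ᵥ F a *ᵥ v := by
    intro a
    rw [LinearMap.pi_apply_eq_sum_univ g x]
    change (∑ i, x i • c i) a = _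
    simp [Fin.sum_univ_succ, x, F, dotProduct, mulVec, Finset.sum_apply]
    ring
  rw [← hx]
  apply hg
  ext a
  rw [key]
  fin_cases a
  · exact hv0
  · exact hv1

lemma aux_generic (A U : Mat 3) (hU : IsUnit U.det) :
    ∃ t : ℂ, IsUnit (A + t • U).det ∧ IsUnit (A + (t - 1) • U).det := by
  let p := (-(A * U⁻¹)).charpoly
  have hp : p ≠ 0 := (Matrix.charpoly_monic _).ne_zero
  have h : ∀ t, t ∉ p.roots → IsUnit (A + t • U).det := by
    intro t ht
    rw [Polynomial.mem_roots hp, Polynomial.IsRoot, Matrix.eval_charpoly] at ht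
    have : A + t • U = (scalar (Fin 3) t - -(A * U⁻¹)) * U := by
      rw [sub_neg_eq_add, add_mul, Matrix.mul_assoc, Matrix.nonsing_inv_mul _ hU]
      simp [add_comm, Matrix.smul_eq_diagonal_mul]
    rw [this, det_mul]
    exact (isUnit_iff_ne_zero.mpr ht).mul hU
  obtain ⟨t, ht⟩ := Infinite.exists_notMem_finset
    (p.roots.toFinset ∪ p.roots.toFinset.image (fun x => x + 1))
  simp only [Finset.mem_union, Finset.mem_image, not_or, not_exists, not_and,
    Multiset.mem_toFinset] at ht
  exact ⟨t, h t ht.1, h _ fun h' => ht.2 _ h' (by ring)⟩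

lemma aux_inv (L M : Submodule ℂ (Mat 3)) (hM : recipVar L = (M : Set (Mat 3))) :
    (∀ X ∈ L, IsUnit X.det → X⁻¹ ∈ M) ∧ (∀ Y ∈ M, IsUnit Y.det → Y⁻¹ ∈ L) := by
  constructor
  · intro X hX hd
    have : X⁻¹ ∈ recipVar L := subset_closure ⟨X, hX, hd, rfl⟩
    rw [hM] at this
    exact this
  · intro Y hY hd
    have hY' : Y ∈ recipVar L := by rw [hM]; exact hY
    have hcl : IsClosed (L : Set (Mat 3)) := Submodule.closed_of_finiteDimensional L
    have hc : Continuous (fun Z : Mat 3 => Z.adjugate) := continuous_id.matrix_adjugate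
    have hm : Set.MapsTo (fun Z : Mat 3 => Z.adjugate)
        {Y : Mat 3 | ∃ X ∈ L, IsUnit (Matrix.det X) ∧ Y = X⁻¹} (L : Set (Mat 3)) := by
      rintro _ ⟨X, hX, hdX, rfl⟩
      have hu : IsUnit (X⁻¹).det := by
        rw [Matrix.det_nonsing_inv]; simpa using hdX
      have : (X⁻¹).adjugate = (X⁻¹).det • X := by
        have h1 := Matrix.nonsing_inv_nonsing_inv X hdX
        have h2 : X⁻¹⁻¹ = _ := Matrix.inv_def X⁻¹
        rw [h1] at h2
        calc (X⁻¹).adjugate = (X⁻¹).det • (Ring.inverse (X⁻¹).det • (X⁻¹).adjugate) := by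
              rw [smul_smul, Ring.mul_inverse_cancel _ hu, one_smul]
          _ = (X⁻¹).det • X := by rw [← h2]
      change (X⁻¹).adjugate ∈ L
      rw [this]
      exact L.smul_mem _ hX
    have h := hc.continuousAt.continuousWithinAt.mem_closure hY' hm
    rw [hcl.closure_eq] at h
    rw [Matrix.inv_def]
    exact L.smul_mem _ h

/-- Jordan closure. -/
lemma aux_jordan (L M : Submodule ℂ (Mat 3)) (hM : recipVar L = (M : Set (Mat 3)))
    (U : Mat 3) (hUL : U ∈ L) (hU : IsUnit U.det) (A : Mat 3) (hA : A ∈ L) :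
    A * U⁻¹ * A ∈ L := by
  obtain ⟨h1, h2⟩ := aux_inv L M hM
  have main : ∀ B ∈ L, IsUnit B.det → IsUnit (B - U).det → B * U⁻¹ * B ∈ L := by
    intro B hB hBd hBU
    have hX : B - U ∈ L := L.sub_mem hB hUL
    have hm : (B - U)⁻¹ - B⁻¹ ∈ M := M.sub_mem (h1 _ hX hBU) (h1 _ hB hBd)
    have e1 : ((B - U)⁻¹ - B⁻¹) * (B * U⁻¹ * (B - U)) = 1 := by
      have hb : B⁻¹ * B = 1 := Matrix.nonsing_inv_mul _ hBd
      have hu : U * U⁻¹ = 1 := Matrix.mul_nonsing_inv _ hU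
      have hu' : U⁻¹ * U = 1 := Matrix.nonsing_inv_mul _ hU
      have hx : (B - U)⁻¹ * (B - U) = 1 := Matrix.nonsing_inv_mul _ hBU
      have : B * U⁻¹ * (B - U) = (B - U) * U⁻¹ * B := by
        simp only [mul_sub, sub_mul, mul_assoc, hu']
        simp only [← mul_assoc, hu, one_mul, mul_one]
      calc ((B - U)⁻¹ - B⁻¹) * (B * U⁻¹ * (B - U))
          = (B - U)⁻¹ * ((B - U) * U⁻¹ * B) - (B⁻¹ * B) * (U⁻¹ * (B - U)) := by
            rw [sub_mul, this, ← this]; noncomm_ring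
        _ = 1 := by
            rw [hb, one_mul, mul_assoc, ← mul_assoc (B - U)⁻¹, hx, one_mul, ← mul_sub,
              sub_sub_cancel, hu']
    have e2 : ((B - U)⁻¹ - B⁻¹)⁻¹ = B * U⁻¹ * (B - U) := Matrix.inv_eq_right_inv e1
    have e3 := h2 _ hm (Matrix.isUnit_det_of_right_inverse e1)
    rw [e2, mul_sub, mul_assoc B U⁻¹ U, Matrix.nonsing_inv_mul _ hU, mul_one] at e3
    simpa using L.add_mem e3 hB
  obtain ⟨t, ht1, ht2⟩ := aux_generic A U hU
  have h3 := main (A + t • U) (L.add_mem hA (L.smul_mem _ hUL)) ht1 (by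
    convert ht2 using 2; module)
  have : A * U⁻¹ * A = (A + t • U) * U⁻¹ * (A + t • U) - (2 * t) • A - (t * t) • U := by
    simp only [add_mul, mul_add, smul_mul_assoc, mul_smul_comm, Matrix.mul_nonsing_inv _ hU,
      mul_assoc, Matrix.nonsing_inv_mul _ hU, mul_one]
    simp only [← mul_assoc, Matrix.mul_nonsing_inv _ hU, one_mul]
    module
  rw [this]
  exact L.sub_mem (L.sub_mem h3 (L.smul_mem _ hA)) (L.smul_mem _ hUL)

lemma aux_quad (L : Submodule ℂ (Mat 3)) (K : Mat 3) (h : ∀ A ∈ L, A * K * A ∈ L)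
    (A B : Mat 3) (hA : A ∈ L) (hB : B ∈ L) : A * K * B * K * A ∈ L := by
  have hp : ∀ A ∈ L, ∀ B ∈ L, A * K * B + B * K * A ∈ L := by
    intro A hA B hB
    have : A * K * B + B * K * A = (A + B) * K * (A + B) - A * K * A - B * K * B := by noncomm_ring
    rw [this]
    exact L.sub_mem (L.sub_mem (h _ (L.add_mem hA hB)) (h _ hA)) (h _ hB)
  have h1 := hp A hA _ (hp A hA B hB)
  have h2 := hp _ (h A hA) B hB
  have : A * K * B * K * A = (1/2 : ℂ) • ((A * K * (A * K * B + B * K * A) +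
      (A * K * B + B * K * A) * K * A) - (A * K * A * K * B + B * K * (A * K * A))) := by
    have e : (A * K * (A * K * B + B * K * A) +
      (A * K * B + B * K * A) * K * A) - (A * K * A * K * B + B * K * (A * K * A))
       = (2:ℂ) • (A * K * B * K * A) := by
      rw [two_smul]; noncomm_ring
    rw [e, smul_smul]; norm_num
  rw [this]
  exact L.smul_mem _ (L.sub_mem h1 h2)

lemma aux_eigen (L : Submodule ℂ (Mat 3)) (hsym : ∀ X ∈ L, Matrix.IsSymm X)
    (hdim : Module.finrank ℂ L = 4) (U : Mat 3) (hUL : U ∈ L) (hU : IsUnit U.det)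
    (hJ : ∀ A ∈ L, A * U⁻¹ * A ∈ L) :
    ∃ n : Fin 3 → ℂ, n ≠ 0 ∧ ∀ A ∈ L, ∃ c : ℂ, A *ᵥ n = c • (U *ᵥ n) := by
  obtain ⟨v, hv, hvL⟩ := aux_rankone L hsym hdim
  have hUinj : ∀ x : Fin 3 → ℂ, U *ᵥ x = 0 → x = 0 := by
    intro x hx
    have : U⁻¹ *ᵥ (U *ᵥ x) = x := by rw [mulVec_mulVec, Matrix.nonsing_inv_mul _ hU, one_mulVec]
    rw [← this, hx, mulVec_zero]
  have hUv : U *ᵥ (U⁻¹ *ᵥ v) = v := by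
    rw [mulVec_mulVec, Matrix.mul_nonsing_inv _ hU, one_mulVec]
  have hKs : (U⁻¹)ᵀ = U⁻¹ := by rw [Matrix.transpose_nonsing_inv, (hsym U hUL).eq]
  have hC : ∀ A ∈ L, vecMulVec (A *ᵥ (U⁻¹ *ᵥ v)) (A *ᵥ (U⁻¹ *ᵥ v)) ∈ L := by
    intro A hA
    have := aux_quad L U⁻¹ hJ A _ hA hvL
    have e : A * U⁻¹ * vecMulVec v v * U⁻¹ * A =
        vecMulVec (A *ᵥ (U⁻¹ *ᵥ v)) (A *ᵥ (U⁻¹ *ᵥ v)) := by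
      rw [Matrix.mul_assoc _ U⁻¹ A, Matrix.mul_vecMulVec, Matrix.vecMulVec_mul, mulVec_mulVec,
        ← mulVec_transpose, transpose_mul, hKs, (hsym A hA).eq]
    rwa [e] at this
  by_cases hcase : ∀ A ∈ L, ∃ c : ℂ, A *ᵥ (U⁻¹ *ᵥ v) = c • v
  · refine ⟨U⁻¹ *ᵥ v, ?_, ?_⟩
    · intro h0
      rw [h0, mulVec_zero] at hUv
      exact hv hUv.symm
    · rw [hUv]; exact hcase
  · push Not at hcase
    obtain ⟨A, hA, hAc⟩ := hcase
    set w := A *ᵥ (U⁻¹ *ᵥ v) with hw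
    have hwL := hC A hA
    have hvwL := hC (U + A) (L.add_mem hUL hA)
    rw [add_mulVec, hUv, ← hw] at hvwL
    rw [← hw] at hwL
    have hsL : vecMulVec v w + vecMulVec w v ∈ L := by
      have : vecMulVec v w + vecMulVec w v =
          vecMulVec (v + w) (v + w) - vecMulVec v v - vecMulVec w w := by
        simp only [vecMulVec_add, add_vecMulVec]; abel
      rw [this]
      exact L.sub_mem (L.sub_mem hvwL hvL) hwL
    have hli : LinearIndependent ℂ ![v, w] := by
      rw [LinearIndependent.pair_iff' hv]
      exact fun a h => hAc a h.symm
    have hli' := LinearIndependent.pair_iff.mp hli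
    have hw0 : w ≠ 0 := fun h => hAc 0 (by rw [h, zero_smul])
    set n := v ⨯₃ w with hn
    have hn0 : n ≠ 0 := crossProduct_ne_zero_iff_linearIndependent.mpr hli
    have hvn : v ⬝ᵥ n = 0 := dot_self_cross v w
    have hwn : w ⬝ᵥ n = 0 := dot_cross_self v w
    refine ⟨n, hn0, ?_⟩
    let b : Fin 4 → L := ![⟨_, hvL⟩, ⟨_, hwL⟩, ⟨_, hsL⟩, ⟨U, hUL⟩]
    have hcomb : ∀ a : Fin 4 → ℂ, ((∑ i, a i • b i : L) : Mat 3) =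
        a 0 • vecMulVec v v + a 1 • vecMulVec w w + a 2 • (vecMulVec v w + vecMulVec w v) +
          a 3 • U := by
      intro a
      simp [Fin.sum_univ_succ, b, add_assoc]
    have hap : ∀ a : Fin 4 → ℂ, ((∑ i, a i • b i : L) : Mat 3) *ᵥ n = a 3 • (U *ᵥ n) := by
      intro a
      rw [hcomb]
      simp only [add_mulVec, smul_mulVec, vecMulVec_mulVec, hvn, hwn]
      simp
    have hlb : LinearIndependent ℂ b := by
      rw [Fintype.linearIndependent_iff]
      intro a ha
      have h3 : a 3 = 0 := by
        have := hap a
        rw [ha] at this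
        simp only [ZeroMemClass.coe_zero, zero_mulVec] at this
        rcases smul_eq_zero.mp this.symm with h | h
        · exact h
        · exact absurd (hUinj _ h) hn0
      have hc := hcomb a
      rw [ha, h3] at hc
      have hrow : ∀ j, a 0 * v j + a 2 * w j = 0 ∧ a 2 * v j + a 1 * w j = 0 := by
        intro j
        apply hli'
        ext i
        have := congrFun (congrFun hc i) j
        simp [vecMulVec_apply] at this ⊢
        linear_combination -this
      have r1 := hli' (a 0) (a 2) (by ext j; simpa using (hrow j).1)
      have r2 := hli' (a 2) (a 1) (by ext j; simpa using (hrow j).2)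
      intro i; fin_cases i
      · exact r1.1
      · exact r2.2
      · exact r1.2
      · exact h3
    have htop := hlb.span_eq_top_of_card_eq_finrank' (by simp [hdim])
    intro X hX
    have hXs : (⟨X, hX⟩ : L) ∈ Submodule.span ℂ (Set.range b) := by rw [htop]; trivial
    obtain ⟨a, ha⟩ := (Submodule.mem_span_range_iff_exists_fun ℂ).mp hXs
    refine ⟨a 3, ?_⟩
    rw [← hap, ha]

lemma aux_frame1 (n m : Fin 3 → ℂ) (h : n ⬝ᵥ m ≠ 0) :
    ∃ p q : Fin 3 → ℂ, p ⬝ᵥ m = 0 ∧ q ⬝ᵥ m = 0 ∧ (Matrix.of ![n, p, q]).det ≠ 0 := by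
  have hm : m ≠ 0 := by rintro rfl; simp at h
  obtain ⟨i, hi⟩ := Function.ne_iff.mp hm
  simp [dotProduct, Fin.sum_univ_succ] at h
  simp only [det_fin_three]
  fin_cases i <;> simp at hi
  · refine ⟨![-m 1, m 0, 0], ![-m 2, 0, m 0], ?_, ?_, ?_⟩
    · simp [dotProduct, Fin.sum_univ_succ]; ring
    · simp [dotProduct, Fin.sum_univ_succ]; ring
    · simp; grind
  · refine ⟨![m 1, -m 0, 0], ![0, -m 2, m 1], ?_, ?_, ?_⟩
    · simp [dotProduct, Fin.sum_univ_succ]; ring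
    · simp [dotProduct, Fin.sum_univ_succ]; ring
    · simp; grind
  · refine ⟨![m 2, 0, -m 0], ![0, m 2, -m 1], ?_, ?_, ?_⟩
    · simp [dotProduct, Fin.sum_univ_succ]; ring
    · simp [dotProduct, Fin.sum_univ_succ]; ring
    · simp; grind

lemma aux_frame2 (n m : Fin 3 → ℂ) (hn : n ≠ 0) (hm : m ≠ 0) (h : n ⬝ᵥ m = 0) :
    ∃ q p : Fin 3 → ℂ, p ⬝ᵥ m = 0 ∧ (Matrix.of ![q, p, n]).det ≠ 0 := by
  -- choose `p` in the plane orthogonal to `m`, not parallel to `n`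
  obtain ⟨p, hp, hpn⟩ : ∃ p : Fin 3 → ℂ, p ⬝ᵥ m = 0 ∧ p ⨯₃ n ≠ 0 := by
    by_contra hcon
    push Not at hcon
    have c0 := hcon ![0, m 2, -m 1] (by simp [dotProduct, Fin.sum_univ_succ]; ring)
    have c1 := hcon ![m 2, 0, -m 0] (by simp [dotProduct, Fin.sum_univ_succ]; ring)
    have c2 := hcon ![m 1, -m 0, 0] (by simp [dotProduct, Fin.sum_univ_succ]; ring)
    simp [cross_apply] at c0 c1 c2
    obtain ⟨i, hi⟩ := Function.ne_iff.mp hn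
    obtain ⟨j, hj⟩ := Function.ne_iff.mp hm
    simp [dotProduct, Fin.sum_univ_succ] at h
    fin_cases i <;> fin_cases j <;> simp at hi hj <;> grind
  obtain ⟨i, hi⟩ := Function.ne_iff.mp hpn
  refine ⟨Pi.single i 1, p, hp, ?_⟩
  have := triple_product_eq_det (Pi.single i 1) p n
  rw [single_dotProduct, one_mul] at this
  change Matrix.det ![_, _, _] ≠ 0
  rw [← this]
  exact hi

lemma aux_mem1 (X : Mat 3) (hs : X.IsSymm) (h1 : X 0 1 = 0) (h2 : X 0 2 = 0) :
    X ∈ copencil1 := by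
  have : X = X 0 0 • !![(1:ℂ),0,0;0,0,0;0,0,0] + X 1 1 • !![(0:ℂ),0,0;0,1,0;0,0,0] +
      X 2 2 • !![(0:ℂ),0,0;0,0,0;0,0,1] + X 1 2 • !![(0:ℂ),0,0;0,0,1;0,1,0] := by
    have h01 := hs.apply 0 1
    have h02 := hs.apply 0 2
    have h12 := hs.apply 1 2
    ext i j; fin_cases i <;> fin_cases j <;> simp [*]
  rw [this]
  refine add_mem (add_mem (add_mem ?_ ?_) ?_) ?_ <;>
    exact Submodule.smul_mem _ _ (Submodule.subset_span (by simp))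

lemma aux_mem2 (X : Mat 3) (hs : X.IsSymm) (h1 : X 1 2 = 0) (h2 : X 2 2 = 0) :
    X ∈ copencil2 := by
  have : X = X 0 0 • !![(1:ℂ),0,0;0,0,0;0,0,0] + X 0 1 • !![(0:ℂ),1,0;1,0,0;0,0,0] +
      X 1 1 • !![(0:ℂ),0,0;0,1,0;0,0,0] + X 0 2 • !![(0:ℂ),0,1;0,0,0;1,0,0] := by
    have h01 := hs.apply 0 1
    have h02 := hs.apply 0 2
    have h12 := hs.apply 1 2
    ext i j; fin_cases i <;> fin_cases j <;> simp [*]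
  rw [this]
  refine add_mem (add_mem (add_mem ?_ ?_) ?_) ?_ <;>
    exact Submodule.smul_mem _ _ (Submodule.subset_span (by simp))

lemma aux_span4 (a b c d : Mat 3) : Module.finrank ℂ (Submodule.span ℂ {a, b, c, d}) ≤ 4 := by
  classical
  have := finrank_span_finset_le_card (R := ℂ) ({a, b, c, d} : Finset (Mat 3))
  simp only [Finset.coe_insert, Finset.coe_singleton] at this
  exact this.trans Finset.card_le_four

lemma aux_cong_inj (P : Mat 3) (hP : IsUnit P.det) : Function.Injective (congMap P) := by
  intro X Y h
  change P * X * Pᵀ = P * Y * Pᵀ at h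
  have h1 : IsUnit Pᵀ.det := by rwa [det_transpose]
  have e : ∀ X : Mat 3, P⁻¹ * (P * X * Pᵀ) * Pᵀ⁻¹ = X := by
    intro X
    rw [mul_assoc P, ← mul_assoc P⁻¹, Matrix.nonsing_inv_mul _ hP, one_mul, mul_assoc,
      Matrix.mul_nonsing_inv _ h1, mul_one]
  rw [← e X, h, e Y]

lemma aux_cong_eq (L C : Submodule ℂ (Mat 3)) (P : Mat 3) (hP : IsUnit P.det)
    (hdim : Module.finrank ℂ L = 4) (hC : Module.finrank ℂ C ≤ 4)
    (h : ∀ A ∈ L, P * A * Pᵀ ∈ C) : Submodule.map (congMap P) L = C := by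
  apply Submodule.eq_of_le_of_finrank_le
  · rintro _ ⟨A, hA, rfl⟩
    exact h A hA
  · rw [aux_finrank_map _ (aux_cong_inj P hP), hdim]; exact hC

lemma aux_entry (P A : Mat 3) (i j : Fin 3) : (P * A * Pᵀ) i j = P i ⬝ᵥ A *ᵥ P j := by
  simp only [mul_apply, dotProduct, mulVec, transpose_apply, Fin.sum_univ_three]
  ring

lemma aux_excl (L : Submodule ℂ (Mat 3)) (P Q : Mat 3) (hP : IsUnit P.det) (hQ : IsUnit Q.det)
    (h1 : Submodule.map (congMap P) L = copencil1)
    (h2 : Submodule.map (congMap Q) L = copencil2) : False := by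
  have h22 : ∀ X ∈ copencil2, X 2 2 = 0 := by
    intro X hX
    have hle : copencil2 ≤ LinearMap.ker (Matrix.entryLinearMap ℂ ℂ (2 : Fin 3) (2 : Fin 3)) := by
      apply Submodule.span_le.mpr
      rintro Y (rfl | rfl | rfl | rfl) <;> simp
    simpa using hle hX
  set S := Q * P⁻¹ with hS
  have hSd : IsUnit S.det := by
    rw [hS, det_mul, Matrix.det_nonsing_inv]
    exact hQ.mul (by simpa using hP)
  have hmap : ∀ X ∈ copencil1, S * X * Sᵀ ∈ copencil2 := by
    intro X hX
    rw [← h1] at hX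
    obtain ⟨A, hA, rfl⟩ := hX
    rw [← h2]
    refine ⟨A, hA, ?_⟩
    change Q * A * Qᵀ = S * (P * A * Pᵀ) * Sᵀ
    have hQS : Q = S * P := by
      rw [hS, mul_assoc, Matrix.nonsing_inv_mul _ hP, mul_one]
    rw [hQS, transpose_mul]
    simp only [mul_assoc]
  have z0 := h22 _ (hmap _ (Submodule.subset_span (by simp : !![(1:ℂ),0,0;0,0,0;0,0,0] ∈ _)))
  have z1 := h22 _ (hmap _ (Submodule.subset_span (by simp : !![(0:ℂ),0,0;0,1,0;0,0,0] ∈ _)))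
  have z2 := h22 _ (hmap _ (Submodule.subset_span (by simp : !![(0:ℂ),0,0;0,0,0;0,0,1] ∈ _)))
  simp [mul_apply, Fin.sum_univ_succ] at z0 z1 z2
  apply hSd.ne_zero
  rw [det_fin_three, z0, z1, z2]
  ring

/-- Every Jordan copencil in `S³` — a regular `4`-dimensional subspace of symmetric
`3 × 3` matrices whose reciprocal variety is a linear space — is congruent to
exactly one of `L₁ = [[x,0,0],[0,y,w],[0,w,z]]` and `L₂ = [[x,y,w],[y,z,0],[w,0,0]]`. -/
theorem stmt13 (L : Submodule ℂ (Mat 3))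
    (hsym : ∀ X ∈ L, Matrix.IsSymm X)
    (hreg : ∃ X ∈ L, IsUnit (Matrix.det X))
    (hdim : Module.finrank ℂ L = 4)
    (hlin : ∃ M : Submodule ℂ (Mat 3), recipVar L = (M : Set (Mat 3))) :
    Xor' (∃ P : Mat 3, IsUnit P.det ∧ Submodule.map (congMap P) L = copencil1)
         (∃ P : Mat 3, IsUnit P.det ∧ Submodule.map (congMap P) L = copencil2) := by
  obtain ⟨U, hUL, hU⟩ := hreg
  obtain ⟨M, hM⟩ := hlin
  obtain ⟨n, hn, heig⟩ := aux_eigen L hsym hdim U hUL hU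
    (fun A hA => aux_jordan L M hM U hUL hU A hA)
  have hm : U *ᵥ n ≠ 0 := by
    intro h0
    exact hU.ne_zero (Matrix.exists_mulVec_eq_zero_iff.mp ⟨n, hn, h0⟩)
  have hsymP : ∀ (P A : Mat 3), A ∈ L → (P * A * Pᵀ).IsSymm := by
    intro P A hA
    rw [Matrix.IsSymm, transpose_mul, transpose_mul, transpose_transpose, (hsym A hA).eq,
      mul_assoc]
  have hor : (∃ P : Mat 3, IsUnit P.det ∧ Submodule.map (congMap P) L = copencil1) ∨
      (∃ P : Mat 3, IsUnit P.det ∧ Submodule.map (congMap P) L = copencil2) := by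
    by_cases hnm : n ⬝ᵥ (U *ᵥ n) = 0
    · right
      obtain ⟨q, p, hp, hdet⟩ := aux_frame2 n _ hn hm hnm
      refine ⟨_, isUnit_iff_ne_zero.mpr hdet,
        aux_cong_eq L _ _ (isUnit_iff_ne_zero.mpr hdet) hdim (aux_span4 _ _ _ _) ?_⟩
      intro A hA
      obtain ⟨c, hc⟩ := heig A hA
      apply aux_mem2 _ (hsymP _ A hA)
      · rw [aux_entry]
        change p ⬝ᵥ A *ᵥ n = 0
        rw [hc, dotProduct_smul, hp, smul_zero]
      · rw [aux_entry]
        change n ⬝ᵥ A *ᵥ n = 0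
        rw [hc, dotProduct_smul, hnm, smul_zero]
    · left
      obtain ⟨p, q, hp, hq, hdet⟩ := aux_frame1 n _ hnm
      refine ⟨_, isUnit_iff_ne_zero.mpr hdet,
        aux_cong_eq L _ _ (isUnit_iff_ne_zero.mpr hdet) hdim (aux_span4 _ _ _ _) ?_⟩
      intro A hA
      obtain ⟨c, hc⟩ := heig A hA
      apply aux_mem1 _ (hsymP _ A hA)
      · rw [← (hsymP _ A hA).apply, aux_entry]
        change p ⬝ᵥ A *ᵥ n = 0
        rw [hc, dotProduct_smul, hp, smul_zero]
      · rw [← (hsymP _ A hA).apply, aux_entry]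
        change q ⬝ᵥ A *ᵥ n = 0
        rw [hc, dotProduct_smul, hq, smul_zero]
  rcases hor with h | h
  · refine Or.inl ⟨h, ?_⟩
    rintro ⟨Q, hQ, hQ2⟩
    obtain ⟨P, hP, hP1⟩ := h
    exact aux_excl L P Q hP hQ hP1 hQ2
  · refine Or.inr ⟨h, ?_⟩
    rintro ⟨P, hP, hP1⟩
    obtain ⟨Q, hQ, hQ2⟩ := h
    exact aux_excl L P Q hP hQ hP1 hQ2
end
end
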